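/- (Homogeneous radial Strichartz estimate for the half-wave propagators.) Let n ≥ 2, let σ ∈ ℝ, and let f be a spherically symmetric Schwartz function on ℝⁿ with values in ℂ. For either choice of sign ±, define v_±(t,x) = ∫_{ℝⁿ} e^{2πi x·ξ} |ξ|^{σ} e^{±2πi t |ξ|} f̂(ξ) dξ for t > 0, x ∈ ℝⁿ. Let (q, r) be a radially wave-admissible pair and set s = n/2 − n/r − 1/q + σ. Then there is a constant C = C(n, q, r, σ), independent of f, such that ‖ t ↦ ‖v_±(t,·)‖_{L^r(ℝⁿ)} ‖_{L^q((0,∞))} ≤ C ‖ ξ ↦ |ξ|^s f̂(ξ) ‖_{L²(ℝⁿ)}, whenever the right-hand side is finite and the integral defining v_± converges absolutely for each (t,x). -/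

import Mathlib

open MeasureTheory ENNReal Real
open scoped FourierTransform RealInnerProductSpace

/-- The mixed norm `‖G‖_{L^q((0,∞))}` of an `ℝ≥0∞`-valued function `G` on `ℝ`,
with the usual modification `essSup` when `q = ∞`. -/
noncomputable def timeNorm (q : ℝ≥0∞) (G : ℝ → ℝ≥0∞) : ℝ≥0∞ :=
  if q = ∞ then essSup G (volume.restrict (Set.Ioi (0 : ℝ)))
  else (∫⁻ t in Set.Ioi (0 : ℝ), G t ^ q.toReal) ^ (1 / q.toReal)

/-- A pair `(q, r)` with `2 ≤ q, r ≤ ∞` is radially wave-admissible in dimension `n` if either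
`(q, r) ≠ (∞, ∞)` and `1/q + (n-1)/r < (n-1)/2`, or `(q, r) = (∞, 2)`. -/
def RadWaveAdmissible (n : ℕ) (q r : ℝ≥0∞) : Prop :=
  2 ≤ q ∧ 2 ≤ r ∧
    ((¬(q = ∞ ∧ r = ∞) ∧ 1 / q + ((n : ℝ≥0∞) - 1) / r < ((n : ℝ≥0∞) - 1) / 2)
      ∨ (q = ∞ ∧ r = 2))

namespace RadialStrichartz

section Plancherel

variable {E : Type*} [NormedAddCommGroup E] [InnerProductSpace ℝ E] [FiniteDimensional ℝ E]
  [MeasurableSpace E] [BorelSpace E]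

/-- On `L¹ ∩ L²` the Fourier integral is the `L²` Fourier transform. -/
theorem fourier_toLp_ae_eq {u : E → ℂ} (hu : Integrable u) (hu2 : MemLp u 2) :
    (𝓕 (hu2.toLp u) : Lp (α := E) ℂ 2) =ᵐ[volume] 𝓕 u := by
  have hcont : Continuous (𝓕 u) := VectorFourier.fourierIntegral_continuous
    Real.continuous_fourierChar (innerSL ℝ).continuous₂ hu
  refine ae_eq_of_integral_contDiff_smul_eq
    ((Lp.memLp _).locallyIntegrable (by norm_num)) hcont.locallyIntegrable ?_
  intro g hg hgc
  have hgC : ContDiff ℝ (⊤ : ℕ∞) (fun x => (g x : ℂ)) := Complex.ofRealCLM.contDiff.comp hg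
  have hgCc : HasCompactSupport (fun x => (g x : ℂ)) := hgc.comp_left Complex.ofReal_zero
  let ψ : SchwartzMap E ℂ := hgCc.toSchwartzMap hgC
  have h1 := congrArg (fun T => T ψ) (Lp.fourier_toTemperedDistribution_eq (hu2.toLp u))
  simp only [TemperedDistribution.fourier_apply, Lp.toTemperedDistribution_apply] at h1
  have h2 : ∫ x, (𝓕 ψ) x • (hu2.toLp u) x = ∫ x, (𝓕 ψ) x • u x :=
    integral_congr_ae (by filter_upwards [hu2.coeFn_toLp] with x hx; rw [hx])
  have h3 := VectorFourier.integral_fourierIntegral_smul_eq_flip (μ := volume) (ν := volume)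
    (L := innerₗ E) Real.continuous_fourierChar (by exact (innerSL ℝ).continuous₂)
    (ψ.integrable (μ := volume)) hu
  have h4 : (∫ x, ψ x • (𝓕 (hu2.toLp u) : Lp (α := E) ℂ 2 volume) x) = ∫ x, ψ x • 𝓕 u x := by
    rw [← h1, h2, SchwartzMap.fourier_coe]
    refine h3.trans ?_
    simp only [flip_innerₗ]
    rfl
  simpa [ψ] using h4

/-- The Fourier integral does not increase the `L²` norm. -/
theorem eLpNorm_fourier_le {u : E → ℂ} (hu : Integrable u) :
    eLpNorm (𝓕 u) 2 volume ≤ eLpNorm u 2 volume := by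
  by_cases h : eLpNorm u 2 volume < ⊤
  · have hu2 : MemLp u 2 := ⟨hu.aestronglyMeasurable, h⟩
    rw [← eLpNorm_congr_ae (fourier_toLp_ae_eq hu hu2)]
    have := Lp.norm_fourier_eq (hu2.toLp u)
    rw [Lp.norm_def, Lp.norm_def, ENNReal.toReal_eq_toReal_iff' (Lp.eLpNorm_ne_top _)
      (Lp.eLpNorm_ne_top _)] at this
    rw [this, eLpNorm_congr_ae hu2.coeFn_toLp]
  · rw [not_lt_top_iff.1 h]; exact le_top

end Plancherel

theorem lintegral_enorm_sq_eq {α F : Type*} [MeasurableSpace α] {μ : Measure α}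
    [NormedAddCommGroup F] (u : α → F) :
    ∫⁻ x, ‖u x‖ₑ ^ 2 ∂μ = eLpNorm u 2 μ ^ 2 := by
  have := eLpNorm_nnreal_pow_eq_lintegral (f := u) (μ := μ) (p := 2) (by norm_num)
  simpa using this.symm

/-- The phase `e^{2π i ε t ρ}` of the half-wave propagator. -/
noncomputable def phase (ε t ρ : ℝ) : ℂ := Complex.exp (ε * (2 * Real.pi * t * ρ) * Complex.I)

theorem norm_phase (ε t ρ : ℝ) : ‖phase ε t ρ‖ = 1 := by
  rw [phase]
  have := Complex.norm_exp_ofReal_mul_I (ε * (2 * Real.pi * t * ρ))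
  push_cast at this
  exact this

theorem continuous_phase (ε : ℝ) : Continuous fun p : ℝ × ℝ => phase ε p.1 p.2 := by
  unfold phase; fun_prop

/-- Plancherel in the time variable. -/
theorem lintegral_phase_sq_le {ε : ℝ} (hε : ε = 1 ∨ ε = -1) {u : ℝ → ℂ} (hu : Integrable u) :
    ∫⁻ t, ‖∫ ρ, phase ε t ρ * u ρ‖ₑ ^ 2 ≤ ∫⁻ ρ, ‖u ρ‖ₑ ^ 2 := by
  have key : ∀ t, ∫ ρ, phase ε t ρ * u ρ = 𝓕 u (-ε * t) := by
    intro t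
    rw [Real.fourier_eq']
    refine integral_congr_ae (Filter.Eventually.of_forall fun ρ => ?_)
    simp only [phase, smul_eq_mul]
    congr 2
    simp
    ring
  have hP := eLpNorm_fourier_le hu
  have h2 : ∫⁻ t, ‖𝓕 u t‖ₑ ^ 2 ≤ ∫⁻ ρ, ‖u ρ‖ₑ ^ 2 := by
    rw [lintegral_enorm_sq_eq, lintegral_enorm_sq_eq]; gcongr
  simp_rw [key]
  rcases hε with rfl | rfl
  · rw [← lintegral_neg_eq_self (fun t => ‖𝓕 u t‖ₑ ^ 2) (μ := volume)] at h2
    simpa using h2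
  · simpa using h2

section Energy

/-- Solutions of `J'' + (2m/y) J' + a² J = 0` decay like `y ^ (-m)`. -/
theorem exists_decay_of_ode {J J1 J2 : ℝ → ℝ} {m a : ℝ} (hm : 0 ≤ m) (ha : 1 ≤ a)
    (hJ : ∀ y, HasDerivAt J (J1 y) y) (hJ1 : ∀ y, HasDerivAt J1 (J2 y) y)
    (hode : ∀ y, 0 < y → J2 y = -(2 * m / y) * J1 y - a ^ 2 * J y) :
    ∃ C : ℝ, 0 ≤ C ∧ ∀ y, 1 ≤ y → |J y| ≤ C * y ^ (-m) ∧ |J1 y| ≤ C * y ^ (-m) := by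
  set c : ℝ := |m ^ 2 - m| with hc
  set P : ℝ → ℝ := fun y => J1 y + m * y⁻¹ * J y with hP
  set En : ℝ → ℝ := fun y => y ^ (2 * m) * (P y ^ 2 + a ^ 2 * J y ^ 2) with hEn
  have hPd : ∀ y, 0 < y → HasDerivAt P
      (J2 y + (m * (-(y ^ 2)⁻¹) * J y + m * y⁻¹ * J1 y)) y := fun y hy =>
    (hJ1 y).add (((hasDerivAt_inv hy.ne').const_mul m).mul (hJ y))
  have hEd : ∀ y, 0 < y → HasDerivAt En
      (y ^ (2 * m) * (2 * (m ^ 2 - m) / y ^ 2 * P y * J y)) y := by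
    intro y hy
    have h1 : HasDerivAt (fun y : ℝ => y ^ (2 * m)) (2 * m * y ^ (2 * m - 1)) y :=
      Real.hasDerivAt_rpow_const (Or.inl hy.ne')
    have h2 := h1.mul (((hPd y hy).pow 2).add (((hJ y).pow 2).const_mul (a ^ 2)))
    convert! h2 using 1
    rw [Real.rpow_sub hy, Real.rpow_one, hode y hy]
    have hy' : y ≠ 0 := hy.ne'
    simp only [hP, Pi.add_apply, Pi.pow_apply, Nat.cast_ofNat, Nat.add_one_sub_one, pow_one]
    field_simp
    ring
  have hGd : ∀ y, 0 < y → HasDerivAt (fun y => En y * Real.exp (c * y⁻¹))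
      ((y ^ (2 * m) * (2 * (m ^ 2 - m) / y ^ 2 * P y * J y)) * Real.exp (c * y⁻¹) +
        En y * (Real.exp (c * y⁻¹) * (c * (-(y ^ 2)⁻¹)))) y := fun y hy =>
    (hEd y hy).mul (((hasDerivAt_inv hy.ne').const_mul c).exp)
  have hanti : AntitoneOn (fun y => En y * Real.exp (c * y⁻¹)) (Set.Ici 1) := by
    refine antitoneOn_of_deriv_nonpos (convex_Ici 1) ?_ ?_ ?_
    · intro y hy
      exact (hGd y (lt_of_lt_of_le one_pos hy)).continuousAt.continuousWithinAt
    · intro y hy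
      rw [interior_Ici] at hy
      exact (hGd y (one_pos.trans hy)).differentiableAt.differentiableWithinAt
    · intro y hy
      rw [interior_Ici] at hy
      have hy0 : 0 < y := one_pos.trans hy
      rw [(hGd y hy0).deriv]
      have hb : 2 * (m ^ 2 - m) * P y * J y ≤ c * (P y ^ 2 + a ^ 2 * J y ^ 2) := by
        have h1 : 2 * (m ^ 2 - m) * P y * J y ≤ c * (2 * |P y| * |J y|) := by
          calc 2 * (m ^ 2 - m) * P y * J y ≤ |2 * (m ^ 2 - m) * P y * J y| := le_abs_self _
            _ = c * (2 * |P y| * |J y|) := by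
              rw [abs_mul, abs_mul, abs_mul, abs_two]; ring
        have h2 : 2 * |P y| * |J y| ≤ P y ^ 2 + a ^ 2 * J y ^ 2 := by
          have h3 : |J y| ^ 2 ≤ a ^ 2 * J y ^ 2 := by
            rw [sq_abs]; exact le_mul_of_one_le_left (sq_nonneg _) (one_le_pow₀ ha)
          nlinarith [sq_nonneg (|P y| - |J y|), sq_abs (P y)]
        exact h1.trans (mul_le_mul_of_nonneg_left h2 (abs_nonneg _))
      have hpos : 0 ≤ y ^ (2 * m) * (y ^ 2)⁻¹ * Real.exp (c * y⁻¹) := by positivity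
      have := mul_le_mul_of_nonneg_left hb hpos
      simp only [hEn]
      have e1 : y ^ (2 * m) * (2 * (m ^ 2 - m) / y ^ 2 * P y * J y) * Real.exp (c * y⁻¹)
        = y ^ (2 * m) * (y ^ 2)⁻¹ * Real.exp (c * y⁻¹) * (2 * (m ^ 2 - m) * P y * J y) := by
        field_simp
      rw [e1]
      linarith
  set B : ℝ := Real.sqrt (En 1 * Real.exp c) with hB
  have hEn_nonneg : ∀ y, 0 < y → 0 ≤ En y := fun y hy => by simp only [hEn]; positivity
  have hEb : ∀ y, 1 ≤ y → En y ≤ B ^ 2 := by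
    intro y hy
    have h := hanti (Set.mem_Ici.2 le_rfl) (Set.mem_Ici.2 hy) hy
    simp only [inv_one, mul_one] at h
    rw [hB, Real.sq_sqrt (mul_nonneg (hEn_nonneg 1 one_pos) (Real.exp_pos _).le)]
    refine le_trans ?_ h
    have : 1 ≤ Real.exp (c * y⁻¹) := Real.one_le_exp (by positivity)
    nlinarith [hEn_nonneg y (by linarith)]
  have hB0 : 0 ≤ B := Real.sqrt_nonneg _
  refine ⟨(1 + m) * B, by positivity, fun y hy => ?_⟩
  have hy0 : 0 < y := by linarith
  have hE := hEb y hy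
  have hsq : y ^ (2 * m) = (y ^ m) ^ 2 := by
    rw [← Real.rpow_natCast, ← Real.rpow_mul hy0.le]; congr 1; push_cast; ring
  have hym : 0 < y ^ m := Real.rpow_pos_of_pos hy0 m
  simp only [hEn, hsq] at hE
  have hPb : y ^ m * |P y| ≤ B := by
    refine abs_le_of_sq_le_sq' ?_ hB0 |>.2
    rw [mul_pow, sq_abs]
    nlinarith [sq_nonneg (y ^ m * (a * J y))]
  have hJb : y ^ m * |J y| ≤ B := by
    refine abs_le_of_sq_le_sq' ?_ hB0 |>.2
    rw [mul_pow, sq_abs]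
    have : (y ^ m) ^ 2 * J y ^ 2 ≤ (y ^ m) ^ 2 * (a ^ 2 * J y ^ 2) := by
      refine mul_le_mul_of_nonneg_left ?_ (by positivity)
      exact le_mul_of_one_le_left (sq_nonneg _) (one_le_pow₀ ha)
    nlinarith [sq_nonneg (y ^ m * P y)]
  rw [Real.rpow_neg hy0.le, ← div_eq_mul_inv, le_div_iff₀ hym, le_div_iff₀ hym]
  refine ⟨by nlinarith, ?_⟩
  have hyi : y⁻¹ ≤ 1 := inv_le_one_of_one_le₀ hy
  have h1 : |J1 y| ≤ |P y| + m * |J y| := by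
    have : J1 y = P y - m * y⁻¹ * J y := by simp [hP]
    rw [this]
    refine (abs_sub _ _).trans ?_
    rw [abs_mul, abs_mul, abs_of_nonneg hm, abs_of_nonneg (inv_nonneg.2 hy0.le)]
    have : m * y⁻¹ * |J y| ≤ m * 1 * |J y| := by gcongr
    linarith
  calc |J1 y| * y ^ m ≤ (|P y| + m * |J y|) * y ^ m := by gcongr
    _ = y ^ m * |P y| + m * (y ^ m * |J y|) := by ring
    _ ≤ B + m * B := by gcongr
    _ = (1 + m) * B := by ring

end Energy

section Sphere

variable {n : ℕ}

/-- The action of a linear isometry on the unit sphere. -/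
noncomputable def sphereMap (L : EuclideanSpace ℝ (Fin n) ≃ₗᵢ[ℝ] EuclideanSpace ℝ (Fin n))
    (ω : Metric.sphere (0 : EuclideanSpace ℝ (Fin n)) 1) :
    Metric.sphere (0 : EuclideanSpace ℝ (Fin n)) 1 :=
  ⟨L ω, by simp⟩

theorem measurePreserving_sphereMap
    (L : EuclideanSpace ℝ (Fin n) ≃ₗᵢ[ℝ] EuclideanSpace ℝ (Fin n)) :
    MeasurePreserving (sphereMap L) (volume.toSphere) (volume.toSphere) := by
  have hmeas : Measurable (sphereMap L) :=
    (Continuous.subtype_mk (L.continuous.comp continuous_subtype_val) _).measurable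
  refine ⟨hmeas, Measure.ext fun s hs => ?_⟩
  rw [Measure.map_apply hmeas hs, Measure.toSphere_apply' _ hs,
    Measure.toSphere_apply' _ (hmeas hs)]
  congr 1
  refine Eq.trans ?_
    (L.measurePreserving.measure_preimage_emb L.toHomeomorph.measurableEmbedding _)
  congr 1
  ext x
  simp only [Set.mem_smul, Set.mem_image, Set.mem_preimage]
  constructor
  · rintro ⟨a, ha, _, ⟨ω, hω, rfl⟩, rfl⟩
    exact ⟨a, ha, L ω, ⟨sphereMap L ω, hω, rfl⟩, by simp⟩
  · rintro ⟨a, ha, _, ⟨ω, hω, rfl⟩, h⟩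
    refine ⟨a, ha, L.symm ω, ⟨sphereMap L.symm ω, ?_, rfl⟩, ?_⟩
    · have : sphereMap L (sphereMap L.symm ω) = ω := Subtype.ext (by simp [sphereMap])
      rwa [this]
    · apply L.injective
      rw [map_smul]
      simpa using h

theorem integral_sphereMap (L : EuclideanSpace ℝ (Fin n) ≃ₗᵢ[ℝ] EuclideanSpace ℝ (Fin n))
    (F : Metric.sphere (0 : EuclideanSpace ℝ (Fin n)) 1 → ℝ) (hF : Continuous F) :
    ∫ ω, F (sphereMap L ω) ∂volume.toSphere = ∫ ω, F ω ∂volume.toSphere := by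
  have h := measurePreserving_sphereMap L
  rw [← integral_map h.aemeasurable (by rw [h.map_eq]; exact hF.aestronglyMeasurable), h.map_eq]


/-- Radial integrals over the sphere: the cosine transform of surface measure. -/
theorem sphere_cos_congr {x y : EuclideanSpace ℝ (Fin n)} (h : ‖x‖ = ‖y‖) :
    ∫ ω : Metric.sphere (0 : EuclideanSpace ℝ (Fin n)) 1,
        Real.cos (2 * π * ⟪x, (ω : EuclideanSpace ℝ (Fin n))⟫) ∂volume.toSphere =
      ∫ ω : Metric.sphere (0 : EuclideanSpace ℝ (Fin n)) 1,
        Real.cos (2 * π * ⟪y, (ω : EuclideanSpace ℝ (Fin n))⟫) ∂volume.toSphere := by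
  set L := (ℝ ∙ (x - y))ᗮ.reflection
  have hL : L x = y := Submodule.reflection_sub h
  rw [← integral_sphereMap L _ (by fun_prop)]
  refine integral_congr_ae (Filter.Eventually.of_forall fun ω => ?_)
  simp only [sphereMap]
  have hLL : L (L (ω : EuclideanSpace ℝ (Fin n))) = ω := Submodule.reflection_reflection _ _
  rw [← hL, ← L.inner_map_map x, hLL]

theorem sphere_sin_eq_zero (x : EuclideanSpace ℝ (Fin n)) :
    ∫ ω : Metric.sphere (0 : EuclideanSpace ℝ (Fin n)) 1,
        Real.sin (2 * π * ⟪x, (ω : EuclideanSpace ℝ (Fin n))⟫) ∂volume.toSphere = 0 := by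
  have h := integral_sphereMap (n := n) (LinearIsometryEquiv.neg ℝ)
    (fun ω => Real.sin (2 * π * ⟪x, (ω : EuclideanSpace ℝ (Fin n))⟫)) (by fun_prop)
  simp only [sphereMap, LinearIsometryEquiv.coe_neg, inner_neg_right, mul_neg, Real.sin_neg,
    integral_neg] at h
  linarith

theorem integrable_sphere {F : Type*} [NormedAddCommGroup F]
    {a : Metric.sphere (0 : EuclideanSpace ℝ (Fin n)) 1 → F} (ha : Continuous a) :
    Integrable a (volume.toSphere) :=
  ha.integrable_of_hasCompactSupport (HasCompactSupport.of_compactSpace a)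

theorem hasDerivAt_sphere {F F' : ℝ → Metric.sphere (0 : EuclideanSpace ℝ (Fin n)) 1 → ℝ}
    {B : ℝ} (hF : ∀ y, Continuous (F y)) (hF' : ∀ y, Continuous (F' y))
    (hB : ∀ y ω, |F' y ω| ≤ B) (hd : ∀ y ω, HasDerivAt (fun y => F y ω) (F' y ω) y) (y : ℝ) :
    HasDerivAt (fun y => ∫ ω, F y ω ∂volume.toSphere) (∫ ω, F' y ω ∂volume.toSphere) y :=
  (hasDerivAt_integral_of_dominated_loc_of_deriv_le (bound := fun _ => B) Filter.univ_mem
    (Filter.Eventually.of_forall fun y => (hF y).aestronglyMeasurable)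
    (integrable_sphere (hF y)) (hF' y).aestronglyMeasurable
    (Filter.Eventually.of_forall fun ω y _ => hB y ω) (integrable_const B)
    (Filter.Eventually.of_forall fun ω y _ => hd y ω)).2

theorem abs_coord_le_one (ω : Metric.sphere (0 : EuclideanSpace ℝ (Fin n)) 1) (i : Fin n) :
    |(ω : EuclideanSpace ℝ (Fin n)) i| ≤ 1 := by
  have h := PiLp.norm_apply_le (ω : EuclideanSpace ℝ (Fin n)) i
  simpa using h

/-- The cosine transform of surface measure as a function of the radius. -/
noncomputable def sphKer (i : Fin n) (y : ℝ) : ℝ :=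
  ∫ ω : Metric.sphere (0 : EuclideanSpace ℝ (Fin n)) 1,
    Real.cos (2 * π * y * (ω : EuclideanSpace ℝ (Fin n)) i) ∂volume.toSphere

/-- The derivative of `sphKer`. -/
noncomputable def sphKerDeriv (i : Fin n) (y : ℝ) : ℝ :=
  ∫ ω : Metric.sphere (0 : EuclideanSpace ℝ (Fin n)) 1,
    -(2 * π * (ω : EuclideanSpace ℝ (Fin n)) i *
      Real.sin (2 * π * y * (ω : EuclideanSpace ℝ (Fin n)) i)) ∂volume.toSphere

/-- The second derivative of `sphKer`. -/
noncomputable def sphKerDeriv2 (i : Fin n) (y : ℝ) : ℝ :=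
  ∫ ω : Metric.sphere (0 : EuclideanSpace ℝ (Fin n)) 1,
    -((2 * π * (ω : EuclideanSpace ℝ (Fin n)) i) ^ 2 *
      Real.cos (2 * π * y * (ω : EuclideanSpace ℝ (Fin n)) i)) ∂volume.toSphere

theorem mul_le_of_le_one_right_of_le {a b c : ℝ} (hab : a ≤ b) (ha : 0 ≤ a) (hc : c ≤ 1) :
    a * c ≤ b :=
  (mul_le_of_le_one_right ha hc).trans hab

theorem abs_two_pi_coord_le (ω : Metric.sphere (0 : EuclideanSpace ℝ (Fin n)) 1) (i : Fin n) :
    |2 * π * (ω : EuclideanSpace ℝ (Fin n)) i| ≤ 2 * π := by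
  rw [abs_mul, abs_of_pos Real.two_pi_pos]
  exact mul_le_of_le_one_right Real.two_pi_pos.le (abs_coord_le_one ω i)

theorem hasDerivAt_sphKer (i : Fin n) (y : ℝ) :
    HasDerivAt (sphKer i) (sphKerDeriv i y) y := by
  unfold sphKer sphKerDeriv
  apply hasDerivAt_sphere
    (F := fun (y : ℝ) (ω : Metric.sphere (0 : EuclideanSpace ℝ (Fin n)) 1) =>
      Real.cos (2 * π * y * (ω : EuclideanSpace ℝ (Fin n)) i))
    (F' := fun (y : ℝ) (ω : Metric.sphere (0 : EuclideanSpace ℝ (Fin n)) 1) =>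
      -(2 * π * (ω : EuclideanSpace ℝ (Fin n)) i *
        Real.sin (2 * π * y * (ω : EuclideanSpace ℝ (Fin n)) i))) (B := 2 * π)
  · intro y; fun_prop
  · intro y; fun_prop
  · intro y ω
    rw [abs_neg, abs_mul]
    exact mul_le_of_le_one_right_of_le (abs_two_pi_coord_le ω i) (abs_nonneg _)
      (Real.abs_sin_le_one _)
  · intro y ω
    have h := ((hasDerivAt_id y).const_mul (2 * π)).mul_const
      ((ω : EuclideanSpace ℝ (Fin n)) i)
    convert! h.cos using 1
    simp; ring

theorem hasDerivAt_sphKerDeriv (i : Fin n) (y : ℝ) :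
    HasDerivAt (sphKerDeriv i) (sphKerDeriv2 i y) y := by
  unfold sphKerDeriv sphKerDeriv2
  apply hasDerivAt_sphere
    (F := fun (y : ℝ) (ω : Metric.sphere (0 : EuclideanSpace ℝ (Fin n)) 1) =>
      -(2 * π * (ω : EuclideanSpace ℝ (Fin n)) i *
        Real.sin (2 * π * y * (ω : EuclideanSpace ℝ (Fin n)) i)))
    (F' := fun (y : ℝ) (ω : Metric.sphere (0 : EuclideanSpace ℝ (Fin n)) 1) =>
      -((2 * π * (ω : EuclideanSpace ℝ (Fin n)) i) ^ 2 *
        Real.cos (2 * π * y * (ω : EuclideanSpace ℝ (Fin n)) i))) (B := (2 * π) ^ 2)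
  · intro y; fun_prop
  · intro y; fun_prop
  · intro y ω
    rw [abs_neg, abs_mul, abs_pow]
    exact mul_le_of_le_one_right_of_le
      (pow_le_pow_left₀ (abs_nonneg _) (abs_two_pi_coord_le ω i) 2)
      (by positivity) (Real.abs_cos_le_one _)
  · intro y ω
    have h := ((hasDerivAt_id y).const_mul (2 * π)).mul_const
      ((ω : EuclideanSpace ℝ (Fin n)) i)
    convert! (h.sin.const_mul (2 * π * (ω : EuclideanSpace ℝ (Fin n)) i)).neg using 1
    simp; ring

/-- Rotating in the plane of two coordinate axes. -/
theorem sphere_rotation_identity {i k : Fin n} (hik : i ≠ k) (y : ℝ) :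
    ∫ ω : Metric.sphere (0 : EuclideanSpace ℝ (Fin n)) 1,
        (-((2 * π * y * (ω : EuclideanSpace ℝ (Fin n)) k) ^ 2 *
          Real.cos (2 * π * y * (ω : EuclideanSpace ℝ (Fin n)) i)) +
        2 * π * y * (ω : EuclideanSpace ℝ (Fin n)) i *
          Real.sin (2 * π * y * (ω : EuclideanSpace ℝ (Fin n)) i)) ∂volume.toSphere = 0 := by
  set A : ℝ → Metric.sphere (0 : EuclideanSpace ℝ (Fin n)) 1 → ℝ := fun θ ω =>
    2 * π * y * (Real.cos θ * (ω : EuclideanSpace ℝ (Fin n)) i +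
      Real.sin θ * (ω : EuclideanSpace ℝ (Fin n)) k) with hA
  set A' : ℝ → Metric.sphere (0 : EuclideanSpace ℝ (Fin n)) 1 → ℝ := fun θ ω =>
    2 * π * y * (-Real.sin θ * (ω : EuclideanSpace ℝ (Fin n)) i +
      Real.cos θ * (ω : EuclideanSpace ℝ (Fin n)) k) with hA'
  have hAc : ∀ θ, Continuous (A θ) := fun θ => by simp only [hA]; fun_prop
  have hA'c : ∀ θ, Continuous (A' θ) := fun θ => by simp only [hA']; fun_prop
  have hAd : ∀ θ ω, HasDerivAt (fun θ => A θ ω) (A' θ ω) θ := fun θ ω =>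
    (((Real.hasDerivAt_cos θ).mul_const _).add ((Real.hasDerivAt_sin θ).mul_const _)).const_mul _
  have hA'd : ∀ θ ω, HasDerivAt (fun θ => A' θ ω) (-A θ ω) θ := fun θ ω => by
    convert! (((Real.hasDerivAt_sin θ).neg.mul_const _).add
      ((Real.hasDerivAt_cos θ).mul_const _)).const_mul (2 * π * y) using 1
    simp only [hA]; ring
  set M : ℝ := 2 * (2 * π * |y|) with hM
  have hbd : ∀ a b p q : ℝ, |a| ≤ 1 → |b| ≤ 1 → |p| ≤ 1 → |q| ≤ 1 →
      |2 * π * y * (a * p + b * q)| ≤ M := by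
    intro a b p q ha hb hp hq
    have h1 := mul_le_one₀ ha (abs_nonneg _) hp
    have h2 := mul_le_one₀ hb (abs_nonneg _) hq
    have h3 : |a * p + b * q| ≤ 2 := by
      refine (abs_add_le _ _).trans ?_
      rw [abs_mul, abs_mul]
      linarith
    rw [abs_mul, abs_mul, abs_of_pos Real.two_pi_pos, hM]
    have h4 : 0 ≤ 2 * π * |y| := by positivity
    nlinarith
  have hAb : ∀ θ ω, |A θ ω| ≤ M := fun θ ω => hbd _ _ _ _ (Real.abs_cos_le_one θ)
    (Real.abs_sin_le_one θ) (abs_coord_le_one ω i) (abs_coord_le_one ω k)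
  have hA'b : ∀ θ ω, |A' θ ω| ≤ M := fun θ ω => hbd _ _ _ _
    (by rw [abs_neg]; exact Real.abs_sin_le_one θ)
    (Real.abs_cos_le_one θ) (abs_coord_le_one ω i) (abs_coord_le_one ω k)
  have hM0 : 0 ≤ M := by positivity
  have d1 : ∀ θ, HasDerivAt (fun θ => ∫ ω, Real.cos (A θ ω) ∂volume.toSphere)
      (∫ ω, -Real.sin (A θ ω) * A' θ ω ∂volume.toSphere) θ := by
    refine hasDerivAt_sphere (B := M) (fun θ => Real.continuous_cos.comp (hAc θ))
      (fun θ => (Real.continuous_sin.comp (hAc θ)).neg.mul (hA'c θ)) (fun θ ω => ?_)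
      (fun θ ω => (hAd θ ω).cos)
    rw [abs_mul, abs_neg]
    have := mul_le_mul (Real.abs_sin_le_one (A θ ω)) (hA'b θ ω) (abs_nonneg _) zero_le_one
    simpa using this
  have hconst : ∀ θ, ∫ ω, Real.cos (A θ ω) ∂volume.toSphere =
      ∫ ω, Real.cos (A 0 ω) ∂volume.toSphere := by
    intro θ
    have h := sphere_cos_congr (n := n)
      (x := y • (Real.cos θ • EuclideanSpace.single i 1 + Real.sin θ • EuclideanSpace.single k 1))
      (y := y • (Real.cos 0 • EuclideanSpace.single i 1 + Real.sin 0 • EuclideanSpace.single k 1))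
      (by
        have horth : ∀ θ : ℝ, ‖Real.cos θ • (EuclideanSpace.single i 1 : EuclideanSpace ℝ (Fin n))
            + Real.sin θ • EuclideanSpace.single k 1‖ ^ 2 = 1 := by
          intro θ
          have h0 : ⟪(EuclideanSpace.single i 1 : EuclideanSpace ℝ (Fin n)),
              EuclideanSpace.single k 1⟫ = 0 := by
            rw [EuclideanSpace.inner_single_left]; simp [hik]
          rw [norm_add_sq_real, norm_smul, norm_smul, inner_smul_left, inner_smul_right, h0]
          simp
        rw [norm_smul, norm_smul]
        congr 1
        exact (pow_left_inj₀ (norm_nonneg _) (norm_nonneg _) two_ne_zero).1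
          ((horth θ).trans (horth 0).symm))
    simp only [inner_smul_left, inner_add_left, EuclideanSpace.inner_single_left] at h
    simp only [hA]
    simpa [mul_assoc] using h
  have z1 : ∀ θ, ∫ ω, -Real.sin (A θ ω) * A' θ ω ∂volume.toSphere = 0 := by
    intro θ
    refine (d1 θ).unique ?_
    rw [funext hconst]
    exact hasDerivAt_const _ _
  have d2 := hasDerivAt_sphere (F := fun θ ω => -Real.sin (A θ ω) * A' θ ω)
    (F' := fun θ ω => -(Real.cos (A θ ω) * A' θ ω) * A' θ ω + -Real.sin (A θ ω) * -A θ ω)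
    (B := M * M + M)
    (fun θ => (Real.continuous_sin.comp (hAc θ)).neg.mul (hA'c θ))
    (fun θ => (((Real.continuous_cos.comp (hAc θ)).mul (hA'c θ)).neg.mul (hA'c θ)).add
      ((Real.continuous_sin.comp (hAc θ)).neg.mul (hAc θ).neg))
    (fun θ ω => by
      refine (abs_add_le _ _).trans ?_
      have e4 : ∀ c a : ℝ, |(-(c * a) * a)| = |c| * |a| * |a| := fun c a => by
        rw [abs_mul, abs_neg, abs_mul]
      have e5 : ∀ c a : ℝ, |(-c * -a)| = |c| * |a| := fun c a => by
        rw [abs_mul, abs_neg, abs_neg]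
      rw [e4, e5]
      have e1 : |Real.cos (A θ ω)| * |A' θ ω| ≤ M := by
        have := mul_le_mul (Real.abs_cos_le_one (A θ ω)) (hA'b θ ω) (abs_nonneg _) zero_le_one
        simpa using this
      have e2 : |Real.sin (A θ ω)| * |A θ ω| ≤ M := by
        have := mul_le_mul (Real.abs_sin_le_one (A θ ω)) (hAb θ ω) (abs_nonneg _) zero_le_one
        simpa using this
      have e3 := mul_le_mul e1 (hA'b θ ω) (abs_nonneg _) hM0
      linarith)
    (fun θ ω => (hAd θ ω).sin.neg.mul (hA'd θ ω)) 0
  have z2 := d2.unique (by rw [funext z1]; exact hasDerivAt_const _ _)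
  rw [← z2]
  refine integral_congr_ae (Filter.Eventually.of_forall fun ω => ?_)
  simp only [hA, hA', Real.cos_zero, Real.sin_zero]
  ring_nf

theorem sphKer_ode (i : Fin n) (y : ℝ) (hy : 0 < y) :
    sphKerDeriv2 i y = -(2 * (((n : ℝ) - 1) / 2) / y) * sphKerDeriv i y
      - (2 * π) ^ 2 * sphKer i y := by
  have hn : 0 < n := i.pos
  have h1 : ∀ k ∈ Finset.univ.erase i,
      ∫ ω : Metric.sphere (0 : EuclideanSpace ℝ (Fin n)) 1,
        (-((2 * π * y * (ω : EuclideanSpace ℝ (Fin n)) k) ^ 2 *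
          Real.cos (2 * π * y * (ω : EuclideanSpace ℝ (Fin n)) i)) +
        2 * π * y * (ω : EuclideanSpace ℝ (Fin n)) i *
          Real.sin (2 * π * y * (ω : EuclideanSpace ℝ (Fin n)) i)) ∂volume.toSphere = 0 :=
    fun k hk => sphere_rotation_identity (Finset.ne_of_mem_erase hk).symm y
  have h2 := Finset.sum_eq_zero h1
  rw [← integral_finsetSum _ (fun k _ => integrable_sphere (by fun_prop))] at h2
  have h3 : ∀ ω : Metric.sphere (0 : EuclideanSpace ℝ (Fin n)) 1,
      ∑ k ∈ Finset.univ.erase i,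
        (-((2 * π * y * (ω : EuclideanSpace ℝ (Fin n)) k) ^ 2 *
          Real.cos (2 * π * y * (ω : EuclideanSpace ℝ (Fin n)) i)) +
        2 * π * y * (ω : EuclideanSpace ℝ (Fin n)) i *
          Real.sin (2 * π * y * (ω : EuclideanSpace ℝ (Fin n)) i)) =
      -(y ^ 2 * (2 * π) ^ 2) * Real.cos (2 * π * y * (ω : EuclideanSpace ℝ (Fin n)) i)
      + (-(y ^ 2)) * (-((2 * π * (ω : EuclideanSpace ℝ (Fin n)) i) ^ 2 *
          Real.cos (2 * π * y * (ω : EuclideanSpace ℝ (Fin n)) i)))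
      + (-(y * ((n : ℝ) - 1))) * (-(2 * π * (ω : EuclideanSpace ℝ (Fin n)) i *
      Real.sin (2 * π * y * (ω : EuclideanSpace ℝ (Fin n)) i))) := by
    intro ω
    have hs : ∑ k ∈ Finset.univ.erase i, ((ω : EuclideanSpace ℝ (Fin n)) k) ^ 2 =
        1 - ((ω : EuclideanSpace ℝ (Fin n)) i) ^ 2 := by
      rw [Finset.sum_erase_eq_sub (Finset.mem_univ i)]
      have := EuclideanSpace.norm_sq_eq (ω : EuclideanSpace ℝ (Fin n))
      simp at this
      rw [← this]
    rw [Finset.sum_add_distrib, Finset.sum_const, Finset.card_erase_of_mem (Finset.mem_univ i),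
      Finset.sum_neg_distrib, ← Finset.sum_mul]
    simp_rw [mul_pow (2 * π * y)]
    rw [← Finset.mul_sum, hs, Finset.card_univ, Fintype.card_fin, nsmul_eq_mul,
      Nat.cast_sub hn]
    push_cast
    ring
  simp_rw [h3] at h2
  rw [integral_add (integrable_sphere (by fun_prop)) (integrable_sphere (by fun_prop)),
    integral_add (integrable_sphere (by fun_prop)) (integrable_sphere (by fun_prop)),
    integral_const_mul, integral_const_mul, integral_const_mul] at h2
  change -(y ^ 2 * (2 * π) ^ 2) * sphKer i y + (-(y ^ 2)) * sphKerDeriv2 i y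
    + (-(y * ((n : ℝ) - 1))) * sphKerDeriv i y = 0 at h2
  field_simp
  have : y * (y * sphKerDeriv2 i y + ((n : ℝ) - 1) * sphKerDeriv i y +
    y * (2 * π) ^ 2 * sphKer i y) = 0 := by linarith
  rcases mul_eq_zero.1 this with h | h
  · exact absurd h hy.ne'
  · linarith

theorem continuous_sphKer (i : Fin n) : Continuous (sphKer i) :=
  continuous_iff_continuousAt.2 fun y => (hasDerivAt_sphKer i y).continuousAt

theorem continuous_sphKerDeriv (i : Fin n) : Continuous (sphKerDeriv i) :=
  continuous_iff_continuousAt.2 fun y => (hasDerivAt_sphKerDeriv i y).continuousAt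

theorem abs_integral_sphere_le {F : Metric.sphere (0 : EuclideanSpace ℝ (Fin n)) 1 → ℝ} {B : ℝ}
    (hF : ∀ ω, |F ω| ≤ B) :
    |∫ ω, F ω ∂volume.toSphere| ≤
      B * (volume : Measure (EuclideanSpace ℝ (Fin n))).toSphere.real Set.univ := by
  rw [← Real.norm_eq_abs]
  exact norm_integral_le_of_norm_le_const (Filter.Eventually.of_forall hF)

/-- Pointwise bounds for `sphKer` and its derivative. -/
theorem exists_sphKer_bound (i : Fin n) : ∃ C : ℝ, 0 ≤ C ∧
    (∀ y, |sphKer i y| ≤ C) ∧ (∀ y, |sphKerDeriv i y| ≤ C) ∧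
    (∀ y, |sphKer i y - sphKer i 0| ≤ C * |y|) ∧
    (∀ y, 1 ≤ y → |sphKer i y| ≤ C * y ^ (-(((n : ℝ) - 1) / 2))) ∧
    (∀ y, 1 ≤ y → |sphKerDeriv i y| ≤ C * y ^ (-(((n : ℝ) - 1) / 2))) := by
  have hn : (1 : ℝ) ≤ n := by exact_mod_cast i.pos
  obtain ⟨C₁, hC₁, hd⟩ := exists_decay_of_ode (J := sphKer i) (J1 := sphKerDeriv i)
    (J2 := sphKerDeriv2 i) (m := ((n : ℝ) - 1) / 2) (a := 2 * π) (by linarith)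
    (by linarith [Real.pi_gt_three])
    (hasDerivAt_sphKer i) (hasDerivAt_sphKerDeriv i)
    (fun y hy => sphKer_ode i y hy)
  set B := (2 * π) * (volume : Measure (EuclideanSpace ℝ (Fin n))).toSphere.real Set.univ with hB
  have hB0 : 0 ≤ B := by positivity
  have h0 : ∀ y, |sphKer i y| ≤ B := fun y =>
    (abs_integral_sphere_le (fun ω => Real.abs_cos_le_one _)).trans
      (mul_le_mul_of_nonneg_right (by linarith [Real.pi_gt_three]) measureReal_nonneg)
  have h1 : ∀ y, |sphKerDeriv i y| ≤ B := fun y => abs_integral_sphere_le fun ω => by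
    rw [abs_neg, abs_mul]
    exact mul_le_of_le_one_right_of_le (abs_two_pi_coord_le ω i) (abs_nonneg _)
      (Real.abs_sin_le_one _)
  have h2 : ∀ y, |sphKer i y - sphKer i 0| ≤ B * |y| := fun y => by
    have := Convex.norm_image_sub_le_of_norm_hasDerivWithin_le (f := sphKer i)
      (f' := sphKerDeriv i) (s := Set.univ) (C := B) (x := 0) (y := y)
      (fun x _ => (hasDerivAt_sphKer i x).hasDerivWithinAt) (fun x _ => h1 x) convex_univ
      (Set.mem_univ _) (Set.mem_univ _)
    simpa using this
  refine ⟨max B C₁, le_max_of_le_left hB0, fun y => (h0 y).trans (le_max_left _ _),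
    fun y => (h1 y).trans (le_max_left _ _), fun y => (h2 y).trans ?_, fun y hy => ?_,
    fun y hy => ?_⟩
  · exact mul_le_mul_of_nonneg_right (le_max_left _ _) (abs_nonneg _)
  · exact (hd y hy).1.trans (mul_le_mul_of_nonneg_right (le_max_right _ _) (by positivity))
  · exact (hd y hy).2.trans (mul_le_mul_of_nonneg_right (le_max_right _ _) (by positivity))

theorem integral_sphere_exp (i : Fin n) (x : EuclideanSpace ℝ (Fin n)) :
    ∫ ω : Metric.sphere (0 : EuclideanSpace ℝ (Fin n)) 1,
      Complex.exp (2 * π * ⟪x, (ω : EuclideanSpace ℝ (Fin n))⟫ * Complex.I) ∂volume.toSphere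
      = sphKer i ‖x‖ := by
  have h1 : ∀ ω : Metric.sphere (0 : EuclideanSpace ℝ (Fin n)) 1,
      Complex.exp (2 * π * ⟪x, (ω : EuclideanSpace ℝ (Fin n))⟫ * Complex.I) =
      ((Real.cos (2 * π * ⟪x, (ω : EuclideanSpace ℝ (Fin n))⟫) : ℝ) : ℂ) +
      ((Real.sin (2 * π * ⟪x, (ω : EuclideanSpace ℝ (Fin n))⟫) : ℝ) : ℂ) * Complex.I := by
    intro ω
    rw [Complex.exp_mul_I]
    push_cast
    rfl
  simp_rw [h1]
  rw [integral_add (integrable_sphere (by fun_prop)) (integrable_sphere (by fun_prop)),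
    integral_mul_const, integral_complex_ofReal, integral_complex_ofReal, sphere_sin_eq_zero,
    sphere_cos_congr (y := ‖x‖ • EuclideanSpace.single i 1) (by simp [norm_smul])]
  simp [sphKer, inner_smul_left, EuclideanSpace.inner_single_left, mul_assoc]

end Sphere

section Block

/-- A quantitative one-dimensional Sobolev inequality. -/
theorem norm_sq_le_of_hasDerivAt {F F' : ℝ → ℂ} (hF : ∀ x, HasDerivAt F (F' x) x)
    (hF' : Continuous F') {a b μ : ℝ} (hab : a < b) (hμ : 0 < μ) {x : ℝ}
    (hx : x ∈ Set.Icc a b) :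
    ‖F x‖ ^ 2 ≤ ((b - a)⁻¹ + μ) * (∫ R in Set.Icc a b, ‖F R‖ ^ 2) +
      μ⁻¹ * ∫ R in Set.Icc a b, ‖F' R‖ ^ 2 := by
  have hFc : Continuous F := continuous_iff_continuousAt.2 fun y => (hF y).continuousAt
  have hi1 : IntegrableOn (fun R => ‖F R‖ ^ 2) (Set.Icc a b) :=
    (by fun_prop : Continuous fun R => ‖F R‖ ^ 2).integrableOn_Icc
  have hi2 : IntegrableOn (fun R => ‖F' R‖ ^ 2) (Set.Icc a b) :=
    (by fun_prop : Continuous fun R => ‖F' R‖ ^ 2).integrableOn_Icc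
  have hvol : volume (Set.Icc a b) = ENNReal.ofReal (b - a) := Real.volume_Icc
  obtain ⟨y, hy, hya⟩ := exists_le_setAverage (μ := volume) (s := Set.Icc a b)
    (f := fun R => ‖F R‖ ^ 2) (by rw [hvol]; simpa using hab) (by rw [hvol]; simp) hi1
  rw [setAverage_eq, Measure.real, hvol, ENNReal.toReal_ofReal (by linarith), smul_eq_mul] at hya
  have hd : ∀ z, HasDerivAt (fun z => ‖F z‖ ^ 2) (2 * inner ℝ (F z) (F' z)) z :=
    fun z => (hF z).norm_sq
  have hcont : Continuous fun z => 2 * inner ℝ (F z) (F' z) := by fun_prop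
  have hftc : ‖F x‖ ^ 2 - ‖F y‖ ^ 2 = ∫ z in y..x, 2 * inner ℝ (F z) (F' z) :=
    (intervalIntegral.integral_eq_sub_of_hasDerivAt (fun z _ => hd z)
      (hcont.intervalIntegrable _ _)).symm
  have hpt : ∀ z, ‖2 * inner ℝ (F z) (F' z)‖ ≤ μ * ‖F z‖ ^ 2 + μ⁻¹ * ‖F' z‖ ^ 2 := by
    intro z
    rw [norm_mul, Real.norm_two]
    have h1 := norm_inner_le_norm (𝕜 := ℝ) (F z) (F' z)
    have h2 : 0 ≤ μ⁻¹ * (μ * ‖F z‖ - ‖F' z‖) ^ 2 := by positivity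
    have h3 : μ⁻¹ * (μ * ‖F z‖ - ‖F' z‖) ^ 2 =
        μ * ‖F z‖ ^ 2 - 2 * (‖F z‖ * ‖F' z‖) + μ⁻¹ * ‖F' z‖ ^ 2 := by field_simp; ring
    linarith
  have hle : ‖F x‖ ^ 2 - ‖F y‖ ^ 2 ≤
      ∫ z in Set.Icc a b, (μ * ‖F z‖ ^ 2 + μ⁻¹ * ‖F' z‖ ^ 2) := by
    rw [hftc]
    refine (Real.le_norm_self _).trans (intervalIntegral.norm_integral_le_integral_norm_uIoc.trans ?_)
    refine (setIntegral_mono_on hcont.norm.integrableOn_uIoc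
      ((by fun_prop : Continuous fun z => μ * ‖F z‖ ^ 2 + μ⁻¹ * ‖F' z‖ ^ 2).integrableOn_uIoc)
      measurableSet_uIoc (fun z _ => hpt z)).trans ?_
    refine setIntegral_mono_set ((hi1.const_mul μ).add (hi2.const_mul μ⁻¹))
      (Filter.Eventually.of_forall fun z => by positivity) ?_
    exact (Set.uIoc_subset_uIcc.trans (Set.uIcc_subset_Icc hy hx)).eventuallyLE
  rw [integral_add (hi1.const_mul μ) (hi2.const_mul μ⁻¹), integral_const_mul,
    integral_const_mul] at hle
  linarith

theorem continuous_slice_left {X : Type*} [TopologicalSpace X] {F : ℝ → ℝ → X}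
    (hF : Continuous fun p : ℝ × ℝ => F p.1 p.2) (R : ℝ) : Continuous fun ρ => F ρ R :=
  hF.comp (continuous_id.prodMk continuous_const)

theorem continuous_slice_right {X : Type*} [TopologicalSpace X] {F : ℝ → ℝ → X}
    (hF : Continuous fun p : ℝ × ℝ => F p.1 p.2) (ρ : ℝ) : Continuous (F ρ) :=
  hF.comp (continuous_const.prodMk continuous_id)

/-- The oscillatory integral with amplitude `u` and kernel `K`. -/
noncomputable def waveInt (ε : ℝ) (u : ℝ → ℂ) (K : ℝ → ℝ → ℝ) (t R : ℝ) : ℂ :=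
  ∫ ρ, phase ε t ρ * (u ρ * K ρ R)

variable {ε : ℝ} {u : ℝ → ℂ} {K K' : ℝ → ℝ → ℝ}

theorem norm_waveInt_integrand_le {B : ℝ} {S : Set ℝ} (hK : ∀ ρ, ∀ R ∈ S, u ρ ≠ 0 → |K ρ R| ≤ B)
    (t : ℝ) {R : ℝ} (hR : R ∈ S) (ρ : ℝ) : ‖phase ε t ρ * (u ρ * K ρ R)‖ ≤ B * ‖u ρ‖ := by
  rw [norm_mul, norm_phase, one_mul, norm_mul, Complex.norm_real, Real.norm_eq_abs]
  by_cases h : u ρ = 0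
  · simp [h]
  · rw [mul_comm]
    exact mul_le_mul_of_nonneg_right (hK ρ R hR h) (norm_nonneg _)

theorem aestronglyMeasurable_waveInt_integrand (hu : Integrable u)
    (hKc : Continuous fun p : ℝ × ℝ => K p.1 p.2) (t R : ℝ) :
    AEStronglyMeasurable (fun ρ => phase ε t ρ * (u ρ * K ρ R)) := by
  have h1 : Continuous fun ρ => phase ε t ρ := continuous_slice_right (continuous_phase ε) t
  have h2 : Continuous fun ρ => ((K ρ R : ℝ) : ℂ) :=
    Complex.continuous_ofReal.comp (continuous_slice_left hKc R)
  exact h1.aestronglyMeasurable.mul (hu.aestronglyMeasurable.mul h2.aestronglyMeasurable)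

theorem continuous_waveInt (hu : Integrable u) (hKc : Continuous fun p : ℝ × ℝ => K p.1 p.2)
    {B : ℝ} (hK : ∀ ρ, ∀ R ∈ Set.univ, u ρ ≠ 0 → |K ρ R| ≤ B) :
    Continuous fun p : ℝ × ℝ => waveInt ε u K p.1 p.2 := by
  unfold waveInt
  refine continuous_of_dominated (bound := fun ρ => B * ‖u ρ‖)
    (fun p => aestronglyMeasurable_waveInt_integrand hu hKc _ _)
    (fun p => Filter.Eventually.of_forall fun ρ => norm_waveInt_integrand_le hK _ (Set.mem_univ _) ρ)
    (hu.norm.const_mul B) (Filter.Eventually.of_forall fun ρ => ?_)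
  have h1 : Continuous fun p : ℝ × ℝ => phase ε p.1 ρ :=
    (continuous_slice_left (continuous_phase ε) ρ).comp continuous_fst
  have h2 : Continuous fun p : ℝ × ℝ => ((K ρ p.2 : ℝ) : ℂ) :=
    Complex.continuous_ofReal.comp ((continuous_slice_right hKc ρ).comp continuous_snd)
  exact h1.mul (continuous_const.mul h2)

theorem hasDerivAt_waveInt (hu : Integrable u) (hKc : Continuous fun p : ℝ × ℝ => K p.1 p.2)
    (hKc' : Continuous fun p : ℝ × ℝ => K' p.1 p.2)
    (hd : ∀ ρ R, HasDerivAt (K ρ) (K' ρ R) R) {B : ℝ}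
    (hK : ∀ ρ, ∀ R ∈ Set.univ, u ρ ≠ 0 → |K ρ R| ≤ B)
    (hK' : ∀ ρ, ∀ R ∈ Set.univ, u ρ ≠ 0 → |K' ρ R| ≤ B) (t R : ℝ) :
    HasDerivAt (waveInt ε u K t) (waveInt ε u K' t R) R := by
  unfold waveInt
  refine (hasDerivAt_integral_of_dominated_loc_of_deriv_le (bound := fun ρ => B * ‖u ρ‖)
    Filter.univ_mem
    (Filter.Eventually.of_forall fun R => aestronglyMeasurable_waveInt_integrand hu hKc t R)
    ((hu.norm.const_mul B).mono' (aestronglyMeasurable_waveInt_integrand hu hKc t R)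
      (Filter.Eventually.of_forall (norm_waveInt_integrand_le hK t (Set.mem_univ R))))
    (aestronglyMeasurable_waveInt_integrand hu hKc' t R)
    (Filter.Eventually.of_forall fun ρ R _ => norm_waveInt_integrand_le hK' t (Set.mem_univ R) ρ)
    (hu.norm.const_mul B)
    (Filter.Eventually.of_forall fun ρ R _ => ?_)).2
  exact (((hd ρ R).ofReal_comp).const_mul (u ρ)).const_mul _

theorem enorm_waveInt_le {κ : ℝ} {S : Set ℝ} (hK : ∀ ρ, ∀ R ∈ S, u ρ ≠ 0 → |K ρ R| ≤ κ)
    (t : ℝ) {R : ℝ} (hR : R ∈ S) :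
    ‖waveInt ε u K t R‖ₑ ≤ ENNReal.ofReal κ * ∫⁻ ρ, ‖u ρ‖ₑ := by
  refine (enorm_integral_le_lintegral_enorm _).trans ?_
  rw [← lintegral_const_mul' _ _ ENNReal.ofReal_ne_top]
  refine lintegral_mono fun ρ => ?_
  have h := norm_waveInt_integrand_le (ε := ε) hK t hR ρ
  by_cases hu : u ρ = 0
  · simp [hu]
  have hκ : 0 ≤ κ := (abs_nonneg _).trans (hK ρ R hR hu)
  simp only [← ofReal_norm]
  rw [← ENNReal.ofReal_mul hκ]
  exact ENNReal.ofReal_le_ofReal h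

theorem lintegral_waveInt_sq_le (hε : ε = 1 ∨ ε = -1) (hu : Integrable u)
    (hKc : Continuous fun p : ℝ × ℝ => K p.1 p.2)
    {κ : ℝ} {S : Set ℝ} (hK : ∀ ρ, ∀ R ∈ S, u ρ ≠ 0 → |K ρ R| ≤ κ) {R : ℝ} (hR : R ∈ S) :
    ∫⁻ t, ‖waveInt ε u K t R‖ₑ ^ 2 ≤ ENNReal.ofReal (κ ^ 2) * ∫⁻ ρ, ‖u ρ‖ₑ ^ 2 := by
  have hb : ∀ ρ, ‖u ρ * (K ρ R : ℂ)‖ ≤ κ * ‖u ρ‖ := fun ρ => by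
    have := norm_waveInt_integrand_le (ε := ε) hK 0 hR ρ
    rwa [norm_mul, norm_phase, one_mul] at this
  have h2 : Continuous fun ρ => ((K ρ R : ℝ) : ℂ) :=
    Complex.continuous_ofReal.comp (continuous_slice_left hKc R)
  have hi : Integrable fun ρ => u ρ * (K ρ R : ℂ) :=
    (hu.norm.const_mul κ).mono' (hu.aestronglyMeasurable.mul h2.aestronglyMeasurable)
      (Filter.Eventually.of_forall hb)
  refine (lintegral_phase_sq_le hε hi).trans ?_
  rw [← lintegral_const_mul' _ _ ENNReal.ofReal_ne_top]
  refine lintegral_mono fun ρ => ?_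
  rw [← ofReal_norm, ← ofReal_norm, ← ENNReal.ofReal_pow (norm_nonneg _),
    ← ENNReal.ofReal_pow (norm_nonneg _), ← ENNReal.ofReal_mul (by positivity), ← mul_pow]
  exact ENNReal.ofReal_le_ofReal (pow_le_pow_left₀ (norm_nonneg _) (hb ρ) 2)

/-- Local maximal estimate for an oscillatory integral over an interval of radii. -/
theorem exists_sup_waveInt_sq (hε : ε = 1 ∨ ε = -1) (hu : Integrable u)
    (hKc : Continuous fun p : ℝ × ℝ => K p.1 p.2)
    (hKc' : Continuous fun p : ℝ × ℝ => K' p.1 p.2)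
    (hd : ∀ ρ R, HasDerivAt (K ρ) (K' ρ R) R) {B : ℝ}
    (hK : ∀ ρ, ∀ R ∈ Set.univ, u ρ ≠ 0 → |K ρ R| ≤ B)
    (hK' : ∀ ρ, ∀ R ∈ Set.univ, u ρ ≠ 0 → |K' ρ R| ≤ B)
    {a b μ κ κ' : ℝ} (hab : a < b) (hμ : 0 < μ)
    (hκ : ∀ ρ, ∀ R ∈ Set.Icc a b, u ρ ≠ 0 → |K ρ R| ≤ κ)
    (hκ' : ∀ ρ, ∀ R ∈ Set.Icc a b, u ρ ≠ 0 → |K' ρ R| ≤ κ') :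
    ∃ Z : ℝ → ℝ≥0∞, Measurable Z ∧
      (∀ t, ∀ R ∈ Set.Icc a b, ‖waveInt ε u K t R‖ₑ ^ 2 ≤ Z t) ∧
      ∫⁻ t, Z t ≤ ENNReal.ofReal ((1 + μ * (b - a)) * κ ^ 2 + μ⁻¹ * (b - a) * κ' ^ 2) *
        ∫⁻ ρ, ‖u ρ‖ₑ ^ 2 := by
  have hc := continuous_waveInt (ε := ε) hu hKc hK
  have hc' := continuous_waveInt (ε := ε) hu hKc' hK'
  have hm : Measurable fun p : ℝ × ℝ => ‖waveInt ε u K p.1 p.2‖ₑ ^ 2 := hc.enorm.measurable.pow_const 2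
  have hm' : Measurable fun p : ℝ × ℝ => ‖waveInt ε u K' p.1 p.2‖ₑ ^ 2 :=
    hc'.enorm.measurable.pow_const 2
  have hl : 0 < b - a := by linarith
  refine ⟨fun t => ENNReal.ofReal ((b - a)⁻¹ + μ) *
      (∫⁻ R in Set.Icc a b, ‖waveInt ε u K t R‖ₑ ^ 2) +
      ENNReal.ofReal μ⁻¹ * ∫⁻ R in Set.Icc a b, ‖waveInt ε u K' t R‖ₑ ^ 2, ?_, ?_, ?_⟩
  · exact (hm.lintegral_prod_right'.const_mul _).add (hm'.lintegral_prod_right'.const_mul _)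
  · intro t R hR
    have hW' : Continuous (waveInt ε u K' t) := continuous_slice_right hc' t
    have hW : Continuous (waveInt ε u K t) := continuous_slice_right hc t
    have h := norm_sq_le_of_hasDerivAt
      (hasDerivAt_waveInt (ε := ε) hu hKc hKc' hd hK hK' t) hW' hab hμ hR
    have key : ∀ F : ℝ → ℂ, Continuous F → ∫⁻ R in Set.Icc a b, ‖F R‖ₑ ^ 2 =
        ENNReal.ofReal (∫ R in Set.Icc a b, ‖F R‖ ^ 2) := fun F hF => by
      rw [ofReal_integral_eq_lintegral_ofReal
        ((by fun_prop : Continuous fun R => ‖F R‖ ^ 2).integrableOn_Icc)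
        (Filter.Eventually.of_forall fun R => by positivity)]
      refine lintegral_congr fun R => ?_
      rw [ENNReal.ofReal_pow (norm_nonneg _), ofReal_norm]
    have hn : ∀ F : ℝ → ℂ, 0 ≤ ∫ R in Set.Icc a b, ‖F R‖ ^ 2 := fun F =>
      integral_nonneg fun R => by positivity
    beta_reduce
    rw [key _ hW, key _ hW', ← ENNReal.ofReal_mul (by positivity),
      ← ENNReal.ofReal_mul (by positivity),
      ← ENNReal.ofReal_add (mul_nonneg (by positivity) (hn _)) (mul_nonneg (by positivity) (hn _)),
      ← ofReal_norm, ← ENNReal.ofReal_pow (norm_nonneg _)]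
    exact ENNReal.ofReal_le_ofReal h
  · have swap : ∀ {Q : ℝ → ℝ → ℝ} {k : ℝ}, (Measurable fun p : ℝ × ℝ => ‖waveInt ε u Q p.1 p.2‖ₑ ^ 2) →
        (Continuous fun p : ℝ × ℝ => Q p.1 p.2) →
        (∀ ρ, ∀ R ∈ Set.Icc a b, u ρ ≠ 0 → |Q ρ R| ≤ k) →
        ∫⁻ t, ∫⁻ R in Set.Icc a b, ‖waveInt ε u Q t R‖ₑ ^ 2 ≤
          ENNReal.ofReal ((b - a) * k ^ 2) * ∫⁻ ρ, ‖u ρ‖ₑ ^ 2 := by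
      intro Q k hm hQc hQ
      rw [lintegral_lintegral_swap (by exact hm.aemeasurable)]
      refine (setLIntegral_mono' measurableSet_Icc
        fun R hR => lintegral_waveInt_sq_le hε hu hQc hQ hR).trans ?_
      rw [setLIntegral_const, Real.volume_Icc, mul_right_comm, ← ENNReal.ofReal_mul (by positivity),
        mul_comm (k ^ 2)]
    rw [lintegral_add_left (hm.lintegral_prod_right'.const_mul _),
      lintegral_const_mul _ hm.lintegral_prod_right', lintegral_const_mul _ hm'.lintegral_prod_right']
    refine (add_le_add (mul_le_mul_right (swap hm hKc hκ) _)
      (mul_le_mul_right (swap hm' hKc' hκ') _)).trans (le_of_eq ?_)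
    rw [← mul_assoc, ← mul_assoc, ← add_mul, ← ENNReal.ofReal_mul (by positivity),
      ← ENNReal.ofReal_mul (by positivity), ← ENNReal.ofReal_add (by positivity) (by positivity)]
    congr 2
    field_simp

end Block

section Lp

variable {α : Type*} [MeasurableSpace α] {μ : Measure α}

theorem eLpNorm_ennreal_eq {q : ℝ≥0∞} (hq0 : q ≠ 0) (hq : q ≠ ∞) (f : α → ℝ≥0∞) :
    eLpNorm f q μ = (∫⁻ x, f x ^ q.toReal ∂μ) ^ (1 / q.toReal) := by
  rw [eLpNorm_eq_lintegral_rpow_enorm_toReal hq0 hq]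
  rfl

theorem eLpNorm_top_le {f : α → ℝ≥0∞} {C : ℝ≥0∞} (h : ∀ᵐ x ∂μ, f x ≤ C) :
    eLpNorm f ∞ μ ≤ C := by
  rw [eLpNorm_exponent_top]
  exact essSup_le_of_ae_le C h

theorem ae_le_eLpNorm_top (f : α → ℝ≥0∞) : ∀ᵐ x ∂μ, f x ≤ eLpNorm f ∞ μ := by
  rw [eLpNorm_exponent_top]
  exact ae_le_essSup f

/-- Minkowski's inequality for countable sums of nonnegative functions. -/
theorem eLpNorm_tsum_le {ι : Type*} [Countable ι] {f : ι → α → ℝ≥0∞} (hf : ∀ i, Measurable (f i))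
    {p : ℝ≥0∞} (hp : 1 ≤ p) :
    eLpNorm (fun x => ∑' i, f i x) p μ ≤ ∑' i, eLpNorm (f i) p μ := by
  have hp0 : p ≠ 0 := (zero_lt_one.trans_le hp).ne'
  rcases eq_or_ne p ∞ with rfl | hpt
  · refine eLpNorm_top_le ?_
    filter_upwards [ae_all_iff.2 fun i => ae_le_eLpNorm_top (μ := μ) (f i)] with x hx
    exact ENNReal.tsum_le_tsum hx
  have hpr : 0 < p.toReal := ENNReal.toReal_pos hp0 hpt
  have hsum : ∀ s : Finset ι, ∫⁻ x, (∑ i ∈ s, f i x) ^ p.toReal ∂μ ≤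
      (∑' i, eLpNorm (f i) p μ) ^ p.toReal := by
    intro s
    have h1 := eLpNorm_sum_le (f := f) (s := s) (μ := μ)
      (fun i _ => (hf i).aestronglyMeasurable) hp
    have h2 : eLpNorm (∑ i ∈ s, f i) p μ ≤ ∑' i, eLpNorm (f i) p μ :=
      h1.trans (ENNReal.sum_le_tsum s)
    rw [eLpNorm_ennreal_eq hp0 hpt, one_div] at h2
    have h3 := (ENNReal.rpow_inv_le_iff hpr).1 h2
    simpa only [Finset.sum_apply] using h3
  rw [eLpNorm_ennreal_eq hp0 hpt, one_div, ENNReal.rpow_inv_le_iff hpr]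
  have heq : ∀ x, (∑' i, f i x) ^ p.toReal = ⨆ s : Finset ι, (∑ i ∈ s, f i x) ^ p.toReal := by
    intro x
    rw [ENNReal.tsum_eq_iSup_sum]
    exact (ENNReal.orderIsoRpow p.toReal hpr).map_iSup _
  simp_rw [heq]
  rw [lintegral_iSup_directed]
  · exact iSup_le hsum
  · exact fun s => ((Finset.measurable_fun_sum s fun i _ => hf i).pow_const _).aemeasurable
  · refine Monotone.directed_le fun s t hst x => ?_
    exact ENNReal.rpow_le_rpow (Finset.sum_le_sum_of_subset hst) hpr.le

/-- Interpolation between `L²` and `L^∞`. -/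
theorem eLpNorm_le_interp {F : Type*} [TopologicalSpace F] [ContinuousENorm F] {f : α → F}
    (hf : AEMeasurable (fun x => ‖f x‖ₑ) μ) {q : ℝ≥0∞} (hq : 2 ≤ q) {B E : ℝ≥0∞}
    (hB : ∀ᵐ x ∂μ, ‖f x‖ₑ ≤ B) (hE : ∫⁻ x, ‖f x‖ₑ ^ 2 ∂μ ≤ E ^ 2) :
    eLpNorm f q μ ≤ B ^ (1 - 2 / q.toReal) * E ^ (2 / q.toReal) := by
  rcases eq_or_ne q ∞ with rfl | hqt
  · simp only [toReal_top, _root_.div_zero, _root_.sub_zero, ENNReal.rpow_one, ENNReal.rpow_zero,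
      mul_one]
    rw [eLpNorm_exponent_top]
    exact essSup_le_of_ae_le B hB
  have hq0 : q ≠ 0 := (two_pos.trans_le hq).ne'
  have hq2 : 2 ≤ q.toReal := by
    have := ENNReal.toReal_mono hqt hq
    simpa using this
  have hqr : 0 < q.toReal := by linarith
  rw [eLpNorm_eq_lintegral_rpow_enorm_toReal hq0 hqt, one_div, ENNReal.rpow_inv_le_iff hqr,
    ENNReal.mul_rpow_of_nonneg _ _ hqr.le, ← ENNReal.rpow_mul, ← ENNReal.rpow_mul]
  have e1 : (1 - 2 / q.toReal) * q.toReal = q.toReal - 2 := by field_simp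
  have e2 : 2 / q.toReal * q.toReal = 2 := by field_simp
  rw [e1, e2]
  calc ∫⁻ x, ‖f x‖ₑ ^ q.toReal ∂μ ≤ ∫⁻ x, B ^ (q.toReal - 2) * ‖f x‖ₑ ^ 2 ∂μ := by
        refine lintegral_mono_ae ?_
        filter_upwards [hB] with x hx
        have : ‖f x‖ₑ ^ q.toReal = ‖f x‖ₑ ^ (q.toReal - 2) * ‖f x‖ₑ ^ 2 := by
          rw [← ENNReal.rpow_two, ← ENNReal.rpow_add_of_nonneg _ _ (by linarith) (by norm_num)]
          congr 1; ring
        rw [this]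
        gcongr
    _ = B ^ (q.toReal - 2) * ∫⁻ x, ‖f x‖ₑ ^ 2 ∂μ := by
        rw [lintegral_const_mul'' _ (hf.pow_const 2)]
    _ ≤ B ^ (q.toReal - 2) * E ^ (2 : ℝ) := by
        rw [ENNReal.rpow_two]; gcongr

/-- Interpolation between four corner estimates. -/
theorem eLpNorm_rpow_mul_rpow_le {X Y : α → ℝ≥0∞} (hX : Measurable X) (hY : Measurable Y)
    {q : ℝ≥0∞} (hq : 2 ≤ q) {θ : ℝ} (hθ0 : 0 ≤ θ) (hθ1 : θ ≤ 1) {Xi X2 Yi Y2 : ℝ≥0∞}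
    (hXi : ∀ t, X t ≤ Xi) (hX2 : ∫⁻ t, X t ^ 2 ∂μ ≤ X2 ^ 2)
    (hYi : ∀ t, Y t ≤ Yi) (hY2 : ∫⁻ t, Y t ^ 2 ∂μ ≤ Y2 ^ 2) :
    eLpNorm (fun t => X t ^ θ * Y t ^ (1 - θ)) q μ ≤
      (Xi ^ θ * Yi ^ (1 - θ)) ^ (1 - 2 / q.toReal) *
        (X2 ^ θ * Y2 ^ (1 - θ)) ^ (2 / q.toReal) := by
  have hθ' : 0 ≤ 1 - θ := by linarith
  refine eLpNorm_le_interp (((hX.pow_const _).mul (hY.pow_const _)).aemeasurable) hq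
    (Filter.Eventually.of_forall fun t => ?_) ?_
  · exact mul_le_mul' (ENNReal.rpow_le_rpow (hXi t) hθ0) (ENNReal.rpow_le_rpow (hYi t) hθ')
  · have e : ∀ a b : ℝ≥0∞, (a ^ θ * b ^ (1 - θ)) ^ 2 = (a ^ 2) ^ θ * (b ^ 2) ^ (1 - θ) := by
      intro a b
      rw [mul_pow, ← ENNReal.rpow_two, ← ENNReal.rpow_two, ← ENNReal.rpow_two, ← ENNReal.rpow_two,
        ← ENNReal.rpow_mul, ← ENNReal.rpow_mul, ← ENNReal.rpow_mul, ← ENNReal.rpow_mul,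
        mul_comm θ, mul_comm (1 - θ)]
    simp only [enorm_eq_self, e]
    refine (ENNReal.lintegral_mul_norm_pow_le (hX.pow_const 2).aemeasurable
      (hY.pow_const 2).aemeasurable hθ0 hθ' (by ring)).trans ?_
    gcongr

theorem two_rpow_combine (c b : ℝ≥0∞) (x y : ℝ) {θ : ℝ} (hθ0 : 0 ≤ θ) (hθ1 : θ ≤ 1) :
    (c * 2 ^ x * b) ^ (1 - θ) * (c * 2 ^ y * b) ^ θ = c * 2 ^ ((1 - θ) * x + θ * y) * b := by
  have hθ' : 0 ≤ 1 - θ := by linarith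
  have h1 : ∀ z : ℝ≥0∞, z ^ (1 - θ) * z ^ θ = z := fun z => by
    rw [← ENNReal.rpow_add_of_nonneg _ _ hθ' hθ0]; simp
  rw [ENNReal.mul_rpow_of_nonneg _ _ hθ', ENNReal.mul_rpow_of_nonneg _ _ hθ',
    ENNReal.mul_rpow_of_nonneg _ _ hθ0, ENNReal.mul_rpow_of_nonneg _ _ hθ0,
    ← ENNReal.rpow_mul, ← ENNReal.rpow_mul, ENNReal.rpow_add _ _ two_ne_zero ofNat_ne_top,
    mul_comm x, mul_comm y]
  calc _ = (c ^ (1 - θ) * c ^ θ) * (2 ^ ((1 - θ) * x) * 2 ^ (θ * y)) * (b ^ (1 - θ) * b ^ θ) := by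
        ring
    _ = _ := by rw [h1, h1]

theorem tsum_mul_sq_le {ι : Type*} (w x : ι → ℝ≥0∞) :
    (∑' i, w i * x i) ^ 2 ≤ (∑' i, w i) * ∑' i, w i * x i ^ 2 := by
  let _ : MeasurableSpace ι := ⊤
  have h := ENNReal.lintegral_mul_norm_pow_le (μ := Measure.count) (f := w)
    (g := fun i => w i * x i ^ 2) (measurable_from_top).aemeasurable
    (measurable_from_top).aemeasurable (p := 1 / 2) (q := 1 / 2) (by norm_num) (by norm_num)
    (by norm_num)
  rw [lintegral_count, lintegral_count, lintegral_count] at h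
  have e : ∀ i, w i ^ (1 / 2 : ℝ) * (w i * x i ^ 2) ^ (1 / 2 : ℝ) = w i * x i := by
    intro i
    rw [← ENNReal.mul_rpow_of_nonneg _ _ (by norm_num), ← mul_assoc, ← sq, ← mul_pow,
      ← ENNReal.rpow_two, ← ENNReal.rpow_mul]
    norm_num
  simp_rw [e] at h
  rw [← ENNReal.mul_rpow_of_nonneg _ _ (by norm_num)] at h
  calc _ ≤ (((∑' i, w i) * ∑' i, w i * x i ^ 2) ^ (1 / 2 : ℝ)) ^ 2 := by gcongr
    _ = _ := by rw [← ENNReal.rpow_two, ← ENNReal.rpow_mul]; norm_num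

theorem eLpNorm_sq_eq {f : α → ℝ≥0∞} {q : ℝ≥0∞} :
    eLpNorm (fun x => f x ^ 2) (q / 2) μ = eLpNorm f q μ ^ 2 := by
  have := eLpNorm_enorm_rpow (μ := μ) f (p := q / 2) (q := 2) two_pos
  simp only [enorm_eq_self, ENNReal.rpow_two] at this
  rw [this]
  congr 2
  rw [ENNReal.ofReal_ofNat]
  exact ENNReal.div_mul_cancel two_ne_zero ofNat_ne_top

theorem eLpNorm_const_mul_le {q c : ℝ≥0∞} (hc : c ≠ ∞) (g : α → ℝ≥0∞) :
    eLpNorm (fun x => c * g x) q μ ≤ c * eLpNorm g q μ := by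
  have := eLpNorm_le_nnreal_smul_eLpNorm_of_ae_le_mul' (μ := μ) (f := fun x => c * g x) (g := g)
    (c := c.toNNReal)
    (Filter.Eventually.of_forall fun x => by simp [ENNReal.coe_toNNReal hc]) q
  simpa [ENNReal.smul_def, ENNReal.coe_toNNReal hc] using this

/-- A Young-type summation lemma for dyadic sums with off-diagonal decay. -/
theorem eLpNorm_sup_tsum_le {M : ℤ → ℤ → α → ℝ≥0∞} (hM : ∀ i j, Measurable (M i j))
    {q : ℝ≥0∞} (hq : 2 ≤ q) {c : ℤ → ℝ≥0∞} (hc0 : ∀ k, c k ≠ 0) (hct : ∀ k, c k ≠ ∞)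
    (hSt : ∑' k, c k ≠ ∞)
    {a : ℤ → ℝ≥0∞} (h : ∀ i j, eLpNorm (M i j) q μ ≤ c (i + j) * a i) :
    eLpNorm (fun x => (∑' j, (∑' i, M i j x) ^ 2) ^ (1 / 2 : ℝ)) q μ ≤
      (∑' k, c k) * (∑' i, a i ^ 2) ^ (1 / 2 : ℝ) := by
  set S := ∑' k, c k with hS
  have hSj : ∀ j, ∑' i, c (i + j) = S := fun j => (Equiv.addRight j).tsum_eq c
  have hSi : ∀ i, ∑' j, c (i + j) = S := fun i => (Equiv.addLeft i).tsum_eq c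
  have hpt : ∀ x, ∑' j, (∑' i, M i j x) ^ 2 ≤
      ∑' j, ∑' i, S * (c (i + j))⁻¹ * M i j x ^ 2 := by
    intro x
    refine ENNReal.tsum_le_tsum fun j => ?_
    have := tsum_mul_sq_le (fun i => c (i + j)) (fun i => (c (i + j))⁻¹ * M i j x)
    rw [hSj] at this
    calc (∑' i, M i j x) ^ 2 = (∑' i, c (i + j) * ((c (i + j))⁻¹ * M i j x)) ^ 2 := by
          congr 2; ext i
          rw [← mul_assoc, ENNReal.mul_inv_cancel (hc0 _) (hct _), one_mul]
      _ ≤ _ := this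
      _ = _ := by
        rw [← ENNReal.tsum_mul_left]
        congr 1; ext i
        rw [mul_pow, ← mul_assoc (c (i + j)), sq (c (i + j))⁻¹, ← mul_assoc (c (i + j)),
          ENNReal.mul_inv_cancel (hc0 _) (hct _), one_mul, mul_assoc]
  have hq1 : 1 ≤ q / 2 := by
    rw [ENNReal.le_div_iff_mul_le (by simp) (by simp)]; simpa using hq
  have hsq : ∀ z : ℝ≥0∞, (z ^ (1 / 2 : ℝ)) ^ 2 = z := fun z => by
    rw [← ENNReal.rpow_two, ← ENNReal.rpow_mul]; norm_num
  have hmain : eLpNorm (fun x => (∑' j, (∑' i, M i j x) ^ 2) ^ (1 / 2 : ℝ)) q μ ^ 2 ≤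
      (S * (∑' i, a i ^ 2) ^ (1 / 2 : ℝ)) ^ 2 := by
    rw [← eLpNorm_sq_eq]
    simp only [hsq, mul_pow]
    have hmm : ∀ i j, Measurable fun x => S * (c (i + j))⁻¹ * M i j x ^ 2 := fun i j =>
      ((hM i j).pow_const 2).const_mul _
    calc eLpNorm (fun x => ∑' j, (∑' i, M i j x) ^ 2) (q / 2) μ
        ≤ eLpNorm (fun x => ∑' j, ∑' i, S * (c (i + j))⁻¹ * M i j x ^ 2) (q / 2) μ :=
          eLpNorm_mono_enorm fun x => hpt x
      _ ≤ ∑' j, eLpNorm (fun x => ∑' i, S * (c (i + j))⁻¹ * M i j x ^ 2) (q / 2) μ :=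
          eLpNorm_tsum_le (fun j => Measurable.tsum fun i => hmm i j) hq1
      _ ≤ ∑' j, ∑' i, eLpNorm (fun x => S * (c (i + j))⁻¹ * M i j x ^ 2) (q / 2) μ :=
          ENNReal.tsum_le_tsum fun j => eLpNorm_tsum_le (fun i => hmm i j) hq1
      _ ≤ ∑' j, ∑' i, S * c (i + j) * a i ^ 2 := by
          refine ENNReal.tsum_le_tsum fun j => ENNReal.tsum_le_tsum fun i => ?_
          have hinv : (c (i + j))⁻¹ ≠ ∞ := ENNReal.inv_ne_top.2 (hc0 _)
          refine (eLpNorm_const_mul_le (ENNReal.mul_ne_top hSt hinv) _).trans ?_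
          rw [eLpNorm_sq_eq]
          calc S * (c (i + j))⁻¹ * eLpNorm (M i j) q μ ^ 2
              ≤ S * (c (i + j))⁻¹ * (c (i + j) * a i) ^ 2 := by gcongr; exact h i j
            _ = S * ((c (i + j))⁻¹ * c (i + j)) * c (i + j) * a i ^ 2 := by ring
            _ = _ := by rw [ENNReal.inv_mul_cancel (hc0 _) (hct _), mul_one]
      _ = ∑' i, ∑' j, S * c (i + j) * a i ^ 2 := ENNReal.tsum_comm
      _ = S ^ 2 * ∑' i, a i ^ 2 := by
          rw [← ENNReal.tsum_mul_left]
          congr 1; ext i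
          rw [ENNReal.tsum_mul_right, ENNReal.tsum_mul_left, hSi, ← sq]
  exact (ENNReal.pow_le_pow_left_iff two_ne_zero).1 hmain

end Lp

section Polar

variable {n : ℕ}

theorem homeomorphUnitSphereProd_smul (x : ({0}ᶜ : Set (EuclideanSpace ℝ (Fin n)))) :
    ((homeomorphUnitSphereProd (EuclideanSpace ℝ (Fin n)) x).2 : ℝ) •
      ((homeomorphUnitSphereProd (EuclideanSpace ℝ (Fin n)) x).1 : EuclideanSpace ℝ (Fin n))
      = x := by
  have hx : ‖(x : EuclideanSpace ℝ (Fin n))‖ ≠ 0 := norm_ne_zero_iff.2 x.2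
  simp [smul_smul, hx]

/-- Polar coordinates for functions of the norm. -/
theorem lintegral_fun_norm (hn : 0 < n) {f : ℝ → ℝ≥0∞} (hf : Measurable f) :
    ∫⁻ x : EuclideanSpace ℝ (Fin n), f ‖x‖ =
      (volume : Measure (EuclideanSpace ℝ (Fin n))).toSphere Set.univ *
        ∫⁻ ρ in Set.Ioi (0 : ℝ), ENNReal.ofReal (ρ ^ (n - 1)) * f ρ := by
  have : Nonempty (Fin n) := ⟨⟨0, hn⟩⟩
  have h0 : ∫⁻ x : EuclideanSpace ℝ (Fin n), f ‖x‖ =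
      ∫⁻ x : ({0}ᶜ : Set (EuclideanSpace ℝ (Fin n))), f ‖(x : EuclideanSpace ℝ (Fin n))‖
        ∂((volume : Measure (EuclideanSpace ℝ (Fin n))).comap Subtype.val) := by
    rw [lintegral_subtype_comap (measurableSet_singleton _).compl
      (fun x : EuclideanSpace ℝ (Fin n) => f ‖x‖), restrict_compl_singleton]
  have h1 := (volume : Measure (EuclideanSpace ℝ
    (Fin n))).measurePreserving_homeomorphUnitSphereProd.lintegral_comp_emb
    (Homeomorph.measurableEmbedding _) (fun p => f (p.2 : ℝ))
  simp only [homeomorphUnitSphereProd_apply_snd_coe] at h1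
  rw [h0, h1, lintegral_prod_symm' _ (by fun_prop)]
  simp only [lintegral_const]
  rw [lintegral_mul_const _ (by fun_prop), mul_comm, Measure.volumeIoiPow,
    lintegral_withDensity_eq_lintegral_mul _ (by fun_prop) (by fun_prop)]
  congr 1
  rw [finrank_euclideanSpace_fin]
  exact lintegral_subtype_comap measurableSet_Ioi
    (fun ρ : ℝ => ENNReal.ofReal (ρ ^ (n - 1)) * f ρ)

/-- The radial amplitude `ρ ^ (n-1) G(ρ)` on the half line. -/
noncomputable def radAmp (n : ℕ) (G : ℝ → ℂ) (ρ : ℝ) : ℂ :=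
  (Set.Ioi (0 : ℝ)).indicator (fun ρ => ((ρ ^ (n - 1) : ℝ) : ℂ) * G ρ) ρ

theorem integrable_radAmp (hn : 0 < n) {G : ℝ → ℂ}
    (hi : Integrable fun ξ : EuclideanSpace ℝ (Fin n) => G ‖ξ‖) : Integrable (radAmp n G) := by
  have : Nonempty (Fin n) := ⟨⟨0, hn⟩⟩
  have := (integrable_fun_norm_addHaar (volume : Measure (EuclideanSpace ℝ (Fin n)))).1 hi
  rw [finrank_euclideanSpace_fin] at this
  exact (integrable_indicator_iff measurableSet_Ioi).2 this

/-- The half-wave with radial data as a one-dimensional oscillatory integral. -/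
theorem integral_radial_wave (i : Fin n) {G : ℝ → ℂ} (hG : Measurable G)
    (hi : Integrable fun ξ : EuclideanSpace ℝ (Fin n) => G ‖ξ‖) (ε t : ℝ)
    (x : EuclideanSpace ℝ (Fin n)) :
    ∫ ξ : EuclideanSpace ℝ (Fin n),
        Complex.exp (2 * π * ⟪x, ξ⟫ * Complex.I) * (phase ε t ‖ξ‖ * G ‖ξ‖) =
      waveInt ε (radAmp n G) (fun ρ R => sphKer i (ρ * R)) t ‖x‖ := by
  have : Nonempty (Fin n) := ⟨i⟩
  set F : EuclideanSpace ℝ (Fin n) → ℂ := fun ξ =>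
    Complex.exp (2 * π * ⟪x, ξ⟫ * Complex.I) * (phase ε t ‖ξ‖ * G ‖ξ‖) with hF
  have hph : Measurable fun ρ => phase ε t ρ :=
    (continuous_slice_right (continuous_phase ε) t).measurable
  have hFi : Integrable F := by
    refine hi.norm.mono' (by fun_prop) (Filter.Eventually.of_forall fun ξ => ?_)
    have := Complex.norm_exp_ofReal_mul_I (2 * π * ⟪x, ξ⟫)
    push_cast at this
    rw [hF, norm_mul, norm_mul, norm_phase, this, one_mul, one_mul]
  have hmp := (volume : Measure (EuclideanSpace ℝ
    (Fin n))).measurePreserving_homeomorphUnitSphereProd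
  have h0 : ∫ ξ, F ξ = ∫ ξ : ({0}ᶜ : Set (EuclideanSpace ℝ (Fin n))), F ξ
        ∂((volume : Measure (EuclideanSpace ℝ (Fin n))).comap Subtype.val) := by
    rw [integral_subtype_comap (measurableSet_singleton _).compl F, restrict_compl_singleton]
  have hFi' : Integrable (fun ξ : ({0}ᶜ : Set (EuclideanSpace ℝ (Fin n))) => F ξ)
      ((volume : Measure (EuclideanSpace ℝ (Fin n))).comap Subtype.val) := by
    have : IntegrableOn F {0}ᶜ := hFi.integrableOn
    rwa [integrableOn_iff_comap_subtypeVal (measurableSet_singleton _).compl] at this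
  set g : Metric.sphere (0 : EuclideanSpace ℝ (Fin n)) 1 × Set.Ioi (0 : ℝ) → ℂ := fun p =>
    F ((p.2 : ℝ) • (p.1 : EuclideanSpace ℝ (Fin n))) with hg
  have hgF : ∀ ξ : ({0}ᶜ : Set (EuclideanSpace ℝ (Fin n))),
      g (homeomorphUnitSphereProd (EuclideanSpace ℝ (Fin n)) ξ) = F ξ := fun ξ => by
    rw [hg]; beta_reduce; rw [homeomorphUnitSphereProd_smul]
  have h1 := hmp.integral_comp (Homeomorph.measurableEmbedding _) g
  have h2 : Integrable g (volume.toSphere.prod (Measure.volumeIoiPow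
      (Module.finrank ℝ (EuclideanSpace ℝ (Fin n)) - 1))) := by
    rw [← hmp.integrable_comp_emb (Homeomorph.measurableEmbedding _)]
    exact hFi'.congr (Filter.Eventually.of_forall fun ξ => (hgF ξ).symm)
  simp_rw [hgF] at h1
  rw [h0, h1, integral_prod_symm _ h2]
  have h3 : ∀ ρ : Set.Ioi (0 : ℝ), ∫ ω, g (ω, ρ) ∂volume.toSphere =
      phase ε t ρ * (G ρ * sphKer i (ρ * ‖x‖)) := by
    intro ρ
    have hρ : (0 : ℝ) < ρ := ρ.2
    have h4 : ∀ ω : Metric.sphere (0 : EuclideanSpace ℝ (Fin n)) 1, g (ω, ρ) =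
        Complex.exp (2 * π * ⟪(ρ : ℝ) • x, (ω : EuclideanSpace ℝ (Fin n))⟫ * Complex.I) *
          (phase ε t ρ * G ρ) := by
      intro ω
      simp only [hg, hF, norm_smul, norm_eq_of_mem_sphere, mul_one, Real.norm_of_nonneg hρ.le,
        inner_smul_right, inner_smul_left]
      simp
    simp_rw [h4]
    rw [integral_mul_const, integral_sphere_exp i, norm_smul, Real.norm_of_nonneg hρ.le]
    ring
  simp_rw [h3]
  rw [Measure.volumeIoiPow, finrank_euclideanSpace_fin]
  simp only [ENNReal.ofReal]
  rw [integral_withDensity_eq_integral_smul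
    ((measurable_subtype_coe.pow_const _).real_toNNReal),
    integral_subtype_comap measurableSet_Ioi fun a : ℝ => Real.toNNReal (a ^ (n - 1)) •
      (phase ε t a * (G a * sphKer i (a * ‖x‖))), waveInt, ← integral_indicator measurableSet_Ioi]
  refine integral_congr_ae (Filter.Eventually.of_forall fun ρ => ?_)
  by_cases hρ : ρ ∈ Set.Ioi (0 : ℝ)
  · simp only [radAmp, Set.indicator_of_mem hρ]
    rw [NNReal.smul_def, Real.coe_toNNReal _ (pow_nonneg (le_of_lt hρ) _), Complex.real_smul]
    ring
  · simp [radAmp, Set.indicator_of_notMem hρ]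

end Polar

section Blocks

/-- The dyadic interval `[2^i, 2^(i+1))`. -/
def shell (i : ℤ) : Set ℝ := Set.Ico ((2 : ℝ) ^ i) (2 ^ (i + 1))

/-- The restriction of `H` to a dyadic interval. -/
noncomputable def block (H : ℝ → ℂ) (i : ℤ) : ℝ → ℂ := (shell i).indicator H

/-- The `L²` norm of a dyadic block. -/
noncomputable def blockMass (H : ℝ → ℂ) (i : ℤ) : ℝ≥0∞ :=
  (∫⁻ ρ, ‖block H i ρ‖ₑ ^ 2) ^ (1 / 2 : ℝ)

variable {H : ℝ → ℂ}

theorem measurableSet_shell (i : ℤ) : MeasurableSet (shell i) := measurableSet_Ico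

theorem mem_shell_of_block_ne_zero {i : ℤ} {ρ : ℝ} (h : block H i ρ ≠ 0) : ρ ∈ shell i :=
  Set.mem_of_indicator_ne_zero h

theorem volume_shell (i : ℤ) : volume (shell i) = 2 ^ (i : ℝ) := by
  rw [shell, Real.volume_Ico, zpow_add_one₀ two_ne_zero, ← Real.rpow_intCast]
  rw [show (2 : ℝ) ^ (i : ℝ) * 2 - 2 ^ (i : ℝ) = 2 ^ (i : ℝ) by ring,
    ← ENNReal.ofReal_rpow_of_pos two_pos, ENNReal.ofReal_ofNat]

theorem ofReal_two_rpow (x : ℝ) : ENNReal.ofReal ((2 : ℝ) ^ x) = 2 ^ x := by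
  rw [← ENNReal.ofReal_rpow_of_pos two_pos, ENNReal.ofReal_ofNat]

theorem sq_rpow_half (x : ℝ≥0∞) : (x ^ 2) ^ (1 / 2 : ℝ) = x := by
  rw [← ENNReal.rpow_natCast, ← ENNReal.rpow_mul]; norm_num

theorem rpow_half_sq (x : ℝ≥0∞) : (x ^ (1 / 2 : ℝ)) ^ 2 = x := by
  rw [← ENNReal.rpow_natCast, ← ENNReal.rpow_mul]; norm_num

theorem two_rpow_sq (x : ℝ) : ((2 : ℝ≥0∞) ^ x) ^ 2 = 2 ^ (2 * x) := by
  rw [← ENNReal.rpow_natCast, ← ENNReal.rpow_mul]; norm_num [mul_comm]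

theorem lintegral_block_sq (H : ℝ → ℂ) (i : ℤ) :
    ∫⁻ ρ, ‖block H i ρ‖ₑ ^ 2 = blockMass H i ^ 2 := (rpow_half_sq _).symm

theorem integrable_block (hH : Integrable H) (i : ℤ) : Integrable (block H i) :=
  hH.indicator (measurableSet_shell i)

theorem lintegral_block_le (hH : Integrable H) (i : ℤ) :
    ∫⁻ ρ, ‖block H i ρ‖ₑ ≤ 2 ^ ((i : ℝ) / 2) * blockMass H i := by
  have h := eLpNorm_le_eLpNorm_mul_rpow_measure_univ (p := 1) (q := 2)
    (μ := volume.restrict (shell i)) (f := block H i) one_le_two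
    (integrable_block hH i).aestronglyMeasurable.restrict
  rw [eLpNorm_one_eq_lintegral_enorm, Measure.restrict_apply_univ, volume_shell] at h
  have e1 : ∫⁻ ρ in shell i, ‖block H i ρ‖ₑ = ∫⁻ ρ, ‖block H i ρ‖ₑ := by
    refine setLIntegral_eq_of_support_subset fun ρ hρ => ?_
    exact mem_shell_of_block_ne_zero (H := H) (by simpa using hρ)
  have e2 : eLpNorm (block H i) 2 (volume.restrict (shell i)) ≤ blockMass H i := by
    refine (eLpNorm_mono_measure _ Measure.restrict_le_self).trans_eq ?_
    rw [blockMass, lintegral_enorm_sq_eq, sq_rpow_half]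
  rw [e1] at h
  refine h.trans ?_
  rw [mul_comm]
  have e3 : ((2 : ℝ≥0∞) ^ (i : ℝ)) ^ (1 / (1 : ℝ≥0∞).toReal - 1 / (2 : ℝ≥0∞).toReal) =
      2 ^ ((i : ℝ) / 2) := by
    rw [← ENNReal.rpow_mul]; congr 1; norm_num; ring
  rw [e3]
  gcongr

variable {ε : ℝ} {K K' : ℝ → ℝ → ℝ}

/-- Uniform-in-`R` control of a frequency-localized oscillatory integral. -/
theorem exists_sup_block (hε : ε = 1 ∨ ε = -1) (hH : Integrable H) (i : ℤ)
    (hKc : Continuous fun p : ℝ × ℝ => K p.1 p.2)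
    (hKc' : Continuous fun p : ℝ × ℝ => K' p.1 p.2)
    (hd : ∀ ρ R, HasDerivAt (K ρ) (K' ρ R) R) {B : ℝ}
    (hK : ∀ ρ ∈ shell i, ∀ R, |K ρ R| ≤ B) (hK' : ∀ ρ ∈ shell i, ∀ R, |K' ρ R| ≤ B)
    {a b κ κ' L : ℝ} (hab : a < b)
    (hκ : ∀ ρ ∈ shell i, ∀ R ∈ Set.Icc a b, |K ρ R| ≤ κ)
    (hκ' : ∀ ρ ∈ shell i, ∀ R ∈ Set.Icc a b, |K' ρ R| ≤ 2 ^ (i : ℝ) * κ')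
    (hL0 : 0 ≤ L)
    (hL : (1 + 2 ^ (i : ℝ) * (b - a)) * κ ^ 2 + 2 ^ (i : ℝ) * (b - a) * κ' ^ 2 ≤ L ^ 2) :
    ∃ Y : ℝ → ℝ≥0∞, Measurable Y ∧
      (∀ t, ∀ R ∈ Set.Icc a b, ‖waveInt ε (block H i) K t R‖ₑ ≤ Y t) ∧
      (∀ t, Y t ≤ ENNReal.ofReal κ * 2 ^ ((i : ℝ) / 2) * blockMass H i) ∧
      ∫⁻ t, Y t ^ 2 ≤ (ENNReal.ofReal L * blockMass H i) ^ 2 := by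
  have hμ : (0 : ℝ) < 2 ^ (i : ℝ) := Real.rpow_pos_of_pos two_pos _
  have hκ1 : ∀ ρ, ∀ R ∈ Set.Icc a b, block H i ρ ≠ 0 → |K ρ R| ≤ κ := fun ρ R hR h =>
    hκ ρ (mem_shell_of_block_ne_zero h) R hR
  obtain ⟨Z, hZ, hZs, hZi⟩ := exists_sup_waveInt_sq hε (integrable_block hH i) hKc hKc' hd
    (B := B) (fun ρ R _ h => hK ρ (mem_shell_of_block_ne_zero h) R)
    (fun ρ R _ h => hK' ρ (mem_shell_of_block_ne_zero h) R) hab hμ hκ1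
    (fun ρ R hR h => hκ' ρ (mem_shell_of_block_ne_zero h) R hR)
  refine ⟨fun t => min (Z t ^ (1 / 2 : ℝ)) (ENNReal.ofReal κ * 2 ^ ((i : ℝ) / 2) * blockMass H i),
    (hZ.pow_const _).min measurable_const, fun t R hR => le_min ?_ ?_, fun t => min_le_right _ _, ?_⟩
  · rw [← sq_rpow_half ‖_‖ₑ]
    exact ENNReal.rpow_le_rpow (hZs t R hR) (by norm_num)
  · refine (enorm_waveInt_le hκ1 t hR).trans ?_
    rw [mul_assoc]
    gcongr
    exact lintegral_block_le hH i
  · calc _ ≤ ∫⁻ t, Z t := lintegral_mono fun t => by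
          refine (pow_le_pow_left' (min_le_left _ _) 2).trans_eq (rpow_half_sq _)
      _ ≤ _ := hZi.trans ?_
    rw [lintegral_block_sq, mul_pow (ENNReal.ofReal L), ← ENNReal.ofReal_pow hL0]
    gcongr
    refine le_trans (le_of_eq ?_) hL
    field_simp

end Blocks

section SupBlocks

theorem mem_shell_iff {i : ℤ} {ρ : ℝ} :
    ρ ∈ shell i ↔ (2 : ℝ) ^ (i : ℝ) ≤ ρ ∧ ρ < 2 * 2 ^ (i : ℝ) := by
  rw [shell, Set.mem_Ico, zpow_add_one₀ two_ne_zero, Real.rpow_intCast, mul_comm]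

theorem pos_of_mem_shell {i : ℤ} {ρ : ℝ} (h : ρ ∈ shell i) : 0 < ρ :=
  (Real.rpow_pos_of_pos two_pos _).trans_le (mem_shell_iff.1 h).1

theorem abs_le_of_decay {D : ℝ → ℝ} {C m : ℝ} (hC : 0 ≤ C) (hm : 0 ≤ m) (hb : ∀ y, |D y| ≤ C)
    (hd : ∀ y, 1 ≤ y → |D y| ≤ C * y ^ (-m)) {i j : ℤ} {ρ R : ℝ} (hρ : ρ ∈ shell i)
    (hR : (2 : ℝ) ^ (j : ℝ) ≤ R) :
    |D (ρ * R)| ≤ C * 2 ^ (-(max ((i : ℝ) + j) 0 * m)) := by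
  have hy : (2 : ℝ) ^ ((i : ℝ) + j) ≤ ρ * R := by
    rw [Real.rpow_add two_pos]
    exact mul_le_mul (mem_shell_iff.1 hρ).1 hR (by positivity) (pos_of_mem_shell hρ).le
  rcases le_total ((i : ℝ) + j) 0 with h | h
  · rw [max_eq_right h]; simpa using hb _
  · rw [max_eq_left h]
    have h1 : (1 : ℝ) ≤ 2 ^ ((i : ℝ) + j) := Real.one_le_rpow one_le_two h
    refine (hd _ (h1.trans hy)).trans (mul_le_mul_of_nonneg_left ?_ hC)
    rw [← mul_neg, Real.rpow_mul zero_le_two]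
    exact Real.rpow_le_rpow_of_nonpos (by positivity) hy (by linarith)

variable {n : ℕ} {ε : ℝ}

/-- The kernel of the radial half-wave as a function of frequency and radius. -/
noncomputable def radKer (i : Fin n) (ρ R : ℝ) : ℝ := sphKer i (ρ * R)

/-- The radial derivative of `radKer`. -/
noncomputable def radKerDeriv (i : Fin n) (ρ R : ℝ) : ℝ := ρ * sphKerDeriv i (ρ * R)

theorem continuous_radKer (i : Fin n) : Continuous fun p : ℝ × ℝ => radKer i p.1 p.2 :=
  (continuous_sphKer i).comp (continuous_fst.mul continuous_snd)

theorem continuous_radKerDeriv (i : Fin n) : Continuous fun p : ℝ × ℝ => radKerDeriv i p.1 p.2 :=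
  continuous_fst.mul ((continuous_sphKerDeriv i).comp (continuous_fst.mul continuous_snd))

theorem hasDerivAt_radKer (i : Fin n) (ρ R : ℝ) :
    HasDerivAt (radKer i ρ) (radKerDeriv i ρ R) R := by
  have h := HasDerivAt.comp R (hasDerivAt_sphKer i (ρ * R)) (hasDerivAt_const_mul ρ)
  rw [radKerDeriv, mul_comm]
  exact h

theorem abs_radKerDeriv_le {i₀ : Fin n} {i : ℤ} {ρ R A : ℝ} (hρ : ρ ∈ shell i)
    (h : |sphKerDeriv i₀ (ρ * R)| ≤ A) : |radKerDeriv i₀ ρ R| ≤ 2 ^ (i : ℝ) * (2 * A) := by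
  have h0 := pos_of_mem_shell hρ
  rw [radKerDeriv, abs_mul, abs_of_pos h0, ← mul_assoc]
  exact mul_le_mul (by linarith [(mem_shell_iff.1 hρ).2]) h (abs_nonneg _) (by positivity)

theorem exists_sup_block_annulus (hε : ε = 1 ∨ ε = -1) (i₀ : Fin n) :
    ∃ c : ℝ, 0 ≤ c ∧ ∀ H : ℝ → ℂ, Integrable H → ∀ i j : ℤ,
      ∃ Y : ℝ → ℝ≥0∞, Measurable Y ∧
        (∀ t, ∀ R ∈ Set.Icc ((2 : ℝ) ^ (j : ℝ)) (2 * 2 ^ (j : ℝ)),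
          ‖waveInt ε (block H i) (radKer i₀) t R‖ₑ ≤ Y t) ∧
        (∀ t, Y t ≤ ENNReal.ofReal c *
          2 ^ ((i : ℝ) / 2 - max ((i : ℝ) + j) 0 * (((n : ℝ) - 1) / 2)) * blockMass H i) ∧
        ∫⁻ t, Y t ^ 2 ≤ (ENNReal.ofReal c *
          2 ^ (max ((i : ℝ) + j) 0 / 2 - max ((i : ℝ) + j) 0 * (((n : ℝ) - 1) / 2)) *
            blockMass H i) ^ 2 := by
  obtain ⟨C, hC, hb, hb', -, hd, hd'⟩ := exists_sphKer_bound i₀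
  have hn : (1 : ℝ) ≤ n := by exact_mod_cast i₀.pos
  refine ⟨3 * C, by positivity, fun H hH i j => ?_⟩
  set k := max ((i : ℝ) + j) 0 with hk
  set m := ((n : ℝ) - 1) / 2 with hm
  have hm0 : 0 ≤ m := by rw [hm]; linarith
  have hk0 : 0 ≤ k := le_max_right _ _
  set κ := C * 2 ^ (-(k * m)) with hκ
  have hκ0 : 0 ≤ κ := by positivity
  have h2j : (0 : ℝ) < 2 ^ (j : ℝ) := by positivity
  obtain ⟨Y, hY, hs, hi, h2⟩ := exists_sup_block (ε := ε) hε hH i (continuous_radKer i₀)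
    (continuous_radKerDeriv i₀) (hasDerivAt_radKer i₀) (B := C + 2 ^ (i : ℝ) * (2 * C))
    (a := 2 ^ (j : ℝ)) (b := 2 * 2 ^ (j : ℝ)) (κ := κ) (κ' := 2 * κ)
    (L := 3 * 2 ^ (k / 2) * κ)
    (fun ρ _ R => (hb _).trans (by simp; positivity))
    (fun ρ hρ R => (abs_radKerDeriv_le hρ (hb' _)).trans (by simpa using hC))
    (by linarith) (fun ρ hρ R hR => abs_le_of_decay hC hm0 hb hd hρ hR.1)
    (fun ρ hρ R hR => abs_radKerDeriv_le hρ (abs_le_of_decay hC hm0 hb' hd' hρ hR.1))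
    (by positivity) (by
      have e1 : (2 : ℝ) ^ (i : ℝ) * (2 * 2 ^ (j : ℝ) - 2 ^ (j : ℝ)) = 2 ^ ((i : ℝ) + j) := by
        rw [Real.rpow_add two_pos]; ring
      have e2 : (2 : ℝ) ^ ((i : ℝ) + j) ≤ 2 ^ k :=
        Real.rpow_le_rpow_of_exponent_le one_le_two (le_max_left _ _)
      have e3 : (1 : ℝ) ≤ 2 ^ k := Real.one_le_rpow one_le_two hk0
      have e4 : ((2 : ℝ) ^ (k / 2)) ^ 2 = 2 ^ k := by
        rw [← Real.rpow_natCast, ← Real.rpow_mul zero_le_two]; congr 1; push_cast; ring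
      have e5 := mul_le_mul_of_nonneg_right e2 (sq_nonneg κ)
      have e6 := mul_le_mul_of_nonneg_right e3 (sq_nonneg κ)
      rw [e1, show (3 * (2 : ℝ) ^ (k / 2) * κ) ^ 2 = 9 * (((2 : ℝ) ^ (k / 2)) ^ 2 * κ ^ 2) by ring,
        e4]
      nlinarith)
  refine ⟨Y, hY, hs, fun t => (hi t).trans ?_, h2.trans ?_⟩
  · refine mul_le_mul_left ?_ _
    rw [hκ, ENNReal.ofReal_mul hC, ofReal_two_rpow, mul_assoc, ← ENNReal.rpow_add _ _ two_ne_zero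
      ofNat_ne_top, neg_add_eq_sub]
    gcongr
    linarith
  · gcongr
    rw [hκ, show 3 * (2 : ℝ) ^ (k / 2) * (C * 2 ^ (-(k * m))) =
      3 * C * (2 ^ (k / 2) * 2 ^ (-(k * m))) by ring, ← Real.rpow_add two_pos,
      ENNReal.ofReal_mul (by positivity), ofReal_two_rpow, sub_eq_add_neg]

/-- Control of a dyadic block in the region below its own scale. -/
theorem exists_sup_block_core (hε : ε = 1 ∨ ε = -1) (i₀ : Fin n) :
    ∃ c : ℝ, 0 ≤ c ∧ ∀ H : ℝ → ℂ, Integrable H → ∀ i : ℤ,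
      ∃ Y : ℝ → ℝ≥0∞, Measurable Y ∧
        (∀ t, ∀ R ∈ Set.Icc (0 : ℝ) (2 ^ (-(i : ℝ))),
          ‖waveInt ε (block H i) (radKer i₀) t R‖ₑ ≤ Y t) ∧
        (∀ t, Y t ≤ ENNReal.ofReal c * 2 ^ ((i : ℝ) / 2) * blockMass H i) ∧
        ∫⁻ t, Y t ^ 2 ≤ (ENNReal.ofReal c * blockMass H i) ^ 2 := by
  obtain ⟨C, hC, hb, hb', -, -, -⟩ := exists_sphKer_bound i₀
  refine ⟨3 * C, by positivity, fun H hH i => ?_⟩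
  obtain ⟨Y, hY, hs, hi, h2⟩ := exists_sup_block (ε := ε) hε hH i (continuous_radKer i₀)
    (continuous_radKerDeriv i₀) (hasDerivAt_radKer i₀) (B := C + 2 ^ (i : ℝ) * (2 * C))
    (a := 0) (b := 2 ^ (-(i : ℝ))) (κ := C) (κ' := 2 * C) (L := 3 * C)
    (fun ρ _ R => (hb _).trans (by simp; positivity))
    (fun ρ hρ R => (abs_radKerDeriv_le hρ (hb' _)).trans (by simpa using hC))
    (by positivity) (fun ρ hρ R hR => hb _)
    (fun ρ hρ R hR => abs_radKerDeriv_le hρ (hb' _))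
    (by positivity) (by
      rw [_root_.sub_zero, ← Real.rpow_add two_pos, add_neg_cancel, Real.rpow_zero]
      nlinarith [sq_nonneg C])
  refine ⟨Y, hY, hs, fun t => (hi t).trans ?_, h2⟩
  gcongr
  linarith

end SupBlocks

section SquareBlocks

variable {n : ℕ} {ε : ℝ}

/-- Plancherel in the space variable for the half-wave propagator. -/
theorem lintegral_wave_sq_le {g : EuclideanSpace ℝ (Fin n) → ℂ} (hg : Integrable g) (ε t : ℝ) :
    ∫⁻ x, ‖∫ ξ : EuclideanSpace ℝ (Fin n),
        Complex.exp (2 * π * ⟪x, ξ⟫ * Complex.I) * (phase ε t ‖ξ‖ * g ξ)‖ₑ ^ 2 ≤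
      ∫⁻ ξ, ‖g ξ‖ₑ ^ 2 := by
  have hph : Continuous fun ξ : EuclideanSpace ℝ (Fin n) => phase ε t ‖ξ‖ :=
    (continuous_slice_right (continuous_phase ε) t).comp continuous_norm
  have hu : Integrable fun ξ : EuclideanSpace ℝ (Fin n) => phase ε t ‖ξ‖ * g ξ :=
    hg.norm.mono' (hph.aestronglyMeasurable.mul hg.aestronglyMeasurable)
      (Filter.Eventually.of_forall fun ξ => by rw [norm_mul, norm_phase, one_mul])
  have key : ∀ x, ∫ ξ : EuclideanSpace ℝ (Fin n),
      Complex.exp (2 * π * ⟪x, ξ⟫ * Complex.I) * (phase ε t ‖ξ‖ * g ξ) =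
      𝓕 (fun ξ : EuclideanSpace ℝ (Fin n) => phase ε t ‖ξ‖ * g ξ) (-x) := by
    intro x
    rw [Real.fourier_eq']
    refine integral_congr_ae (Filter.Eventually.of_forall fun ρ => ?_)
    simp only [smul_eq_mul, inner_neg_right, real_inner_comm x]
    congr 2
    push_cast
    ring
  simp_rw [key]
  rw [lintegral_neg_eq_self (μ := volume) (fun x : EuclideanSpace ℝ (Fin n) =>
    ‖𝓕 (fun ξ : EuclideanSpace ℝ (Fin n) => phase ε t ‖ξ‖ * g ξ) x‖ₑ ^ 2),
    lintegral_enorm_sq_eq]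
  refine (pow_le_pow_left' (eLpNorm_fourier_le hu) 2).trans_eq ?_
  rw [← lintegral_enorm_sq_eq]
  refine lintegral_congr fun ξ => ?_
  rw [enorm_mul, ← ofReal_norm (phase _ _ _), norm_phase, ENNReal.ofReal_one, one_mul]

theorem exists_volume_annulus_le (n : ℕ) : ∃ c : ℝ≥0∞, c ≠ ∞ ∧ ∀ j : ℤ,
    volume ((fun x : EuclideanSpace ℝ (Fin n) => ‖x‖) ⁻¹' shell j) ≤ c * 2 ^ ((j : ℝ) * n) := by
  refine ⟨ENNReal.ofReal (2 ^ n) * volume (Metric.ball (0 : EuclideanSpace ℝ (Fin n)) 1),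
    ENNReal.mul_ne_top ENNReal.ofReal_ne_top measure_ball_lt_top.ne, fun j => ?_⟩
  have hsub : (fun x : EuclideanSpace ℝ (Fin n) => ‖x‖) ⁻¹' shell j ⊆
      Metric.ball 0 (2 * 2 ^ (j : ℝ)) := fun x hx => by
    rw [mem_ball_zero_iff]
    exact (mem_shell_iff.1 hx).2
  refine (measure_mono hsub).trans_eq ?_
  have hr : (0 : ℝ) < 2 * 2 ^ (j : ℝ) := by positivity
  rw [Measure.addHaar_ball_of_pos _ _ hr, finrank_euclideanSpace_fin, mul_pow,
    ENNReal.ofReal_mul (by positivity), ← Real.rpow_natCast (2 ^ (j : ℝ)),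
    ← Real.rpow_mul zero_le_two, ofReal_two_rpow]
  ring

theorem block_radAmp (n : ℕ) (G : ℝ → ℂ) (i : ℤ) :
    block (radAmp n G) i = radAmp n (block G i) := by
  funext ρ
  by_cases h : ρ ∈ shell i
  · simp only [block, radAmp, Set.indicator_of_mem h,
      Set.indicator_of_mem (Set.mem_Ioi.2 (pos_of_mem_shell h))]
  · simp only [block, radAmp, Set.indicator_of_notMem h, Set.indicator_apply, mul_zero, ite_self]

theorem lintegral_block_norm_sq_le (hn : 0 < n) {G : ℝ → ℂ} (hG : Measurable G) (i : ℤ) :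
    ∫⁻ ξ : EuclideanSpace ℝ (Fin n), ‖block G i ‖ξ‖‖ₑ ^ 2 ≤
      (volume : Measure (EuclideanSpace ℝ (Fin n))).toSphere Set.univ *
        (2 ^ (-((i : ℝ) * ((n : ℝ) - 1))) * blockMass (radAmp n G) i ^ 2) := by
  have hb : Measurable (block G i) := hG.indicator (measurableSet_shell i)
  rw [lintegral_fun_norm hn (f := fun ρ => ‖block G i ρ‖ₑ ^ 2) (by fun_prop)]
  gcongr
  rw [← lintegral_block_sq, ← lintegral_const_mul' _ _
    (ENNReal.rpow_ne_top_of_ne_zero two_ne_zero ofNat_ne_top), ← lintegral_indicator measurableSet_Ioi]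
  refine lintegral_mono fun ρ => ?_
  by_cases h : ρ ∈ shell i
  swap
  · simp [block, h]
  have h0 := pos_of_mem_shell h
  have h1 := (mem_shell_iff.1 h).1
  rw [Set.indicator_of_mem (Set.mem_Ioi.2 h0), block, block, Set.indicator_of_mem h,
    Set.indicator_of_mem h, radAmp, Set.indicator_of_mem (Set.mem_Ioi.2 h0), enorm_mul, mul_pow,
    ← mul_assoc]
  gcongr
  rw [← ofReal_norm, Complex.norm_real, Real.norm_of_nonneg (by positivity),
    ← ENNReal.ofReal_pow (by positivity), ← ofReal_two_rpow, ← ENNReal.ofReal_mul (by positivity)]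
  refine ENNReal.ofReal_le_ofReal ?_
  have h2 : ((2 : ℝ) ^ (i : ℝ)) ^ (n - 1) ≤ ρ ^ (n - 1) := by gcongr
  have h3 : (2 : ℝ) ^ (-((i : ℝ) * ((n : ℝ) - 1))) = (((2 : ℝ) ^ (i : ℝ)) ^ (n - 1))⁻¹ := by
    rw [Real.rpow_neg zero_le_two, ← Real.rpow_natCast (2 ^ (i : ℝ)), ← Real.rpow_mul zero_le_two,
      Nat.cast_sub hn]
    simp
  rw [h3, sq, ← mul_assoc]
  refine le_mul_of_one_le_left (by positivity) ?_
  rw [inv_mul_eq_div, one_le_div (by positivity)]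
  exact h2

/-- Space-time `L²` control of a dyadic block on a dyadic annulus. -/
theorem exists_square_block (hn : 0 < n) (hε : ε = 1 ∨ ε = -1) (i₀ : Fin n) :
    ∃ c : ℝ≥0∞, c ≠ ∞ ∧ ∀ G : ℝ → ℂ, Measurable G →
      (Integrable fun ξ : EuclideanSpace ℝ (Fin n) => G ‖ξ‖) → ∀ i j : ℤ,
      ∃ X : ℝ → ℝ≥0∞, Measurable X ∧
        (∀ t, ∫⁻ x in (fun x : EuclideanSpace ℝ (Fin n) => ‖x‖) ⁻¹' shell j,
          ‖waveInt ε (block (radAmp n G) i) (radKer i₀) t ‖x‖‖ₑ ^ 2 ≤ X t ^ 2) ∧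
        (∀ t, X t ≤ c * 2 ^ (-((i : ℝ) * (((n : ℝ) - 1) / 2)) + min ((i : ℝ) + j) 0 * (n / 2)) *
          blockMass (radAmp n G) i) ∧
        ∫⁻ t, X t ^ 2 ≤ (c * 2 ^ (-((i : ℝ) * (n / 2)) + max ((i : ℝ) + j) 0 / 2 +
          min ((i : ℝ) + j) 0 * (n / 2)) * blockMass (radAmp n G) i) ^ 2 := by
  obtain ⟨C, hC, hb, hb', -, hd, -⟩ := exists_sphKer_bound i₀
  obtain ⟨c₀, hc₀, hvol⟩ := exists_volume_annulus_le n
  set T := (volume : Measure (EuclideanSpace ℝ (Fin n))).toSphere Set.univ with hT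
  have hTt : T ≠ ∞ := measure_ne_top _ _
  have hn1 : (1 : ℝ) ≤ n := by exact_mod_cast hn
  set m := ((n : ℝ) - 1) / 2 with hm
  have hm0 : 0 ≤ m := by rw [hm]; linarith
  refine ⟨T ^ (1 / 2 : ℝ) + c₀ ^ (1 / 2 : ℝ) * ENNReal.ofReal C, by
    refine ENNReal.add_ne_top.2 ⟨ENNReal.rpow_ne_top_of_nonneg (by norm_num) hTt,
      ENNReal.mul_ne_top (ENNReal.rpow_ne_top_of_nonneg (by norm_num) hc₀) ENNReal.ofReal_ne_top⟩,
    fun G hG hGi i j => ?_⟩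
  set c := T ^ (1 / 2 : ℝ) + c₀ ^ (1 / 2 : ℝ) * ENNReal.ofReal C with hc
  have hcT : T ≤ c ^ 2 := by
    rw [← rpow_half_sq T]; gcongr; exact le_self_add
  have hcC : c₀ * ENNReal.ofReal C ^ 2 ≤ c ^ 2 := by
    rw [← rpow_half_sq c₀, ← mul_pow]; gcongr; exact le_add_self
  set H := radAmp n G with hH
  have hHi : Integrable H := integrable_radAmp hn hGi
  set b := blockMass H i with hb_def
  set A := (fun x : EuclideanSpace ℝ (Fin n) => ‖x‖) ⁻¹' shell j with hA
  have hAm : MeasurableSet A := measurable_norm (measurableSet_shell j)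
  obtain ⟨v, hv⟩ : ∃ v : ℝ → ℝ → ℂ, waveInt ε (block H i) (radKer i₀) = v := ⟨_, rfl⟩
  have hvc : Continuous fun p : ℝ × ℝ => v p.1 p.2 := by
    rw [← hv]
    exact continuous_waveInt (integrable_block hHi i) (continuous_radKer i₀) (B := C)
      fun ρ R _ _ => hb _
  have hvm : Measurable fun p : ℝ × EuclideanSpace ℝ (Fin n) => ‖v p.1 ‖p.2‖‖ₑ ^ 2 := by
    have : Continuous fun p : ℝ × EuclideanSpace ℝ (Fin n) => v p.1 ‖p.2‖ :=
      hvc.comp (continuous_fst.prodMk (continuous_norm.comp continuous_snd))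
    exact this.enorm.measurable.pow_const 2
  have hmax : max ((i : ℝ) + j) 0 + min ((i : ℝ) + j) 0 = (i : ℝ) + j := by
    rw [max_add_min]; ring
  set kp := max ((i : ℝ) + j) 0 with hkp
  set km := min ((i : ℝ) + j) 0 with hkm
  rw [hv]
  set κ := C * 2 ^ (-(kp * m)) with hκ
  have hκb : ∀ ρ, ∀ R ∈ shell j, block H i ρ ≠ 0 → |radKer i₀ ρ R| ≤ κ := fun ρ R hR h =>
    abs_le_of_decay hC hm0 hb hd (mem_shell_of_block_ne_zero h) (mem_shell_iff.1 hR).1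
  refine ⟨fun t => (∫⁻ x in A, ‖v t ‖x‖‖ₑ ^ 2) ^ (1 / 2 : ℝ),
    (hvm.lintegral_prod_right' (ν := volume.restrict A)).pow_const _,
    fun t => (rpow_half_sq _).ge, fun t => ?_, ?_⟩
  · rw [← sq_rpow_half (c * _ * b)]
    refine ENNReal.rpow_le_rpow ?_ (by norm_num)
    rw [mul_pow, mul_pow, two_rpow_sq]
    rcases le_total 0 ((i : ℝ) + j) with hk | hk
    · have hkm0 : km = 0 := min_eq_right hk
      rw [hkm0]
      have e : ∀ x : EuclideanSpace ℝ (Fin n), v t ‖x‖ = ∫ ξ : EuclideanSpace ℝ (Fin n),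
          Complex.exp (2 * π * ⟪x, ξ⟫ * Complex.I) * (phase ε t ‖ξ‖ * block G i ‖ξ‖) := by
        intro x
        rw [integral_radial_wave i₀ (G := block G i) (hG.indicator (measurableSet_shell i))
          (hGi.indicator (measurable_norm (measurableSet_shell i))), ← hv, hH, block_radAmp]
        rfl
      simp_rw [e]
      refine (setLIntegral_le_lintegral _ _).trans ((lintegral_wave_sq_le
        (g := fun ξ => block G i ‖ξ‖)
        (hGi.indicator (measurable_norm (measurableSet_shell i))) ε t).trans
        ((lintegral_block_norm_sq_le hn hG i).trans ?_))
      rw [← mul_assoc]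
      refine mul_le_mul_left (mul_le_mul' hcT (le_of_eq ?_)) _
      congr 1
      rw [hm]; ring
    · have hkm0 : km = i + j := min_eq_left hk
      have hkp0 : kp = 0 := max_eq_right hk
      have hκC : κ = C := by rw [hκ, hkp0]; simp
      calc ∫⁻ x in A, ‖v t ‖x‖‖ₑ ^ 2
          ≤ ∫⁻ x in A, (ENNReal.ofReal C * (2 ^ ((i : ℝ) / 2) * b)) ^ 2 := by
            refine setLIntegral_mono measurable_const fun x hx => ?_
            rw [← hκC, ← hv]
            gcongr
            refine (enorm_waveInt_le hκb t hx).trans ?_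
            gcongr
            exact lintegral_block_le hHi i
        _ ≤ (ENNReal.ofReal C * (2 ^ ((i : ℝ) / 2) * b)) ^ 2 * (c₀ * 2 ^ ((j : ℝ) * n)) := by
            rw [setLIntegral_const]; gcongr; exact hvol j
        _ = (c₀ * ENNReal.ofReal C ^ 2) * (2 ^ (2 * ((i : ℝ) / 2)) * 2 ^ ((j : ℝ) * n)) * b ^ 2 := by
            rw [mul_pow, mul_pow, two_rpow_sq]; ring
        _ ≤ _ := by
            refine mul_le_mul_left (mul_le_mul' hcC (le_of_eq ?_)) _
            rw [← ENNReal.rpow_add _ _ two_ne_zero ofNat_ne_top]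
            congr 1
            rw [hkm0, hm]; ring
  · simp_rw [rpow_half_sq]
    rw [lintegral_lintegral_swap hvm.aemeasurable]
    calc ∫⁻ x in A, ∫⁻ t, ‖v t ‖x‖‖ₑ ^ 2
        ≤ ∫⁻ x in A, ENNReal.ofReal (κ ^ 2) * b ^ 2 := by
          refine setLIntegral_mono measurable_const fun x hx => ?_
          rw [hb_def, ← lintegral_block_sq, ← hv]
          exact lintegral_waveInt_sq_le hε (integrable_block hHi i) (continuous_radKer i₀) hκb hx
      _ ≤ ENNReal.ofReal (κ ^ 2) * b ^ 2 * (c₀ * 2 ^ ((j : ℝ) * n)) := by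
          rw [setLIntegral_const]; gcongr; exact hvol j
      _ = (c₀ * ENNReal.ofReal C ^ 2) * (2 ^ (2 * -(kp * m)) * 2 ^ ((j : ℝ) * n)) * b ^ 2 := by
          rw [ENNReal.ofReal_pow (by positivity), hκ, ENNReal.ofReal_mul hC, mul_pow,
            ofReal_two_rpow, two_rpow_sq]
          ring
      _ ≤ _ := by
          rw [mul_pow, mul_pow, two_rpow_sq]
          refine mul_le_mul_left (mul_le_mul' hcC (le_of_eq ?_)) _
          rw [← ENNReal.rpow_add _ _ two_ne_zero ofNat_ne_top]
          congr 1
          have : (j : ℝ) = kp + km - i := by linarith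
          rw [this, hm]; ring

end SquareBlocks

section Decomposition

variable {n : ℕ} {ε : ℝ}

theorem iUnion_shell : ⋃ i, shell i = Set.Ioi 0 := by
  ext ρ
  simp only [Set.mem_iUnion, Set.mem_Ioi]
  exact ⟨fun ⟨i, hi⟩ => pos_of_mem_shell hi, fun h => exists_mem_Ico_zpow h one_lt_two⟩

theorem pairwise_disjoint_shell : Pairwise (Function.onFun Disjoint shell) := by
  have := (zpow_right_strictMono₀ (one_lt_two (α := ℝ))).monotone.pairwise_disjoint_on_Ico_succ
  simpa [shell, Int.succ, Order.succ] using! this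

theorem enorm_waveInt_le_tsum {H : ℝ → ℂ} (hH : Integrable H) (hs : ∀ ρ, ρ ≤ 0 → H ρ = 0)
    {K : ℝ → ℝ → ℝ} (hKc : Continuous fun p : ℝ × ℝ => K p.1 p.2) {B : ℝ} (t R : ℝ)
    (hK : ∀ ρ, |K ρ R| ≤ B) :
    ‖waveInt ε H K t R‖ₑ ≤ ∑' i, ‖waveInt ε (block H i) K t R‖ₑ := by
  have hi : Integrable fun ρ => phase ε t ρ * (H ρ * K ρ R) :=
    (hH.norm.const_mul B).mono' (aestronglyMeasurable_waveInt_integrand hH hKc t R)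
      (Filter.Eventually.of_forall fun ρ => norm_waveInt_integrand_le (S := {R})
        (by rintro ρ _ rfl _; exact hK ρ) t rfl ρ)
  have e1 : waveInt ε H K t R = ∫ ρ in ⋃ i, shell i, phase ε t ρ * (H ρ * K ρ R) := by
    rw [iUnion_shell, setIntegral_eq_integral_of_forall_compl_eq_zero]
    · rfl
    · intro ρ hρ
      rw [hs ρ (not_lt.1 hρ)]; simp
  have e2 : ∀ i, ∫ ρ in shell i, phase ε t ρ * (H ρ * K ρ R) =
      waveInt ε (block H i) K t R := by
    intro i
    rw [← integral_indicator (measurableSet_shell i), waveInt]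
    congr 1
    funext ρ
    by_cases h : ρ ∈ shell i <;> simp [block, h]
  rw [e1, integral_iUnion measurableSet_shell pairwise_disjoint_shell hi.integrableOn]
  simp_rw [e2]
  exact enorm_tsum_le_tsum_enorm

theorem tsum_rpow_le_tsum_sq {ι : Type*} (x : ι → ℝ≥0∞) {p : ℝ} (hp : 2 ≤ p) :
    ∑' j, x j ^ p ≤ (∑' j, x j ^ 2) ^ (p / 2) := by
  set S := ∑' j, x j ^ 2 with hS
  have h1 : ∀ j, x j ^ p ≤ x j ^ 2 * S ^ (p / 2 - 1) := by
    intro j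
    have e : x j ^ p = x j ^ 2 * (x j ^ 2) ^ (p / 2 - 1) := by
      rw [← ENNReal.rpow_two, ← ENNReal.rpow_mul, ← ENNReal.rpow_add_of_nonneg _ _ two_pos.le
        (by linarith)]
      congr 1; ring
    rw [e]
    gcongr
    · linarith
    · exact ENNReal.le_tsum j
  refine (ENNReal.tsum_le_tsum h1).trans_eq ?_
  rw [ENNReal.tsum_mul_right, ← hS]
  nth_rewrite 1 [← ENNReal.rpow_one S]
  rw [← ENNReal.rpow_add_of_nonneg _ _ zero_le_one (by linarith)]
  congr 1; ring

/-- The dyadic annulus `2^j ≤ ‖x‖ < 2^(j+1)`. -/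
def annulus (n : ℕ) (j : ℤ) : Set (EuclideanSpace ℝ (Fin n)) := (fun x => ‖x‖) ⁻¹' shell j

theorem measurableSet_annulus (n : ℕ) (j : ℤ) : MeasurableSet (annulus n j) :=
  measurable_norm (measurableSet_shell j)

theorem ae_mem_annulus (hn : 0 < n) :
    ∀ᵐ x : EuclideanSpace ℝ (Fin n), x ∈ ⋃ j, annulus n j := by
  have : Nonempty (Fin n) := ⟨⟨0, hn⟩⟩
  filter_upwards [compl_mem_ae_iff.2 (measure_singleton (0 : EuclideanSpace ℝ (Fin n)))] with x hx
  have h : ‖x‖ ∈ ⋃ j, shell j := by rw [iUnion_shell]; exact norm_pos_iff.2 hx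
  simpa [annulus] using h

theorem eLpNorm_le_annuli (hn : 0 < n) {r : ℝ≥0∞} (hr : 2 ≤ r)
    (F : EuclideanSpace ℝ (Fin n) → ℂ) :
    eLpNorm F r volume ≤
      (∑' j, eLpNorm F r (volume.restrict (annulus n j)) ^ 2) ^ (1 / 2 : ℝ) := by
  have hle : ∀ j, eLpNorm F r (volume.restrict (annulus n j)) ≤
      (∑' j, eLpNorm F r (volume.restrict (annulus n j)) ^ 2) ^ (1 / 2 : ℝ) := fun j => by
    nth_rewrite 1 [← sq_rpow_half (eLpNorm F r _)]
    exact ENNReal.rpow_le_rpow (ENNReal.le_tsum j) (by norm_num)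
  have hU : volume.restrict (⋃ j, annulus n j) = (volume : Measure (EuclideanSpace ℝ (Fin n))) :=
    Measure.restrict_eq_self_of_ae_mem (ae_mem_annulus hn)
  rcases eq_or_ne r ∞ with rfl | hrt
  · generalize (∑' j, eLpNorm F ∞ (volume.restrict (annulus n j)) ^ 2) ^ (1 / 2 : ℝ) = S at hle ⊢
    rw [eLpNorm_exponent_top]
    refine essSup_le_of_ae_le _ ?_
    rw [← hU, Filter.EventuallyLE, ae_restrict_iUnion_iff]
    intro j
    filter_upwards [ae_le_eLpNormEssSup (f := F) (μ := volume.restrict (annulus n j))] with x hx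
    exact hx.trans (by simpa [eLpNorm_exponent_top] using hle j)
  have hr0 : r ≠ 0 := (two_pos.trans_le hr).ne'
  have hr2 : 2 ≤ r.toReal := by
    rw [← ENNReal.toReal_ofNat 2]; exact ENNReal.toReal_mono hrt hr
  have hd : Pairwise (Function.onFun Disjoint (annulus n)) := fun i j h =>
    (pairwise_disjoint_shell h).preimage _
  have e : ∀ μ : Measure (EuclideanSpace ℝ (Fin n)),
      ∫⁻ x, ‖F x‖ₑ ^ r.toReal ∂μ = eLpNorm F r μ ^ r.toReal := fun μ => by
    rw [eLpNorm_eq_lintegral_rpow_enorm_toReal hr0 hrt, ← ENNReal.rpow_mul, one_div,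
      inv_mul_cancel₀ (by positivity), ENNReal.rpow_one]
  rw [eLpNorm_eq_lintegral_rpow_enorm_toReal hr0 hrt]
  nth_rewrite 1 [← hU]
  rw [lintegral_iUnion (measurableSet_annulus n) hd]
  simp_rw [e]
  refine (ENNReal.rpow_le_rpow (tsum_rpow_le_tsum_sq _ hr2) (by positivity)).trans_eq ?_
  rw [← ENNReal.rpow_mul]
  congr 1
  field_simp

theorem tsum_two_rpow_neg_abs_ne_top {d : ℝ} (hd : 0 < d) :
    ∑' k : ℤ, (2 : ℝ≥0∞) ^ (-(d * |(k : ℝ)|)) ≠ ∞ := by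
  have h1 : Summable fun k : ℕ => (2 : ℝ) ^ (-(d * |(k : ℝ)|)) := by
    have h := summable_geometric_of_lt_one (r := (2 : ℝ) ^ (-d)) (by positivity)
      (Real.rpow_lt_one_of_one_lt_of_neg one_lt_two (by linarith))
    refine h.congr fun k => ?_
    rw [← Real.rpow_natCast, ← Real.rpow_mul zero_le_two]
    congr 1; simp
  have h2 : Summable fun k : ℤ => (2 : ℝ) ^ (-(d * |(k : ℝ)|)) :=
    Summable.of_nat_of_neg (by simpa using h1) (by simpa using h1)
  simp_rw [← ofReal_two_rpow]
  exact h2.tsum_ofReal_ne_top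

theorem tsum_two_rpow_mul_mass_le (hn : 0 < n) (γ : ℝ) : ∃ c : ℝ≥0∞, c ≠ ∞ ∧
    ∀ G : ℝ → ℂ, Measurable G → ∑' i : ℤ, (2 ^ ((i : ℝ) * γ) * blockMass (radAmp n G) i) ^ 2 ≤
      c * ∫⁻ ξ : EuclideanSpace ℝ (Fin n),
        (ENNReal.ofReal (‖ξ‖ ^ (γ + ((n : ℝ) - 1) / 2)) * ‖G ‖ξ‖‖ₑ) ^ 2 := by
  have : Nonempty (Fin n) := ⟨⟨0, hn⟩⟩
  set T := (volume : Measure (EuclideanSpace ℝ (Fin n))).toSphere Set.univ with hT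
  have hTt : T ≠ ∞ := measure_ne_top _ _
  have hT0 : T ≠ 0 := by
    rw [hT, Measure.measure_univ_ne_zero]; exact Measure.toSphere_ne_zero _
  refine ⟨2 ^ (2 * |γ|) * T⁻¹, ENNReal.mul_ne_top
    (ENNReal.rpow_ne_top_of_ne_zero two_ne_zero ofNat_ne_top) (ENNReal.inv_ne_top.2 hT0),
    fun G hG => ?_⟩
  rw [lintegral_fun_norm hn
    (f := fun ρ => (ENNReal.ofReal (ρ ^ (γ + ((n : ℝ) - 1) / 2)) * ‖G ρ‖ₑ) ^ 2) (by fun_prop),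
    ← mul_assoc, mul_assoc _ T⁻¹ T, ENNReal.inv_mul_cancel hT0 hTt, mul_one, ← iUnion_shell,
    lintegral_iUnion measurableSet_shell pairwise_disjoint_shell, ← ENNReal.tsum_mul_left]
  refine ENNReal.tsum_le_tsum fun i => ?_
  rw [mul_pow, two_rpow_sq, ← lintegral_block_sq, ← lintegral_const_mul' _ _
    (ENNReal.rpow_ne_top_of_ne_zero two_ne_zero ofNat_ne_top), ← lintegral_const_mul' _ _
    (ENNReal.rpow_ne_top_of_ne_zero two_ne_zero ofNat_ne_top),
    ← lintegral_indicator (measurableSet_shell i)]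
  refine lintegral_mono fun ρ => ?_
  by_cases h : ρ ∈ shell i
  swap
  · simp [block, h]
  have h0 := pos_of_mem_shell h
  obtain ⟨h1, h2⟩ := mem_shell_iff.1 h
  simp only [Set.indicator_of_mem h, block, radAmp, Set.indicator_of_mem (Set.mem_Ioi.2 h0)]
  rw [enorm_mul, mul_pow, mul_pow, ← mul_assoc (2 ^ (2 * ((i : ℝ) * γ))),
    ← mul_assoc (ENNReal.ofReal (ρ ^ (n - 1))), ← mul_assoc (2 ^ (2 * |γ|))]
  refine mul_le_mul_left ?_ _
  rw [← ofReal_norm, Complex.norm_real, Real.norm_of_nonneg (by positivity),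
    ← ENNReal.ofReal_pow (by positivity), ← ENNReal.ofReal_pow (by positivity), ← ofReal_two_rpow,
    ← ofReal_two_rpow, ← ENNReal.ofReal_mul (by positivity), ← ENNReal.ofReal_mul (by positivity),
    ← ENNReal.ofReal_mul (by positivity)]
  refine ENNReal.ofReal_le_ofReal ?_
  have e1 : (ρ ^ (γ + ((n : ℝ) - 1) / 2)) ^ 2 = ρ ^ (2 * γ) * ρ ^ (n - 1) := by
    rw [← Real.rpow_natCast ρ (n - 1), ← Real.rpow_add h0, ← Real.rpow_natCast,
      ← Real.rpow_mul h0.le, Nat.cast_sub hn]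
    congr 1; push_cast; ring
  have e2 : (2 : ℝ) ^ (2 * ((i : ℝ) * γ)) ≤ 2 ^ (2 * |γ|) * ρ ^ (2 * γ) := by
    have h2i : (0 : ℝ) < 2 ^ (i : ℝ) := by positivity
    have e3 : (2 : ℝ) ^ (2 * ((i : ℝ) * γ)) = (2 ^ (i : ℝ)) ^ (2 * γ) := by
      rw [← Real.rpow_mul zero_le_two]; congr 1; ring
    rw [e3]
    rcases le_total 0 γ with hγ | hγ
    · calc ((2 : ℝ) ^ (i : ℝ)) ^ (2 * γ) ≤ ρ ^ (2 * γ) := by gcongr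
        _ ≤ _ := le_mul_of_one_le_left (by positivity)
            (Real.one_le_rpow one_le_two (by positivity))
    · rw [abs_of_nonpos hγ]
      calc ((2 : ℝ) ^ (i : ℝ)) ^ (2 * γ)
          = 2 ^ (2 * -γ) * (2 * 2 ^ (i : ℝ)) ^ (2 * γ) := by
            rw [Real.mul_rpow zero_le_two h2i.le, ← mul_assoc, ← Real.rpow_add two_pos]
            simp
        _ ≤ _ := mul_le_mul_of_nonneg_left
            (Real.rpow_le_rpow_of_nonpos h0 h2.le (by linarith)) (by positivity)
  rw [e1]
  calc (2 : ℝ) ^ (2 * ((i : ℝ) * γ)) * (ρ ^ (n - 1)) ^ 2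
      ≤ (2 ^ (2 * |γ|) * ρ ^ (2 * γ)) * (ρ ^ (n - 1)) ^ 2 := by gcongr
    _ = _ := by ring

end Decomposition

section MixedNorm

variable {n : ℕ} {ε : ℝ}

/-- The homogeneous Sobolev norm of radial data in polar form. -/
noncomputable def dataNorm (n : ℕ) (α : ℝ) (G : ℝ → ℂ) : ℝ≥0∞ :=
  (∫⁻ ξ : EuclideanSpace ℝ (Fin n), (ENNReal.ofReal (‖ξ‖ ^ α) * ‖G ‖ξ‖‖ₑ) ^ 2) ^ (1 / 2 : ℝ)

/-- The estimate for radial data, expressed through the radial profile. -/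
def RadialBound (i₀ : Fin n) (ε : ℝ) (q r : ℝ≥0∞) : Prop :=
  ∃ C : ℝ≥0∞, C ≠ ∞ ∧ ∀ G : ℝ → ℂ, Measurable G →
    (Integrable fun ξ : EuclideanSpace ℝ (Fin n) => G ‖ξ‖) →
    eLpNorm (fun t => eLpNorm (fun x : EuclideanSpace ℝ (Fin n) =>
      waveInt ε (radAmp n G) (radKer i₀) t ‖x‖) r volume) q volume ≤
      C * dataNorm n ((n : ℝ) / 2 - n / r.toReal - 1 / q.toReal) G

theorem two_div_toReal_mem {r : ℝ≥0∞} (hr : 2 ≤ r) : 0 ≤ 2 / r.toReal ∧ 2 / r.toReal ≤ 1 := by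
  refine ⟨by positivity, ?_⟩
  rcases eq_or_ne r ∞ with rfl | hrt
  · simp
  have hr2 : 2 ≤ r.toReal := by
    rw [← ENNReal.toReal_ofNat 2]; exact ENNReal.toReal_mono hrt hr
  rw [div_le_one (by linarith)]
  exact hr2

theorem eLpNorm_mono_ennreal {α : Type*} [MeasurableSpace α] {μ : Measure α} {f g : α → ℝ≥0∞}
    {q : ℝ≥0∞} (h : ∀ x, f x ≤ g x) : eLpNorm f q μ ≤ eLpNorm g q μ :=
  eLpNorm_mono_enorm fun x => by simpa using h x

/-- Summation of dyadic pieces with off-diagonal decay. -/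
theorem exists_dyadic_sum_le (hn : 0 < n) {q : ℝ≥0∞} (hq : 2 ≤ q) (γ : ℝ) {d : ℝ} (hd : 0 < d)
    {c : ℝ≥0∞} (hc : c ≠ ∞) :
    ∃ C : ℝ≥0∞, C ≠ ∞ ∧ ∀ G : ℝ → ℂ, Measurable G → ∀ M : ℤ → ℤ → ℝ → ℝ≥0∞,
      (∀ i j, Measurable (M i j)) →
      (∀ i j, eLpNorm (M i j) q volume ≤ c * 2 ^ (-(d * |(i : ℝ) + j|)) *
        (2 ^ ((i : ℝ) * γ) * blockMass (radAmp n G) i)) →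
      eLpNorm (fun t => (∑' j, (∑' i, M i j t) ^ 2) ^ (1 / 2 : ℝ)) q volume ≤
        C * dataNorm n (γ + ((n : ℝ) - 1) / 2) G := by
  obtain ⟨c', hc', hmass⟩ := tsum_two_rpow_mul_mass_le hn γ
  set e : ℤ → ℝ≥0∞ := fun k => (c + 1) * 2 ^ (-(d * |(k : ℝ)|)) with he
  have h2 : ∀ x : ℝ, (2 : ℝ≥0∞) ^ x ≠ ∞ := fun x =>
    ENNReal.rpow_ne_top_of_ne_zero two_ne_zero ofNat_ne_top
  have hsum : ∑' k, e k ≠ ∞ := by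
    rw [he, ENNReal.tsum_mul_left]
    exact ENNReal.mul_ne_top (by simp [hc]) (tsum_two_rpow_neg_abs_ne_top hd)
  refine ⟨(∑' k, e k) * c' ^ (1 / 2 : ℝ),
    ENNReal.mul_ne_top hsum (ENNReal.rpow_ne_top_of_nonneg (by norm_num) hc'),
    fun G hG M hM hMb => ?_⟩
  refine (eLpNorm_sup_tsum_le hM hq (c := e) (fun k => ?_) (fun k => ?_) hsum
    (a := fun i => 2 ^ ((i : ℝ) * γ) * blockMass (radAmp n G) i) fun i j => ?_).trans ?_
  · exact mul_ne_zero (by simp) (ENNReal.rpow_pos two_pos ofNat_ne_top).ne'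
  · exact ENNReal.mul_ne_top (by simp [hc]) (h2 _)
  · refine (hMb i j).trans ?_
    simp only [he, Int.cast_add]
    gcongr
    exact le_self_add
  · rw [mul_assoc, dataNorm, ← ENNReal.mul_rpow_of_nonneg _ _ (by norm_num)]
    gcongr
    exact hmass G hG

/-- Mixed norm control of a dyadic block on a dyadic annulus. -/
theorem exists_mixed_block (hn : 0 < n) (hε : ε = 1 ∨ ε = -1) (i₀ : Fin n) {q r : ℝ≥0∞}
    (hq : 2 ≤ q) (hr : 2 ≤ r) :
    ∃ c : ℝ≥0∞, c ≠ ∞ ∧ ∀ G : ℝ → ℂ, Measurable G →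
      (Integrable fun ξ : EuclideanSpace ℝ (Fin n) => G ‖ξ‖) → ∀ i j : ℤ,
      ∃ M : ℝ → ℝ≥0∞, Measurable M ∧
        (∀ t, eLpNorm (fun x => waveInt ε (block (radAmp n G) i) (radKer i₀) t ‖x‖) r
          (volume.restrict (annulus n j)) ≤ M t) ∧
        eLpNorm M q volume ≤ c *
          2 ^ (-(max ((i : ℝ) + j) 0 *
              (((n : ℝ) - 1) * (1 / 2 - 1 / r.toReal) - 1 / q.toReal)) +
            min ((i : ℝ) + j) 0 * (n / r.toReal)) *
          (2 ^ ((i : ℝ) * (1 / 2 - n / r.toReal - 1 / q.toReal)) * blockMass (radAmp n G) i) := by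
  obtain ⟨C, hC, hb, -⟩ := exists_sphKer_bound i₀
  obtain ⟨c₁, hc₁, hsup⟩ := exists_sup_block_annulus (ε := ε) hε i₀
  obtain ⟨c₂, hc₂, hsq⟩ := exists_square_block (ε := ε) hn hε i₀
  obtain ⟨hθ0, hθ1⟩ := two_div_toReal_mem hr
  obtain ⟨hτ0, hτ1⟩ := two_div_toReal_mem hq
  refine ⟨ENNReal.ofReal c₁ + c₂, ENNReal.add_ne_top.2 ⟨ENNReal.ofReal_ne_top, hc₂⟩,
    fun G hG hGi i j => ?_⟩
  set c := ENNReal.ofReal c₁ + c₂ with hc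
  have hle₁ : ENNReal.ofReal c₁ ≤ c := le_self_add
  have hle₂ : c₂ ≤ c := le_add_self
  have hHi : Integrable (radAmp n G) := integrable_radAmp hn hGi
  obtain ⟨Y, hY, hYs, hYi, hY2⟩ := hsup _ hHi i j
  obtain ⟨X, hX, hXs, hXi, hX2⟩ := hsq G hG hGi i j
  set b := blockMass (radAmp n G) i with hb_def
  have hvc : ∀ t, Continuous fun x : EuclideanSpace ℝ (Fin n) =>
      waveInt ε (block (radAmp n G) i) (radKer i₀) t ‖x‖ := fun t =>
    (continuous_slice_right (continuous_waveInt (integrable_block hHi i) (continuous_radKer i₀)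
      (B := C) fun ρ R _ _ => hb _) t).comp continuous_norm
  refine ⟨fun t => X t ^ (2 / r.toReal) * Y t ^ (1 - 2 / r.toReal),
    (hX.pow_const _).mul (hY.pow_const _), fun t => ?_, ?_⟩
  · beta_reduce
    rw [mul_comm]
    refine eLpNorm_le_interp (hvc t).enorm.measurable.aemeasurable hr ?_ (hXs t)
    rw [ae_restrict_iff' (measurableSet_annulus n j)]
    refine Filter.Eventually.of_forall fun x hx => hYs t _ ?_
    have := mem_shell_iff.1 hx
    exact ⟨this.1, this.2.le⟩
  · have hX2' := hX2.trans (pow_le_pow_left' (mul_le_mul_left (mul_le_mul_left hle₂ _) _) 2)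
    have hY2' := hY2.trans (pow_le_pow_left' (mul_le_mul_left (mul_le_mul_left hle₁ _) _) 2)
    refine (eLpNorm_rpow_mul_rpow_le hX hY hq hθ0 hθ1
      (fun t => (hXi t).trans (mul_le_mul_left (mul_le_mul_left hle₂ _) _)) hX2'
      (fun t => (hYi t).trans (mul_le_mul_left (mul_le_mul_left hle₁ _) _)) hY2').trans_eq ?_
    rw [mul_comm ((c * _ * b) ^ (2 / r.toReal)), two_rpow_combine _ _ _ _ hθ0 hθ1,
      mul_comm ((c * _ * b) ^ (2 / r.toReal)), two_rpow_combine _ _ _ _ hθ0 hθ1,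
      two_rpow_combine _ _ _ _ hτ0 hτ1, mul_assoc c, mul_assoc c, ← mul_assoc (2 ^ _) (2 ^ _) b,
      ← ENNReal.rpow_add _ _ two_ne_zero ofNat_ne_top]
    congr 3
    ring

theorem radAmp_of_nonpos (n : ℕ) (G : ℝ → ℂ) (ρ : ℝ) (h : ρ ≤ 0) : radAmp n G ρ = 0 := by
  simp [radAmp, h]

/-- The radial estimate for finite space exponents. -/
theorem radialBound_of_ne_top (hn : 0 < n) (hε : ε = 1 ∨ ε = -1) (i₀ : Fin n) {q r : ℝ≥0∞}
    (hq : 2 ≤ q) (hr : 2 ≤ r) (hrt : r ≠ ∞)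
    (hadm : 0 < ((n : ℝ) - 1) * (1 / 2 - 1 / r.toReal) - 1 / q.toReal) :
    RadialBound i₀ ε q r := by
  obtain ⟨C, hC, hb, -⟩ := exists_sphKer_bound i₀
  obtain ⟨c, hc, hblock⟩ := exists_mixed_block (ε := ε) hn hε i₀ hq hr
  have hr0 : 0 < r.toReal := ENNReal.toReal_pos (two_pos.trans_le hr).ne' hrt
  have hn' : (0 : ℝ) < n := by exact_mod_cast hn
  set δ := ((n : ℝ) - 1) * (1 / 2 - 1 / r.toReal) - 1 / q.toReal with hδ
  set d := min δ (n / r.toReal) with hd_def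
  have hd : 0 < d := lt_min hadm (by positivity)
  obtain ⟨C', hC', hsum⟩ := exists_dyadic_sum_le hn hq (1 / 2 - n / r.toReal - 1 / q.toReal) hd hc
  refine ⟨C', hC', fun G hG hGi => ?_⟩
  have hHi : Integrable (radAmp n G) := integrable_radAmp hn hGi
  choose M hM hMb hMq using hblock G hG hGi
  have hfin := hsum G hG M hM fun i j => (hMq i j).trans ?_
  · rw [show (n : ℝ) / 2 - n / r.toReal - 1 / q.toReal =
      1 / 2 - n / r.toReal - 1 / q.toReal + ((n : ℝ) - 1) / 2 by ring]
    refine (eLpNorm_mono_ennreal fun t => ?_).trans hfin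
    refine (eLpNorm_le_annuli hn hr _).trans ?_
    refine ENNReal.rpow_le_rpow (ENNReal.tsum_le_tsum fun j => pow_le_pow_left' ?_ 2) (by norm_num)
    have hvc : ∀ i, Continuous fun x : EuclideanSpace ℝ (Fin n) =>
        waveInt ε (block (radAmp n G) i) (radKer i₀) t ‖x‖ := fun i =>
      (continuous_slice_right (continuous_waveInt (integrable_block hHi i) (continuous_radKer i₀)
        (B := C) fun ρ R _ _ => hb _) t).comp continuous_norm
    calc eLpNorm (fun x : EuclideanSpace ℝ (Fin n) =>
          waveInt ε (radAmp n G) (radKer i₀) t ‖x‖) r (volume.restrict (annulus n j))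
        ≤ eLpNorm (fun x : EuclideanSpace ℝ (Fin n) =>
          ∑' i, ‖waveInt ε (block (radAmp n G) i) (radKer i₀) t ‖x‖‖ₑ) r
          (volume.restrict (annulus n j)) := eLpNorm_mono_enorm fun x =>
            enorm_waveInt_le_tsum hHi (radAmp_of_nonpos n G) (continuous_radKer i₀) t _
              (B := C) fun ρ => hb _
      _ ≤ ∑' i, eLpNorm (fun x : EuclideanSpace ℝ (Fin n) =>
          ‖waveInt ε (block (radAmp n G) i) (radKer i₀) t ‖x‖‖ₑ) r
          (volume.restrict (annulus n j)) :=
            eLpNorm_tsum_le (fun i => (hvc i).enorm.measurable) (one_le_two.trans hr)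
      _ ≤ ∑' i, M i j t := ENNReal.tsum_le_tsum fun i =>
            (eLpNorm_mono_enorm fun x => by simp).trans (hMb i j t)
  · gcongr
    · exact one_le_two
    · have h1 : d ≤ δ := min_le_left _ _
      have h2 : d ≤ n / r.toReal := min_le_right _ _
      rcases le_total 0 ((i : ℝ) + j) with h | h
      · rw [max_eq_left h, min_eq_right h, abs_of_nonneg h]
        nlinarith
      · rw [max_eq_right h, min_eq_left h, abs_of_nonpos h]
        nlinarith

end MixedNorm

section Energy

variable {n : ℕ} {ε : ℝ}

/-- The energy estimate. -/
theorem radialBound_top_two (i₀ : Fin n) (ε : ℝ) : RadialBound i₀ ε ∞ 2 := by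
  refine ⟨1, one_ne_top, fun G hG hGi => eLpNorm_top_le (Filter.Eventually.of_forall fun t => ?_)⟩
  rw [one_mul, dataNorm, ← sq_rpow_half (eLpNorm _ 2 _), ← lintegral_enorm_sq_eq]
  refine ENNReal.rpow_le_rpow ?_ (by norm_num)
  have h := lintegral_wave_sq_le hGi ε t
  simp_rw [integral_radial_wave i₀ hG hGi] at h
  simpa using! h

end Energy

section SpaceSup

variable {n : ℕ} {ε : ℝ} {α : Type*} [MeasurableSpace α] {μ : Measure α}

/-- Schur's test for a convolution kernel on the integers. -/
theorem tsum_kernel_mul_add_eq (w : ℤ → ℝ≥0∞) (x : ℤ → ℝ≥0∞) :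
    ∑' p : ℤ × ℤ, w (p.2 - p.1) * (x p.1 + x p.2) = 2 * (∑' k, w k) * ∑' i, x i := by
  simp_rw [mul_add]
  rw [ENNReal.tsum_add]
  have e1 : ∑' p : ℤ × ℤ, w (p.2 - p.1) * x p.1 = (∑' k, w k) * ∑' i, x i := by
    rw [ENNReal.tsum_prod (f := fun i k => w (k - i) * x i), ← ENNReal.tsum_mul_left]
    refine tsum_congr fun i => ?_
    rw [ENNReal.tsum_mul_right]
    congr 1
    exact (Equiv.subRight i).tsum_eq w
  have e2 : ∑' p : ℤ × ℤ, w (p.2 - p.1) * x p.2 = (∑' k, w k) * ∑' i, x i := by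
    rw [ENNReal.tsum_prod (f := fun i k => w (k - i) * x k), ENNReal.tsum_comm,
      ← ENNReal.tsum_mul_left]
    refine tsum_congr fun i => ?_
    rw [ENNReal.tsum_mul_right]
    congr 1
    exact (Equiv.subLeft i).tsum_eq w
  rw [e1, e2]
  ring

theorem eLpNorm_tsum_sq_le {V : ℤ → α → ℝ≥0∞} (hV : ∀ i, Measurable (V i)) {q : ℝ≥0∞}
    (hq : 2 ≤ q) :
    eLpNorm (fun x => ∑' i, V i x) q μ ^ 2 ≤
      ∑' p : ℤ × ℤ, eLpNorm (fun x => V p.1 x * V p.2 x) (q / 2) μ := by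
  have hq21 : 1 ≤ q / 2 := by
    rw [ENNReal.le_div_iff_mul_le (by simp) (by simp), one_mul]; exact hq
  rw [← eLpNorm_sq_eq]
  have hsq : (fun x => (∑' i, V i x) ^ 2) = fun x => ∑' p : ℤ × ℤ, V p.1 x * V p.2 x := by
    ext x
    rw [pow_two, ENNReal.tsum_prod (f := fun i k => V i x * V k x), ← ENNReal.tsum_mul_right]
    simp_rw [ENNReal.tsum_mul_left]
  rw [hsq]
  exact eLpNorm_tsum_le (fun p : ℤ × ℤ => (hV p.1).mul (hV p.2)) hq21

/-- Hölder's inequality between two scales. -/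
theorem eLpNorm_mul_le_of_scales {q : ℝ≥0∞} (hq : 2 ≤ q) (hqt : q ≠ ∞) {c A B : ℝ≥0∞}
    {V W : α → ℝ≥0∞} (hV : Measurable V) (hW : Measurable W) {i k η : ℝ} (hη0 : 0 < η)
    (hη1 : η < 1 / q.toReal) (hη2 : η ≤ 1 / 2 - 1 / q.toReal)
    (hVp : ∀ p : ℝ, 2 ≤ p →
      eLpNorm V (ENNReal.ofReal p) μ ≤ c * 2 ^ (i * (1 / q.toReal - 1 / p)) * A)
    (hWp : ∀ p : ℝ, 2 ≤ p →
      eLpNorm W (ENNReal.ofReal p) μ ≤ c * 2 ^ (k * (1 / q.toReal - 1 / p)) * B) :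
    eLpNorm (fun x => V x * W x) (q / 2) μ ≤ c ^ 2 * 2 ^ (-(η * (k - i))) * (A * B) := by
  have hq0 : 0 < q.toReal := ENNReal.toReal_pos (two_pos.trans_le hq).ne' hqt
  have hq2t : q / 2 ≠ ∞ := ENNReal.div_ne_top hqt two_ne_zero
  have hq20 : q / 2 ≠ 0 := (ENNReal.div_pos (two_pos.trans_le hq).ne' ofNat_ne_top).ne'
  have hq2r : (q / 2).toReal = q.toReal / 2 := by simp [ENNReal.toReal_div]
  have hqm : q.toReal * (1 / q.toReal) = 1 := by field_simp
  have hqm' : 1 / (q.toReal / 2) = 2 * (1 / q.toReal) := by field_simp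
  generalize hm : 1 / q.toReal = m at *
  have hm0 : 0 < m := hη0.trans hη1
  have h1 : 0 < 1 / (m - η) := one_div_pos.2 (by linarith)
  have h2 : 0 < 1 / (m + η) := one_div_pos.2 (by linarith)
  have hH := ENNReal.lintegral_Lp_mul_le_Lq_mul_Lr (p := q.toReal / 2) (q := 1 / (m - η))
    (r := 1 / (m + η)) (by positivity) (by
      rw [lt_div_iff₀ (by linarith)]
      nlinarith) (by
      rw [one_div_one_div, one_div_one_div, hqm']; ring) μ hV.aemeasurable hW.aemeasurable
  have hA := hVp (1 / (m - η)) (by rw [le_div_iff₀ (by linarith)]; linarith)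
  have hB := hWp (1 / (m + η)) (by rw [le_div_iff₀ (by linarith)]; linarith)
  rw [eLpNorm_ennreal_eq (by simpa using h1) ofReal_ne_top, ENNReal.toReal_ofReal h1.le] at hA
  rw [eLpNorm_ennreal_eq (by simpa using h2) ofReal_ne_top, ENNReal.toReal_ofReal h2.le] at hB
  rw [eLpNorm_ennreal_eq hq20 hq2t, hq2r]
  refine hH.trans ((mul_le_mul' hA hB).trans_eq ?_)
  rw [one_div_one_div, one_div_one_div,
    show -(η * (k - i)) = i * (m - (m - η)) + k * (m - (m + η)) by ring,
    ENNReal.rpow_add _ _ two_ne_zero ofNat_ne_top]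
  ring

/-- Almost orthogonality of functions concentrated at different dyadic scales. -/
theorem exists_eLpNorm_tsum_le {q : ℝ≥0∞} (hq : 2 < q) (hqt : q ≠ ∞) {c : ℝ≥0∞} (hc : c ≠ ∞) :
    ∃ C : ℝ≥0∞, C ≠ ∞ ∧ ∀ (V : ℤ → α → ℝ≥0∞) (a : ℤ → ℝ≥0∞), (∀ i, Measurable (V i)) →
      (∀ i (p : ℝ), 2 ≤ p → eLpNorm (V i) (ENNReal.ofReal p) μ ≤
        c * 2 ^ ((i : ℝ) * (1 / q.toReal - 1 / p)) * a i) →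
      eLpNorm (fun x => ∑' i, V i x) q μ ≤ C * (∑' i, a i ^ 2) ^ (1 / 2 : ℝ) := by
  have hq2 : 2 < q.toReal := by
    rw [← ENNReal.toReal_ofNat 2]; exact (ENNReal.toReal_lt_toReal ofNat_ne_top hqt).2 hq
  have hinv : 1 / q.toReal < 1 / 2 := one_div_lt_one_div_of_lt two_pos hq2
  have hinv0 : 0 < 1 / q.toReal := by positivity
  obtain ⟨η, hη0, hη1, hη2⟩ : ∃ η, 0 < η ∧ η < 1 / q.toReal ∧ η ≤ 1 / 2 - 1 / q.toReal := by
    obtain ⟨η, h0, h1⟩ := exists_between (lt_min hinv0 (sub_pos.2 hinv))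
    exact ⟨η, h0, (lt_min_iff.1 h1).1, (lt_min_iff.1 h1).2.le⟩
  set w : ℤ → ℝ≥0∞ := fun k => 2 ^ (-(η * |(k : ℝ)|)) with hw
  have hSt : ∑' k, w k ≠ ∞ := tsum_two_rpow_neg_abs_ne_top hη0
  refine ⟨(c ^ 2 * (2 * ∑' k, w k)) ^ (1 / 2 : ℝ), ENNReal.rpow_ne_top_of_nonneg (by norm_num)
    (ENNReal.mul_ne_top (ENNReal.pow_ne_top hc) (ENNReal.mul_ne_top ofNat_ne_top hSt)),
    fun V a hV hVp => ?_⟩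
  have hoff : ∀ i k : ℤ, i ≤ k → eLpNorm (fun x => V i x * V k x) (q / 2) μ ≤
      c ^ 2 * w (k - i) * (a i * a k) := by
    intro i k hik
    have hik' : (0 : ℝ) ≤ (k : ℝ) - i := by exact_mod_cast sub_nonneg.2 hik
    simp only [hw]
    rw [Int.cast_sub, abs_of_nonneg hik']
    exact eLpNorm_mul_le_of_scales hq.le hqt (hV i) (hV k) hη0 hη1 hη2 (hVp i) (hVp k)
  have hoff' : ∀ p : ℤ × ℤ, eLpNorm (fun x => V p.1 x * V p.2 x) (q / 2) μ ≤
      c ^ 2 * (w (p.2 - p.1) * (a p.1 ^ 2 + a p.2 ^ 2)) := by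
    rintro ⟨i, k⟩
    have hprod : a i * a k ≤ a i ^ 2 + a k ^ 2 := by
      rcases le_total (a i) (a k) with h | h
      · exact (mul_le_mul_left h _).trans ((pow_two _).symm.le.trans le_add_self)
      · exact (mul_le_mul_right h _).trans ((pow_two _).symm.le.trans le_self_add)
    rw [← mul_assoc]
    refine le_trans ?_ (mul_le_mul_right hprod _)
    rcases le_total i k with h | h
    · exact hoff i k h
    · have hsym : w (i - k) = w (k - i) := by
        simp only [hw]
        rw [Int.cast_sub, Int.cast_sub, abs_sub_comm]
      have := hoff k i h
      rw [mul_comm (a k), hsym] at this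
      simp_rw [mul_comm (V k _)] at this
      exact this
  rw [← ENNReal.mul_rpow_of_nonneg _ _ (by norm_num), ← sq_rpow_half (eLpNorm _ q _)]
  refine ENNReal.rpow_le_rpow ?_ (by norm_num)
  refine (eLpNorm_tsum_sq_le hV hq.le).trans ((ENNReal.tsum_le_tsum hoff').trans_eq ?_)
  rw [ENNReal.tsum_mul_left, tsum_kernel_mul_add_eq w fun i => a i ^ 2, ← mul_assoc]

/-- Control of the spatial supremum by dyadic pieces with off-diagonal decay and a remainder. -/
theorem radialBound_top_of_remainder (hn : 0 < n) (i₀ : Fin n) {q : ℝ≥0∞} (hq : 2 ≤ q) {d : ℝ}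
    (hd : 0 < d) {c C : ℝ≥0∞} (hc : c ≠ ∞) (hC : C ≠ ∞)
    (h : ∀ G : ℝ → ℂ, Measurable G →
      (Integrable fun ξ : EuclideanSpace ℝ (Fin n) => G ‖ξ‖) →
      ∃ (M : ℤ → ℤ → ℝ → ℝ≥0∞) (E : ℝ → ℝ≥0∞), (∀ i j, Measurable (M i j)) ∧ Measurable E ∧
        (∀ t j, ∀ᵐ x : EuclideanSpace ℝ (Fin n), x ∈ annulus n j →
          ‖waveInt ε (radAmp n G) (radKer i₀) t ‖x‖‖ₑ ≤ ∑' i, M i j t + E t) ∧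
        (∀ i j, eLpNorm (M i j) q volume ≤ c * 2 ^ (-(d * |(i : ℝ) + j|)) *
          (2 ^ ((i : ℝ) * (1 / 2 - 1 / q.toReal)) * blockMass (radAmp n G) i)) ∧
        eLpNorm E q volume ≤ C * dataNorm n ((n : ℝ) / 2 - 1 / q.toReal) G) :
    RadialBound i₀ ε q ∞ := by
  obtain ⟨C', hC', hsum⟩ := exists_dyadic_sum_le hn hq (1 / 2 - 1 / q.toReal) hd hc
  refine ⟨C' + C, ENNReal.add_ne_top.2 ⟨hC', hC⟩, fun G hG hGi => ?_⟩
  obtain ⟨M, E, hM, hE, hpt, hMq, hEq⟩ := h G hG hGi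
  have hfin := hsum G hG M hM hMq
  rw [show 1 / 2 - 1 / q.toReal + ((n : ℝ) - 1) / 2 = n / 2 - 1 / q.toReal by ring] at hfin
  rw [toReal_top, _root_.div_zero, _root_.sub_zero, add_mul]
  refine le_trans (eLpNorm_mono_ennreal (g := fun t =>
    (∑' j, (∑' i, M i j t) ^ 2) ^ (1 / 2 : ℝ) + E t) fun t => ?_) ?_
  · refine (eLpNorm_exponent_top).trans_le (essSup_le_of_ae_le _ ?_)
    filter_upwards [ae_mem_annulus hn, ae_all_iff.2 (hpt t)] with x hx hx'
    obtain ⟨j, hj⟩ := Set.mem_iUnion.1 hx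
    refine (hx' j hj).trans (add_le_add_left ?_ _)
    rw [← sq_rpow_half (∑' i, M i j t)]
    exact ENNReal.rpow_le_rpow (ENNReal.le_tsum (f := fun j => (∑' i, M i j t) ^ 2) j)
      (by norm_num)
  · refine (eLpNorm_add_le (f := fun t => (∑' j, (∑' i, M i j t) ^ 2) ^ (1 / 2 : ℝ)) (g := E) ?_
      hE.aestronglyMeasurable (one_le_two.trans hq)).trans (add_le_add hfin hEq)
    have : ∀ j, Measurable fun t => ∑' i, M i j t := fun j => Measurable.tsum fun i => hM i j
    exact ((Measurable.tsum fun j => (this j).pow_const 2).pow_const _).aestronglyMeasurable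

/-- The spatial sup estimate away from the endpoint `q = 2`. -/
theorem radialBound_top_of_two_lt (hn : 0 < n) (hε : ε = 1 ∨ ε = -1) (i₀ : Fin n) {q : ℝ≥0∞}
    (hq : 2 < q) (hqt : q ≠ ∞) (hadm : 0 < ((n : ℝ) - 1) / 2 - 1 / q.toReal) :
    RadialBound i₀ ε q ∞ := by
  obtain ⟨C, hC, hb, -⟩ := exists_sphKer_bound i₀
  obtain ⟨c, hc, hblock⟩ := exists_mixed_block (ε := ε) (r := ∞) hn hε i₀ hq.le le_top
  obtain ⟨c₁, hc₁, hcore⟩ := exists_sup_block_core (ε := ε) hε i₀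
  obtain ⟨C₁, hC₁, horth⟩ := exists_eLpNorm_tsum_le (μ := (volume : Measure ℝ)) hq hqt
    (c := ENNReal.ofReal c₁) ofReal_ne_top
  obtain ⟨c', hc', hmass⟩ := tsum_two_rpow_mul_mass_le hn (1 / 2 - 1 / q.toReal)
  refine radialBound_top_of_remainder hn i₀ hq.le hadm hc (C := C₁ * c' ^ (1 / 2 : ℝ))
    (ENNReal.mul_ne_top hC₁ (ENNReal.rpow_ne_top_of_nonneg (by norm_num) hc'))
    fun G hG hGi => ?_
  have hHi : Integrable (radAmp n G) := integrable_radAmp hn hGi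
  choose M hM hMb hMq using hblock G hG hGi
  choose V hV hVs hVi hV2 using hcore (radAmp n G) hHi
  refine ⟨fun i j t => if 0 ≤ i + j then M i j t else 0, fun t => ∑' i, V i t, fun i j => ?_,
    Measurable.tsum hV, fun t j => ?_, fun i j => ?_, ?_⟩
  · beta_reduce
    split_ifs
    · exact hM i j
    · exact measurable_const
  · have h1 : ∀ i, ∀ᵐ x : EuclideanSpace ℝ (Fin n), x ∈ annulus n j →
        ‖waveInt ε (block (radAmp n G) i) (radKer i₀) t ‖x‖‖ₑ ≤ M i j t := fun i => by
      rw [← ae_restrict_iff' (measurableSet_annulus n j)]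
      exact (enorm_ae_le_eLpNormEssSup _ _).mono fun x hx => hx.trans (hMb i j t)
    filter_upwards [ae_all_iff.2 h1] with x hx hxj
    refine (enorm_waveInt_le_tsum hHi (radAmp_of_nonpos n G) (continuous_radKer i₀) t _
      (B := C) fun ρ => hb _).trans ?_
    rw [← ENNReal.tsum_add]
    refine ENNReal.tsum_le_tsum fun i => ?_
    split_ifs with hij
    · exact (hx i hxj).trans le_self_add
    · refine (hVs i t _ ⟨norm_nonneg x, ?_⟩).trans le_add_self
      have h2 := (mem_shell_iff.1 hxj).2.le
      refine h2.trans ?_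
      nth_rewrite 1 [← Real.rpow_one 2]
      rw [← Real.rpow_add two_pos]
      refine Real.rpow_le_rpow_of_exponent_le one_le_two ?_
      have : i + j + 1 ≤ 0 := by omega
      have : (i : ℝ) + j + 1 ≤ 0 := by exact_mod_cast this
      linarith
  · beta_reduce
    split_ifs with hij
    · have hij' : (0 : ℝ) ≤ (i : ℝ) + j := by exact_mod_cast hij
      refine (hMq i j).trans_eq ?_
      rw [max_eq_left hij', min_eq_right hij', abs_of_nonneg hij', toReal_top]
      simp only [_root_.div_zero, _root_.sub_zero, mul_zero, add_zero]
      congr 3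
      ring
    · simp
  · refine (horth V (fun i => 2 ^ ((i : ℝ) * (1 / 2 - 1 / q.toReal)) * blockMass (radAmp n G) i) hV
      fun i p hp => ?_).trans ?_
    · have hp0 : 0 ≤ p := by linarith
      refine (eLpNorm_le_interp (hV i).aemeasurable (q := ENNReal.ofReal p) ?_
        (Filter.Eventually.of_forall (hVi i)) (hV2 i)).trans_eq ?_
      · rw [← ENNReal.ofReal_ofNat]; exact ENNReal.ofReal_le_ofReal hp
      · have := two_rpow_combine (ENNReal.ofReal c₁) (blockMass (radAmp n G) i) ((i : ℝ) / 2) 0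
          (θ := 2 / p) (by positivity) ((div_le_one (by linarith)).2 hp)
        rw [ENNReal.toReal_ofReal hp0]
        simp only [ENNReal.rpow_zero, mul_one] at this
        rw [this, mul_assoc, mul_assoc, ← mul_assoc (2 ^ _) (2 ^ _),
          ← ENNReal.rpow_add _ _ two_ne_zero ofNat_ne_top]
        congr 3
        ring
    · rw [mul_assoc, dataNorm, ← ENNReal.mul_rpow_of_nonneg _ _ (by norm_num),
        show (n : ℝ) / 2 - 1 / q.toReal = 1 / 2 - 1 / q.toReal + ((n : ℝ) - 1) / 2 by ring]
      gcongr
      exact hmass G hG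

end SpaceSup

section MaximalFunction

/-- The average of `F` over the interval of radius `2 ^ j` around `t`. -/
noncomputable def dyadicAvg (F : ℝ → ℝ≥0∞) (j : ℤ) (t : ℝ) : ℝ≥0∞ :=
  (ENNReal.ofReal (2 * 2 ^ (j : ℝ)))⁻¹ * ∫⁻ s in Metric.closedBall t ((2 : ℝ) ^ (j : ℝ)), F s

/-- The centred Hardy–Littlewood maximal function over dyadic radii. -/
noncomputable def dyadicMax (F : ℝ → ℝ≥0∞) (t : ℝ) : ℝ≥0∞ := ⨆ j : ℤ, dyadicAvg F j t

theorem ofReal_two_mul_rpow_ne_zero (j : ℤ) : ENNReal.ofReal (2 * 2 ^ (j : ℝ)) ≠ 0 := by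
  have : (0 : ℝ) < 2 * 2 ^ (j : ℝ) := by positivity
  simpa using this

theorem measurable_dyadicAvg {F : ℝ → ℝ≥0∞} (hF : Measurable F) (j : ℤ) :
    Measurable (dyadicAvg F j) := by
  refine Measurable.const_mul ?_ _
  have h : (fun t => ∫⁻ s in Metric.closedBall t ((2 : ℝ) ^ (j : ℝ)), F s)
      = fun t => ∫⁻ s, {p : ℝ × ℝ | dist p.2 p.1 ≤ (2 : ℝ) ^ (j : ℝ)}.indicator
          (fun p => F p.2) (t, s) := by
    funext t
    rw [← lintegral_indicator measurableSet_closedBall]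
    rfl
  rw [h]
  refine Measurable.lintegral_prod_right' ?_
  refine (hF.comp measurable_snd).indicator ?_
  exact measurableSet_le (measurable_snd.dist measurable_fst) measurable_const

theorem measurable_dyadicMax {F : ℝ → ℝ≥0∞} (hF : Measurable F) : Measurable (dyadicMax F) :=
  Measurable.iSup fun j => measurable_dyadicAvg hF j

theorem mul_volume_le_of_lt_dyadicAvg {F : ℝ → ℝ≥0∞} {l : ℝ≥0∞} {j : ℤ} {t : ℝ}
    (h : l < dyadicAvg F j t) :
    l * ENNReal.ofReal (2 * 2 ^ (j : ℝ))
      ≤ ∫⁻ s in Metric.closedBall t ((2 : ℝ) ^ (j : ℝ)), F s := by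
  have h1 := h.le
  rw [dyadicAvg, mul_comm, ← div_eq_mul_inv,
    ENNReal.le_div_iff_mul_le (Or.inl (ofReal_two_mul_rpow_ne_zero j))
      (Or.inl ofReal_ne_top)] at h1
  exact h1

theorem mul_volume_lt_dyadicMax_le (F : ℝ → ℝ≥0∞) {l : ℝ≥0∞} (hl : l ≠ 0) (hl' : l ≠ ∞) :
    l * volume {t | l < dyadicMax F t} ≤ 4 * ∫⁻ s, F s := by
  by_cases hF : ∫⁻ s, F s = ∞
  · rw [hF]; simp
  have hj : ∀ t ∈ {t | l < dyadicMax F t}, ∃ j : ℤ, l < dyadicAvg F j t := by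
    intro t ht
    exact lt_iSup_iff.1 ht
  choose! j hj using hj
  have hvol : ∀ t ∈ {t | l < dyadicMax F t}, l * ENNReal.ofReal (2 * 2 ^ (j t : ℝ))
      ≤ ∫⁻ s in Metric.closedBall t ((2 : ℝ) ^ (j t : ℝ)), F s := fun t ht =>
    mul_volume_le_of_lt_dyadicAvg (hj t ht)
  have hr : ∀ t ∈ {t | l < dyadicMax F t},
      (2 : ℝ) ^ (j t : ℝ) ≤ ((∫⁻ s, F s) / l).toReal := by
    intro t ht
    have h1 : ENNReal.ofReal (2 * 2 ^ (j t : ℝ)) ≤ (∫⁻ s, F s) / l := by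
      rw [ENNReal.le_div_iff_mul_le (Or.inl hl) (Or.inl hl'), mul_comm]
      exact (hvol t ht).trans (setLIntegral_le_lintegral _ _)
    have h2 := (ENNReal.ofReal_le_iff_le_toReal (ENNReal.div_ne_top hF hl)).1 h1
    have h3 : (0 : ℝ) < 2 ^ (j t : ℝ) := by positivity
    linarith
  obtain ⟨u, hut, hud, hcov⟩ := Vitali.exists_disjoint_subfamily_covering_enlargement_closedBall
    {t | l < dyadicMax F t} (fun t => t) (fun t => (2 : ℝ) ^ (j t : ℝ)) _ hr 4 (by norm_num)
  have huc : u.Countable := hud.countable_of_nonempty_interior fun t _ => by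
    refine ⟨t, Metric.ball_subset_interior_closedBall (Metric.mem_ball_self (by positivity))⟩
  have hsub : {t | l < dyadicMax F t} ⊆ ⋃ t ∈ u, Metric.closedBall t (4 * (2 : ℝ) ^ (j t : ℝ)) := by
    intro t ht
    obtain ⟨b, hb, hbs⟩ := hcov t ht
    exact Set.mem_biUnion hb (hbs (Metric.mem_closedBall_self (by positivity)))
  calc l * volume {t | l < dyadicMax F t}
      ≤ l * ∑' t : u, volume (Metric.closedBall (t : ℝ) (4 * (2 : ℝ) ^ (j t : ℝ))) :=
        mul_le_mul_right ((measure_mono hsub).trans (measure_biUnion_le _ huc _)) _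
    _ = ∑' t : u, 4 * (l * ENNReal.ofReal (2 * 2 ^ (j t : ℝ))) := by
        rw [← ENNReal.tsum_mul_left]
        refine tsum_congr fun t => ?_
        rw [Real.volume_closedBall, show 2 * (4 * (2 : ℝ) ^ (j t : ℝ)) = 4 * (2 * 2 ^ (j t : ℝ)) by
          ring, ENNReal.ofReal_mul (by norm_num), ENNReal.ofReal_ofNat]
        ring
    _ ≤ ∑' t : u, 4 * ∫⁻ s in Metric.closedBall (t : ℝ) ((2 : ℝ) ^ (j t : ℝ)), F s :=
        ENNReal.tsum_le_tsum fun t => mul_le_mul_right (hvol t (hut t.2)) _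
    _ = 4 * ∫⁻ s in ⋃ t ∈ u, Metric.closedBall t ((2 : ℝ) ^ (j t : ℝ)), F s := by
        rw [ENNReal.tsum_mul_left, lintegral_biUnion huc (fun _ _ => measurableSet_closedBall) hud]
    _ ≤ 4 * ∫⁻ s, F s := mul_le_mul_right (setLIntegral_le_lintegral _ _) _

theorem dyadicMax_le_add (F : ℝ → ℝ≥0∞) (l : ℝ≥0∞) (t : ℝ) :
    dyadicMax F t ≤ dyadicMax ({s | l < F s}.indicator F) t + l := by
  refine iSup_le fun j => ?_
  refine le_trans ?_ (add_le_add_left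
    (le_iSup (fun j => dyadicAvg ({s | l < F s}.indicator F) j t) j) l)
  have hpt : ∀ s, F s ≤ {s | l < F s}.indicator F s + l := by
    intro s
    by_cases h : l < F s
    · rw [Set.indicator_of_mem (by exact h)]; exact le_self_add
    · rw [Set.indicator_of_notMem (by exact h), zero_add]; exact not_lt.1 h
  calc dyadicAvg F j t ≤ (ENNReal.ofReal (2 * 2 ^ (j : ℝ)))⁻¹ *
        ∫⁻ s in Metric.closedBall t ((2 : ℝ) ^ (j : ℝ)), ({s | l < F s}.indicator F s + l) :=
      mul_le_mul_right (lintegral_mono hpt) _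
    _ = dyadicAvg ({s | l < F s}.indicator F) j t + l := by
      rw [lintegral_add_right _ measurable_const, setLIntegral_const, Real.volume_closedBall,
        mul_add, dyadicAvg, mul_comm l, ← mul_assoc,
        ENNReal.inv_mul_cancel (ofReal_two_mul_rpow_ne_zero j) ofReal_ne_top, one_mul]

theorem mul_volume_two_mul_lt_le (F : ℝ → ℝ≥0∞) {l : ℝ≥0∞} (hl : l ≠ 0)
    (hl' : l ≠ ∞) :
    l * volume {t | 2 * l < dyadicMax F t} ≤ 4 * ∫⁻ s, {s | l < F s}.indicator F s := by
  refine le_trans (mul_le_mul_right (measure_mono ?_) _)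
    (mul_volume_lt_dyadicMax_le ({s | l < F s}.indicator F) hl hl')
  intro t ht
  have h1 : 2 * l < dyadicMax ({s | l < F s}.indicator F) t + l :=
    lt_of_lt_of_le ht (dyadicMax_le_add F l t)
  rw [two_mul] at h1
  exact lt_of_add_lt_add_right h1

theorem sq_le_tsum_dyadic (x : ℝ≥0∞) :
    x ^ 2 ≤ 16 * ∑' k : ℤ, {y : ℝ≥0∞ | 2 * 2 ^ k < y}.indicator (fun _ => (2 ^ k) ^ 2) x := by
  rcases eq_or_ne x 0 with rfl | hx0
  · simp
  rcases eq_or_ne x ∞ with rfl | hx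
  · have h : ∀ k : ℕ, ((2 : ℝ≥0∞) ^ k) ^ 2 ≤
        ∑' k : ℤ, {y : ℝ≥0∞ | 2 * 2 ^ k < y}.indicator (fun _ => ((2 : ℝ≥0∞) ^ k) ^ 2) ∞ := by
      intro k
      refine le_trans ?_ (ENNReal.le_tsum (k : ℤ))
      rw [Set.indicator_of_mem]
      · simp
      · show 2 * (2 : ℝ≥0∞) ^ (k : ℤ) < ∞
        rw [zpow_natCast]
        exact ENNReal.mul_lt_top ofNat_lt_top (ENNReal.pow_lt_top ofNat_lt_top)
    have htop : ∑' k : ℤ, {y : ℝ≥0∞ | 2 * 2 ^ k < y}.indicator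
        (fun _ => ((2 : ℝ≥0∞) ^ k) ^ 2) ∞ = ∞ := by
      refine ENNReal.eq_top_of_forall_nnreal_le fun r => ?_
      obtain ⟨k, hk⟩ := pow_unbounded_of_one_lt r (one_lt_two : (1 : NNReal) < 2)
      refine le_trans ?_ (h k)
      have h1 : (r : ℝ≥0∞) ≤ 2 ^ k := by exact_mod_cast hk.le
      refine h1.trans ?_
      rw [sq]
      exact le_mul_of_one_le_left' (one_le_pow₀ one_le_two)
    rw [htop]
    simp
  · obtain ⟨m, hm1, hm2⟩ := ENNReal.exists_mem_Ioc_zpow hx0 hx one_lt_two ofNat_ne_top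
    have e1 : (2 : ℝ≥0∞) * 2 ^ (m - 1) = 2 ^ m := by
      rw [ENNReal.zpow_sub two_ne_zero ofNat_ne_top, zpow_one, mul_comm, mul_assoc,
        ENNReal.inv_mul_cancel two_ne_zero ofNat_ne_top, mul_one]
    have e2 : (2 : ℝ≥0∞) ^ (m + 1) = 4 * 2 ^ (m - 1) := by
      rw [ENNReal.zpow_add two_ne_zero ofNat_ne_top, ← e1, zpow_one]
      ring
    calc x ^ 2 ≤ (4 * 2 ^ (m - 1)) ^ 2 := pow_le_pow_left' (hm2.trans e2.le) 2
      _ = 16 * (2 ^ (m - 1)) ^ 2 := by rw [mul_pow]; norm_num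
      _ ≤ _ := by
        refine mul_le_mul_right (le_trans ?_ (ENNReal.le_tsum (m - 1))) _
        rw [Set.indicator_of_mem]
        show 2 * (2 : ℝ≥0∞) ^ (m - 1) < x
        rw [e1]; exact hm1

theorem exists_tsum_dyadic_le :
    ∃ S : ℝ≥0∞, S ≠ ∞ ∧ ∀ x : ℝ≥0∞,
      ∑' k : ℤ, {y : ℝ≥0∞ | 2 ^ k < y}.indicator (fun _ => (2 : ℝ≥0∞) ^ k) x ≤ S * x := by
  refine ⟨2 * ∑' k : ℤ, (2 : ℝ≥0∞) ^ (-(1 * |(k : ℝ)|)),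
    ENNReal.mul_ne_top ofNat_ne_top (tsum_two_rpow_neg_abs_ne_top one_pos), fun x => ?_⟩
  have hS : 2 * ∑' k : ℤ, (2 : ℝ≥0∞) ^ (-(1 * |(k : ℝ)|)) ≠ 0 := by
    refine mul_ne_zero two_ne_zero fun h => ?_
    have := ENNReal.tsum_eq_zero.1 h 0
    simp at this
  rcases eq_or_ne x 0 with rfl | hx0
  · simp
  rcases eq_or_ne x ∞ with rfl | hx
  · rw [ENNReal.mul_top hS]; exact le_top
  · obtain ⟨m, hm1, hm2⟩ := ENNReal.exists_mem_Ioc_zpow hx0 hx one_lt_two ofNat_ne_top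
    calc ∑' k : ℤ, {y : ℝ≥0∞ | 2 ^ k < y}.indicator (fun _ => (2 : ℝ≥0∞) ^ k) x
        ≤ ∑' k : ℤ, (2 : ℝ≥0∞) ^ (-(1 * |((k - m : ℤ) : ℝ)|)) * 2 ^ m := by
          refine ENNReal.tsum_le_tsum fun k => ?_
          by_cases hk : (2 : ℝ≥0∞) ^ k < x
          · have hkm : k ≤ m := by
              by_contra hc
              push Not at hc
              have : (2 : ℝ≥0∞) ^ (m + 1) ≤ 2 ^ k :=
                ENNReal.zpow_le_of_le one_le_two (by omega)
              exact absurd (lt_of_le_of_lt (hm2.trans this) hk) (lt_irrefl _)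
            rw [Set.indicator_of_mem (by exact hk)]
            have e : (-(1 * |((k - m : ℤ) : ℝ)|)) = ((k - m : ℤ) : ℝ) := by
              rw [abs_of_nonpos (by exact_mod_cast (by omega : k - m ≤ 0))]; ring
            rw [e, ENNReal.rpow_intCast, ← ENNReal.zpow_add two_ne_zero ofNat_ne_top,
              sub_add_cancel]
          · rw [Set.indicator_of_notMem (by exact hk)]; exact zero_le
      _ = (∑' k : ℤ, (2 : ℝ≥0∞) ^ (-(1 * |(k : ℝ)|))) * 2 ^ m := by
          rw [ENNReal.tsum_mul_right]
          congr 1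
          exact (Equiv.subRight m).tsum_eq (fun k : ℤ => (2 : ℝ≥0∞) ^ (-(1 * |(k : ℝ)|)))
      _ ≤ (∑' k : ℤ, (2 : ℝ≥0∞) ^ (-(1 * |(k : ℝ)|))) * x := mul_le_mul_right hm1.le _
      _ ≤ _ := by
          rw [mul_assoc]
          exact le_mul_of_one_le_left' one_le_two

/-- The dyadic maximal function is bounded on `L²(ℝ)`. -/
theorem exists_lintegral_dyadicMax_sq_le :
    ∃ C : ℝ≥0∞, C ≠ ∞ ∧ ∀ F : ℝ → ℝ≥0∞, Measurable F →
      ∫⁻ t, dyadicMax F t ^ 2 ≤ C * ∫⁻ t, F t ^ 2 := by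
  obtain ⟨S, hS, hSx⟩ := exists_tsum_dyadic_le
  refine ⟨16 * (4 * S), by finiteness, fun F hF => ?_⟩
  have hM := measurable_dyadicMax hF
  have hset : ∀ k : ℤ, MeasurableSet {y : ℝ≥0∞ | 2 * 2 ^ k < y} := fun k => measurableSet_Ioi
  have hset' : ∀ k : ℤ, MeasurableSet {y : ℝ≥0∞ | 2 ^ k < y} := fun k => measurableSet_Ioi
  have hterm : ∀ k : ℤ, ∫⁻ t, {y : ℝ≥0∞ | 2 * 2 ^ k < y}.indicator
        (fun _ => ((2 : ℝ≥0∞) ^ k) ^ 2) (dyadicMax F t)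
      ≤ ∫⁻ s, 4 * ({y : ℝ≥0∞ | 2 ^ k < y}.indicator (fun _ => (2 : ℝ≥0∞) ^ k) (F s) * F s) := by
    intro k
    have h0 : (2 : ℝ≥0∞) ^ k ≠ 0 := (ENNReal.zpow_pos two_ne_zero ofNat_ne_top k).ne'
    have h1 : (2 : ℝ≥0∞) ^ k ≠ ∞ := (ENNReal.zpow_lt_top two_ne_zero ofNat_ne_top k).ne
    have e1 : ∫⁻ t, {y : ℝ≥0∞ | 2 * 2 ^ k < y}.indicator
        (fun _ => ((2 : ℝ≥0∞) ^ k) ^ 2) (dyadicMax F t)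
        = (2 ^ k) ^ 2 * volume {t | 2 * 2 ^ k < dyadicMax F t} := by
      exact lintegral_indicator_const (hM (hset k)) _
    have e2 : ∀ s, 4 * ({y : ℝ≥0∞ | 2 ^ k < y}.indicator (fun _ => (2 : ℝ≥0∞) ^ k) (F s) * F s)
        = 4 * 2 ^ k * {s | 2 ^ k < F s}.indicator F s := by
      intro s
      by_cases h : 2 ^ k < F s
      · rw [Set.indicator_of_mem (by exact h), Set.indicator_of_mem (by exact h), mul_assoc]
      · rw [Set.indicator_of_notMem (by exact h), Set.indicator_of_notMem (by exact h)]; simp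
    simp_rw [e2]
    rw [e1, lintegral_const_mul _ (hF.indicator (by exact hF (hset' k))), sq, mul_assoc, mul_comm 4,
      mul_assoc]
    exact mul_le_mul_right (mul_volume_two_mul_lt_le F h0 h1) _
  calc ∫⁻ t, dyadicMax F t ^ 2
      ≤ ∫⁻ t, 16 * ∑' k : ℤ, {y : ℝ≥0∞ | 2 * 2 ^ k < y}.indicator
          (fun _ => ((2 : ℝ≥0∞) ^ k) ^ 2) (dyadicMax F t) :=
        lintegral_mono fun t => sq_le_tsum_dyadic _
    _ = 16 * ∑' k : ℤ, ∫⁻ t, {y : ℝ≥0∞ | 2 * 2 ^ k < y}.indicator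
          (fun _ => ((2 : ℝ≥0∞) ^ k) ^ 2) (dyadicMax F t) := by
        have hm : ∀ k : ℤ, Measurable fun t => {y : ℝ≥0∞ | 2 * 2 ^ k < y}.indicator
            (fun _ => ((2 : ℝ≥0∞) ^ k) ^ 2) (dyadicMax F t) := fun k =>
          (measurable_const.indicator (hset k)).comp hM
        rw [lintegral_const_mul _ (Measurable.tsum hm),
          lintegral_tsum fun k => (hm k).aemeasurable]
    _ ≤ 16 * ∑' k : ℤ, ∫⁻ s, 4 * ({y : ℝ≥0∞ | 2 ^ k < y}.indicator
          (fun _ => (2 : ℝ≥0∞) ^ k) (F s) * F s) :=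
        mul_le_mul_right (ENNReal.tsum_le_tsum hterm) _
    _ = 16 * ∫⁻ s, 4 * ((∑' k : ℤ, {y : ℝ≥0∞ | 2 ^ k < y}.indicator
          (fun _ => (2 : ℝ≥0∞) ^ k) (F s)) * F s) := by
        have hm : ∀ k : ℤ, Measurable fun s => 4 * ({y : ℝ≥0∞ | 2 ^ k < y}.indicator
            (fun _ => (2 : ℝ≥0∞) ^ k) (F s) * F s) := fun k =>
          (((measurable_const.indicator (hset' k)).comp hF).mul hF).const_mul _
        rw [← lintegral_tsum fun k => (hm k).aemeasurable]
        simp_rw [ENNReal.tsum_mul_left, ENNReal.tsum_mul_right]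
    _ ≤ 16 * ∫⁻ s, 4 * S * F s ^ 2 := by
        refine mul_le_mul_right (lintegral_mono fun s => ?_) _
        rw [mul_assoc, sq, ← mul_assoc S]
        exact mul_le_mul_right (mul_le_mul_left (hSx _) _) _
    _ = 16 * (4 * S) * ∫⁻ t, F t ^ 2 := by
        rw [lintegral_const_mul _ (hF.pow_const 2)]
        ring

end MaximalFunction

section Endpoint

variable {n : ℕ} {ε : ℝ}

theorem integral_phase (hε : ε = 1 ∨ ε = -1) (t a ρ : ℝ) :
    ∫ s in (t - a)..(t + a), phase ε s ρ = 2 * a * (phase ε t ρ * (sinc (2 * π * a * ρ) : ℝ)) := by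
  rcases eq_or_ne a 0 with rfl | ha
  · simp
  rcases eq_or_ne ρ 0 with rfl | hρ
  · simp [phase]
    ring
  have hε0 : (ε : ℂ) ≠ 0 := by rcases hε with rfl | rfl <;> simp
  have hc : (ε * (2 * π * ρ) * Complex.I : ℂ) ≠ 0 := by
    refine mul_ne_zero (mul_ne_zero hε0 (mul_ne_zero (mul_ne_zero two_ne_zero ?_) ?_))
      Complex.I_ne_zero
    · exact_mod_cast Real.pi_ne_zero
    · exact_mod_cast hρ
  have h1 : ∀ s : ℝ, phase ε s ρ = Complex.exp ((ε * (2 * π * ρ) * Complex.I) * s) := fun s => by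
    rw [phase]; congr 1; ring
  simp_rw [h1]
  rw [integral_exp_mul_complex hc, Real.sinc_of_ne_zero (by positivity)]
  have h2 : Complex.exp ((ε * (2 * π * ρ) * Complex.I) * ((t + a : ℝ) : ℂ))
      - Complex.exp ((ε * (2 * π * ρ) * Complex.I) * ((t - a : ℝ) : ℂ))
      = Complex.exp ((ε * (2 * π * ρ) * Complex.I) * t) *
        (2 * Complex.I * Complex.sin (ε * (2 * π * a * ρ))) := by
    rw [Complex.sin, show ((ε * (2 * π * ρ) * Complex.I) * ((t + a : ℝ) : ℂ) : ℂ)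
        = (ε * (2 * π * ρ) * Complex.I) * t + ε * (2 * π * a * ρ) * Complex.I by push_cast; ring,
      show ((ε * (2 * π * ρ) * Complex.I) * ((t - a : ℝ) : ℂ) : ℂ)
        = (ε * (2 * π * ρ) * Complex.I) * t + -(ε * (2 * π * a * ρ)) * Complex.I by push_cast; ring,
      Complex.exp_add, Complex.exp_add]
    linear_combination (-(Complex.exp ((ε * (2 * π * ρ) * Complex.I) * t)) *
      (Complex.exp (-(ε * (2 * π * a * ρ)) * Complex.I) -
        Complex.exp ((ε * (2 * π * a * ρ)) * Complex.I))) * Complex.I_sq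
  have h3 : Complex.sin (ε * (2 * π * a * ρ)) = ε * Complex.sin (2 * π * a * ρ) := by
    rcases hε with rfl | rfl <;> simp
  rw [h2, h3]
  have hπ : (π : ℂ) ≠ 0 := by exact_mod_cast Real.pi_ne_zero
  have hρ' : (ρ : ℂ) ≠ 0 := by exact_mod_cast hρ
  have ha' : (a : ℂ) ≠ 0 := by exact_mod_cast ha
  push_cast
  field_simp

theorem waveInt_sinc (hε : ε = 1 ∨ ε = -1) {H : ℝ → ℂ} (hH : Integrable H) {a : ℝ} (ha : 0 ≤ a)
    (t R : ℝ) :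
    2 * a * waveInt ε H (fun ρ _ => sinc (2 * π * a * ρ)) t R
      = ∫ s in Metric.closedBall t a, ∫ ρ, phase ε s ρ * H ρ := by
  have : IsFiniteMeasure (volume.restrict (Metric.closedBall t a)) :=
    isFiniteMeasure_restrict.2 measure_closedBall_lt_top.ne
  have hint : Integrable (Function.uncurry fun s ρ => phase ε s ρ * H ρ)
      ((volume.restrict (Metric.closedBall t a)).prod volume) := by
    have h1 : Integrable (fun p : ℝ × ℝ => (1 : ℂ) * H p.2)
        ((volume.restrict (Metric.closedBall t a)).prod volume) :=
      Integrable.mul_prod (f := fun _ : ℝ => (1 : ℂ)) (integrable_const _) hH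
    refine h1.mono ?_ (Filter.Eventually.of_forall fun p => ?_)
    · refine (continuous_phase ε).aestronglyMeasurable.mul ?_
      exact hH.aestronglyMeasurable.comp_snd
    · simp [Function.uncurry, norm_phase]
  rw [integral_integral_swap hint, waveInt, ← integral_const_mul]
  refine integral_congr_ae (Filter.Eventually.of_forall fun ρ => ?_)
  beta_reduce
  rw [integral_mul_const, Real.closedBall_eq_Icc, integral_Icc_eq_integral_Ioc,
    ← intervalIntegral.integral_of_le (by linarith), integral_phase hε]
  ring

theorem enorm_waveInt_sinc_le (hε : ε = 1 ∨ ε = -1) {H : ℝ → ℂ} (hH : Integrable H) (j : ℤ)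
    (t R : ℝ) :
    ‖waveInt ε H (fun ρ _ => sinc (2 * π * 2 ^ (j : ℝ) * ρ)) t R‖ₑ
      ≤ dyadicAvg (fun s => ‖∫ ρ, phase ε s ρ * H ρ‖ₑ) j t := by
  have h2 : (0 : ℝ) < 2 ^ (j : ℝ) := by positivity
  have h := waveInt_sinc hε hH h2.le t R
  rw [dyadicAvg, mul_comm (ENNReal.ofReal _)⁻¹, ← div_eq_mul_inv,
    ENNReal.le_div_iff_mul_le (Or.inl (ofReal_two_mul_rpow_ne_zero j)) (Or.inl ofReal_ne_top)]
  refine le_trans (le_of_eq ?_) (enorm_integral_le_lintegral_enorm _)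
  rw [← h, enorm_mul, mul_comm]
  congr 1
  rw [← ofReal_norm]
  congr 1
  rw [show (2 * ((2 ^ (j : ℝ) : ℝ) : ℂ)) = ((2 * 2 ^ (j : ℝ) : ℝ) : ℂ) by push_cast; ring,
    Complex.norm_real, Real.norm_of_nonneg (by positivity)]

theorem abs_one_sub_sinc_le {x : ℝ} (hx : 0 ≤ x) : |1 - sinc x| ≤ 2 * x := by
  rcases hx.eq_or_lt with rfl | hx0
  · simp
  rcases le_total x 1 with h1 | h1
  · have h2 := Real.sin_gt_sub_cube hx0
    have h3 := Real.sin_le hx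
    rw [Real.sinc_of_ne_zero hx0.ne', show 1 - sin x / x = (x - sin x) / x by field_simp,
      abs_of_nonneg (div_nonneg (by linarith) hx), div_le_iff₀ hx0]
    nlinarith
  · have := Real.abs_sinc_le_one x
    rw [abs_le] at this ⊢
    constructor <;> linarith

theorem lintegral_sq_eq_tsum_blockMass {H : ℝ → ℂ} (hs : ∀ ρ, ρ ≤ 0 → H ρ = 0) :
    ∫⁻ ρ, ‖H ρ‖ₑ ^ 2 = ∑' i, blockMass H i ^ 2 := by
  have h1 : ∫⁻ ρ, ‖H ρ‖ₑ ^ 2 = ∫⁻ ρ in ⋃ i, shell i, ‖H ρ‖ₑ ^ 2 := by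
    rw [iUnion_shell, ← lintegral_indicator measurableSet_Ioi]
    refine lintegral_congr fun ρ => ?_
    by_cases hρ : 0 < ρ
    · rw [Set.indicator_of_mem (by exact hρ)]
    · rw [Set.indicator_of_notMem (by exact hρ), hs ρ (not_lt.1 hρ)]; simp
  rw [h1, lintegral_iUnion measurableSet_shell pairwise_disjoint_shell]
  refine tsum_congr fun i => ?_
  rw [← lintegral_block_sq, ← lintegral_indicator (measurableSet_shell i)]
  refine lintegral_congr fun ρ => ?_
  by_cases hρ : ρ ∈ shell i <;> simp [block, hρ]

end Endpoint

section EndpointBound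

variable {n : ℕ} {ε : ℝ}

theorem eLpNorm_two_sq (Y : ℝ → ℝ≥0∞) : eLpNorm Y 2 volume ^ 2 = ∫⁻ t, Y t ^ 2 := by
  rw [← eLpNorm_sq_eq, ENNReal.div_self two_ne_zero ofNat_ne_top,
    eLpNorm_one_eq_lintegral_enorm]
  simp

/-- The spherical kernel minus its low-frequency part at the scale `2 ^ j`. -/
noncomputable def cutKer (i₀ : Fin n) (j : ℤ) (ρ R : ℝ) : ℝ :=
  radKer i₀ ρ R - sphKer i₀ 0 * sinc (2 * π * 2 ^ (j : ℝ) * ρ)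

theorem continuous_cutKer (i₀ : Fin n) (j : ℤ) :
    Continuous fun p : ℝ × ℝ => cutKer i₀ j p.1 p.2 := by
  have h1 : Continuous fun p : ℝ × ℝ => sinc (2 * π * 2 ^ (j : ℝ) * p.1) :=
    Real.continuous_sinc.comp (by fun_prop)
  exact (continuous_radKer i₀).sub (h1.const_mul _)

theorem hasDerivAt_cutKer (i₀ : Fin n) (j : ℤ) (ρ R : ℝ) :
    HasDerivAt (cutKer i₀ j ρ) (radKerDeriv i₀ ρ R) R :=
  (hasDerivAt_radKer i₀ ρ R).sub_const _

theorem abs_cutKer_le (i₀ : Fin n) {C : ℝ} (hC : 0 ≤ C) (hb : ∀ y, |sphKer i₀ y| ≤ C) (j : ℤ)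
    (ρ R : ℝ) : |cutKer i₀ j ρ R| ≤ 2 * C := by
  have h1 : |sphKer i₀ 0 * sinc (2 * π * 2 ^ (j : ℝ) * ρ)| ≤ C * 1 := by
    rw [abs_mul]
    exact mul_le_mul (hb 0) (Real.abs_sinc_le_one _) (abs_nonneg _) hC
  have h2 : |radKer i₀ ρ R| ≤ C := hb _
  refine (abs_sub _ _).trans ?_
  linarith

theorem abs_cutKer_le_of_nonneg (i₀ : Fin n) (hn : 3 ≤ n) {C : ℝ} (hC : 0 ≤ C)
    (hb : ∀ y, |sphKer i₀ y| ≤ C)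
    (hd : ∀ y, 1 ≤ y → |sphKer i₀ y| ≤ C * y ^ (-(((n : ℝ) - 1) / 2)))
    {i j : ℤ} (hij : 0 ≤ (i : ℝ) + j) {ρ R : ℝ} (hρ : ρ ∈ shell i) (hR : (2 : ℝ) ^ (j : ℝ) ≤ R) :
    |cutKer i₀ j ρ R| ≤ 2 * C * 2 ^ (-((i : ℝ) + j)) := by
  have hn' : (3 : ℝ) ≤ n := by exact_mod_cast hn
  have h1 : |radKer i₀ ρ R| ≤ C * 2 ^ (-((i : ℝ) + j)) := by
    have h := abs_le_of_decay hC (by linarith) hb hd hρ hR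
    rw [max_eq_left hij] at h
    refine h.trans (mul_le_mul_of_nonneg_left
      (Real.rpow_le_rpow_of_exponent_le one_le_two ?_) hC)
    nlinarith
  have hρ0 := pos_of_mem_shell hρ
  have h2j : (0 : ℝ) < 2 ^ (j : ℝ) := by positivity
  have h2 : |sinc (2 * π * 2 ^ (j : ℝ) * ρ)| ≤ 2 ^ (-((i : ℝ) + j)) := by
    have hx : (2 : ℝ) ^ ((i : ℝ) + j) ≤ 2 * π * 2 ^ (j : ℝ) * ρ := by
      rw [Real.rpow_add two_pos]
      have h3 := mul_le_mul_of_nonneg_left (mem_shell_iff.1 hρ).1 h2j.le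
      have h4 : (0 : ℝ) < 2 ^ (j : ℝ) * ρ := by positivity
      nlinarith [Real.pi_gt_three]
    have hx0 : 0 < 2 * π * 2 ^ (j : ℝ) * ρ := by positivity
    rw [Real.sinc_of_ne_zero hx0.ne', abs_div, abs_of_pos hx0, Real.rpow_neg zero_le_two,
      ← one_div]
    exact div_le_div₀ zero_le_one (Real.abs_sin_le_one _) (by positivity) hx
  have h5 : |sphKer i₀ 0 * sinc (2 * π * 2 ^ (j : ℝ) * ρ)| ≤ C * 2 ^ (-((i : ℝ) + j)) := by
    rw [abs_mul]
    exact mul_le_mul (hb 0) h2 (abs_nonneg _) hC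
  refine (abs_sub _ _).trans ?_
  linarith

theorem abs_cutKer_le_of_mem (i₀ : Fin n) {C : ℝ} (hC : 0 ≤ C)
    (hb : ∀ y, |sphKer i₀ y| ≤ C) (hl : ∀ y, |sphKer i₀ y - sphKer i₀ 0| ≤ C * |y|)
    {i j : ℤ} {ρ R : ℝ} (hρ : ρ ∈ shell i)
    (hR : R ∈ Set.Icc ((2 : ℝ) ^ (j : ℝ)) (2 * 2 ^ (j : ℝ))) :
    |cutKer i₀ j ρ R| ≤ 40 * C * 2 ^ ((i : ℝ) + j) := by
  have hρ0 := pos_of_mem_shell hρ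
  have h2j : (0 : ℝ) < 2 ^ (j : ℝ) := by positivity
  have h2i : (0 : ℝ) < 2 ^ (i : ℝ) := by positivity
  have hρ2 := (mem_shell_iff.1 hρ).2.le
  rw [Real.rpow_add two_pos]
  have h1 : |radKer i₀ ρ R - sphKer i₀ 0| ≤ C * (4 * (2 ^ (i : ℝ) * 2 ^ (j : ℝ))) := by
    refine (hl _).trans (mul_le_mul_of_nonneg_left ?_ hC)
    rw [abs_of_nonneg (mul_nonneg hρ0.le (h2j.le.trans hR.1))]
    refine (mul_le_mul hρ2 hR.2 (h2j.le.trans hR.1) (by positivity)).trans_eq ?_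
    ring
  have h2 : |1 - sinc (2 * π * 2 ^ (j : ℝ) * ρ)| ≤ 36 * (2 ^ (i : ℝ) * 2 ^ (j : ℝ)) := by
    refine (abs_one_sub_sinc_le (by positivity)).trans ?_
    have h3 : 2 ^ (j : ℝ) * ρ ≤ 2 * (2 ^ (i : ℝ) * 2 ^ (j : ℝ)) := by
      refine (mul_le_mul_of_nonneg_left hρ2 h2j.le).trans_eq ?_
      ring
    have h4 : (0 : ℝ) < 2 ^ (j : ℝ) * ρ := by positivity
    have h5 : π * (2 ^ (j : ℝ) * ρ) ≤ 4 * (2 ^ (j : ℝ) * ρ) :=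
      mul_le_mul_of_nonneg_right Real.pi_le_four h4.le
    have h6 : (0 : ℝ) < 2 ^ (i : ℝ) * 2 ^ (j : ℝ) := by positivity
    calc 2 * (2 * π * 2 ^ (j : ℝ) * ρ) = 4 * (π * (2 ^ (j : ℝ) * ρ)) := by ring
      _ ≤ 36 * (2 ^ (i : ℝ) * 2 ^ (j : ℝ)) := by linarith
  have h3 : |sphKer i₀ 0 * (1 - sinc (2 * π * 2 ^ (j : ℝ) * ρ))|
      ≤ C * (36 * (2 ^ (i : ℝ) * 2 ^ (j : ℝ))) := by
    rw [abs_mul]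
    exact mul_le_mul (hb 0) h2 (abs_nonneg _) hC
  have e : cutKer i₀ j ρ R = (radKer i₀ ρ R - sphKer i₀ 0)
      + sphKer i₀ 0 * (1 - sinc (2 * π * 2 ^ (j : ℝ) * ρ)) := by
    rw [cutKer]; ring
  rw [e]
  refine (abs_add_le _ _).trans ?_
  linarith

theorem cutKer_cost_le {C : ℝ} (k : ℝ) :
    (1 + 2 ^ k) * (40 * C * 2 ^ (-|k|)) ^ 2 + 2 ^ k * (2 * (C * 2 ^ (-max k 0))) ^ 2
      ≤ (60 * C * 2 ^ (-(1 / 2 * |k|))) ^ 2 := by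
  have hsq : ∀ y : ℝ, ((2 : ℝ) ^ y) ^ 2 = 2 ^ (2 * y) := fun y => by
    rw [← Real.rpow_natCast, ← Real.rpow_mul zero_le_two]; congr 1; push_cast; ring
  have e0 : (60 * C * 2 ^ (-(1 / 2 * |k|))) ^ 2 = 3600 * C ^ 2 * 2 ^ (-|k|) := by
    rw [mul_pow, hsq, show 2 * -(1 / 2 * |k|) = -|k| by ring]; ring
  have e1 : (40 * C * 2 ^ (-|k|)) ^ 2 = 1600 * C ^ 2 * 2 ^ (2 * -|k|) := by
    rw [mul_pow, hsq]; ring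
  have e2 : (2 * (C * 2 ^ (-max k 0))) ^ 2 = 4 * C ^ 2 * 2 ^ (2 * -max k 0) := by
    rw [mul_pow, mul_pow, hsq]; ring
  have hmono : ∀ y : ℝ, y ≤ -|k| → (2 : ℝ) ^ y ≤ 2 ^ (-|k|) := fun y hy =>
    Real.rpow_le_rpow_of_exponent_le one_le_two hy
  have hk := neg_abs_le k
  have hk' := le_abs_self k
  have hk0 := abs_nonneg k
  have h1 := hmono (2 * -|k|) (by linarith)
  have h2 : (2 : ℝ) ^ k * 2 ^ (2 * -|k|) ≤ 2 ^ (-|k|) := by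
    rw [← Real.rpow_add two_pos]; exact hmono _ (by linarith)
  have h3 : (2 : ℝ) ^ k * 2 ^ (2 * -max k 0) ≤ 2 ^ (-|k|) := by
    rw [← Real.rpow_add two_pos]
    refine hmono _ ?_
    rcases le_total k 0 with h | h
    · rw [max_eq_right h, abs_of_nonpos h]; linarith
    · rw [max_eq_left h, abs_of_nonneg h]; linarith
  have hpos : (0 : ℝ) < 2 ^ (-|k|) := by positivity
  rw [e0, e1, e2]
  have hC2 := sq_nonneg C
  have g1 := mul_le_mul_of_nonneg_left h1 hC2
  have g2 := mul_le_mul_of_nonneg_left h2 hC2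
  have g3 := mul_le_mul_of_nonneg_left h3 hC2
  have g4 := mul_nonneg hC2 hpos.le
  linarith

theorem exists_sup_block_cutKer (hn : 3 ≤ n) (hε : ε = 1 ∨ ε = -1) (i₀ : Fin n) :
    ∃ c : ℝ≥0∞, c ≠ ∞ ∧ ∀ H : ℝ → ℂ, Integrable H → ∀ i j : ℤ,
      ∃ Y : ℝ → ℝ≥0∞, Measurable Y ∧
        (∀ t, ∀ R ∈ Set.Icc ((2 : ℝ) ^ (j : ℝ)) (2 * 2 ^ (j : ℝ)),
          ‖waveInt ε (block H i) (cutKer i₀ j) t R‖ₑ ≤ Y t) ∧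
        eLpNorm Y 2 volume ≤ c * 2 ^ (-(1 / 2 * |(i : ℝ) + j|)) * blockMass H i := by
  obtain ⟨C, hC, hb, hb', hl, hd, hd'⟩ := exists_sphKer_bound i₀
  have hn' : (3 : ℝ) ≤ n := by exact_mod_cast hn
  refine ⟨ENNReal.ofReal (60 * C), ofReal_ne_top, fun H hH i j => ?_⟩
  have h2j : (0 : ℝ) < 2 ^ (j : ℝ) := by positivity
  have hκ : ∀ ρ ∈ shell i, ∀ R ∈ Set.Icc ((2 : ℝ) ^ (j : ℝ)) (2 * 2 ^ (j : ℝ)),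
      |cutKer i₀ j ρ R| ≤ 40 * C * 2 ^ (-|(i : ℝ) + j|) := by
    intro ρ hρ R hR
    rcases le_total 0 ((i : ℝ) + j) with h | h
    · refine (abs_cutKer_le_of_nonneg i₀ hn hC hb hd h hρ hR.1).trans ?_
      rw [abs_of_nonneg h]
      have : (0 : ℝ) < 2 ^ (-((i : ℝ) + j)) := by positivity
      have := mul_nonneg hC this.le
      linarith
    · rw [abs_of_nonpos h, neg_neg]
      exact abs_cutKer_le_of_mem i₀ hC hb hl hρ hR
  have hκ' : ∀ ρ ∈ shell i, ∀ R ∈ Set.Icc ((2 : ℝ) ^ (j : ℝ)) (2 * 2 ^ (j : ℝ)),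
      |radKerDeriv i₀ ρ R| ≤ 2 ^ (i : ℝ) * (2 * (C * 2 ^ (-max ((i : ℝ) + j) 0))) := by
    intro ρ hρ R hR
    refine abs_radKerDeriv_le hρ ((abs_le_of_decay hC (by linarith) hb' hd' hρ hR.1).trans ?_)
    refine mul_le_mul_of_nonneg_left (Real.rpow_le_rpow_of_exponent_le one_le_two ?_) hC
    have : 0 ≤ max ((i : ℝ) + j) 0 := le_max_right _ _
    nlinarith
  obtain ⟨Y, hY, hs, -, h2⟩ := exists_sup_block (ε := ε) hε hH i (continuous_cutKer i₀ j)
    (continuous_radKerDeriv i₀) (hasDerivAt_cutKer i₀ j) (B := 2 * C + 2 ^ (i : ℝ) * (2 * C))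
    (a := 2 ^ (j : ℝ)) (b := 2 * 2 ^ (j : ℝ)) (κ := 40 * C * 2 ^ (-|(i : ℝ) + j|))
    (κ' := 2 * (C * 2 ^ (-max ((i : ℝ) + j) 0)))
    (L := 60 * C * 2 ^ (-(1 / 2 * |(i : ℝ) + j|)))
    (fun ρ _ R => (abs_cutKer_le i₀ hC hb j ρ R).trans (by simp; positivity))
    (fun ρ hρ R => (abs_radKerDeriv_le hρ (hb' _)).trans (by simpa using hC))
    (by linarith) hκ hκ' (by positivity) (by
      have e1 : (2 : ℝ) ^ (i : ℝ) * (2 * 2 ^ (j : ℝ) - 2 ^ (j : ℝ)) = 2 ^ ((i : ℝ) + j) := by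
        rw [Real.rpow_add two_pos]; ring
      rw [e1]
      exact cutKer_cost_le _)
  refine ⟨Y, hY, hs, ?_⟩
  rw [← ofReal_two_rpow, ← ENNReal.ofReal_mul (by positivity)]
  refine (ENNReal.pow_le_pow_left_iff two_ne_zero).1 (le_trans (le_of_eq ?_) h2)
  exact eLpNorm_two_sq _

theorem enorm_waveInt_radKer_le (hε : ε = 1 ∨ ε = -1) (i₀ : Fin n) {H : ℝ → ℂ}
    (hH : Integrable H) (hs : ∀ ρ, ρ ≤ 0 → H ρ = 0) (j : ℤ) (t R : ℝ) :
    ‖waveInt ε H (radKer i₀) t R‖ₑ ≤ ∑' i, ‖waveInt ε (block H i) (cutKer i₀ j) t R‖ₑ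
      + ‖sphKer i₀ 0‖ₑ * dyadicMax (fun s => ‖∫ ρ, phase ε s ρ * H ρ‖ₑ) t := by
  obtain ⟨C, hC, hb, -⟩ := exists_sphKer_bound i₀
  have hc : Continuous fun p : ℝ × ℝ => sinc (2 * π * 2 ^ (j : ℝ) * p.1) :=
    Real.continuous_sinc.comp (by fun_prop)
  have hi1 : Integrable fun ρ => phase ε t ρ * (H ρ * cutKer i₀ j ρ R) :=
    (hH.norm.const_mul (2 * C)).mono'
      (aestronglyMeasurable_waveInt_integrand hH (continuous_cutKer i₀ j) t R)
      (Filter.Eventually.of_forall fun ρ => norm_waveInt_integrand_le (S := {R})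
        (by rintro ρ _ rfl _; exact abs_cutKer_le i₀ hC hb j ρ _) t rfl ρ)
  have hi2 : Integrable fun ρ => phase ε t ρ * (H ρ * (sinc (2 * π * 2 ^ (j : ℝ) * ρ) : ℝ)) :=
    (hH.norm.const_mul 1).mono'
      (aestronglyMeasurable_waveInt_integrand
        (K := fun ρ _ => sinc (2 * π * 2 ^ (j : ℝ) * ρ)) hH hc t R)
      (Filter.Eventually.of_forall fun ρ => norm_waveInt_integrand_le (S := {R})
        (K := fun ρ _ => sinc (2 * π * 2 ^ (j : ℝ) * ρ))
        (by rintro ρ _ rfl _; exact Real.abs_sinc_le_one _) t rfl ρ)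
  have e : waveInt ε H (radKer i₀) t R = waveInt ε H (cutKer i₀ j) t R
      + (sphKer i₀ 0 : ℂ) * waveInt ε H (fun ρ _ => sinc (2 * π * 2 ^ (j : ℝ) * ρ)) t R := by
    rw [waveInt, waveInt, waveInt, ← integral_const_mul, ← integral_add hi1 (hi2.const_mul _)]
    refine integral_congr_ae (Filter.Eventually.of_forall fun ρ => ?_)
    simp only [cutKer]
    push_cast
    ring
  rw [e]
  refine (enorm_add_le _ _).trans (add_le_add
    (enorm_waveInt_le_tsum hH hs (continuous_cutKer i₀ j) t R
      fun ρ => abs_cutKer_le i₀ hC hb j ρ R) ?_)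
  rw [enorm_mul]
  have e2 : ‖(sphKer i₀ 0 : ℂ)‖ₑ = ‖sphKer i₀ 0‖ₑ := by
    rw [← ofReal_norm, ← ofReal_norm, Complex.norm_real]
  rw [e2]
  exact mul_le_mul_right ((enorm_waveInt_sinc_le hε hH j t R).trans
    (le_iSup (fun j => dyadicAvg (fun s => ‖∫ ρ, phase ε s ρ * H ρ‖ₑ) j t) j)) _

theorem continuous_integral_phase {H : ℝ → ℂ} (hH : Integrable H) :
    Continuous fun s => ∫ ρ, phase ε s ρ * H ρ := by
  have h := continuous_waveInt (ε := ε) (K := fun _ _ => 1) hH continuous_const (B := 1)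
    (by simp)
  simpa [waveInt, Function.comp_def] using h.comp (Continuous.prodMk_left (0 : ℝ))

/-- The endpoint `L²_t L^∞_x` bound in dimensions at least three. -/
theorem radialBound_top_of_eq_two (hn : 3 ≤ n) (hε : ε = 1 ∨ ε = -1) (i₀ : Fin n) :
    RadialBound i₀ ε 2 ∞ := by
  have hn0 : 0 < n := by omega
  obtain ⟨c, hc, hblock⟩ := exists_sup_block_cutKer (ε := ε) hn hε i₀
  obtain ⟨D, hD, hmax⟩ := exists_lintegral_dyadicMax_sq_le
  obtain ⟨c', hc', hmass⟩ := tsum_two_rpow_mul_mass_le hn0 0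
  refine radialBound_top_of_remainder hn0 i₀ le_rfl (d := 1 / 2) (by norm_num) hc
    (C := ‖sphKer i₀ 0‖ₑ * (D * c') ^ (1 / 2 : ℝ))
    (ENNReal.mul_ne_top enorm_ne_top (ENNReal.rpow_ne_top_of_nonneg (by norm_num)
      (ENNReal.mul_ne_top hD hc'))) fun G hG hGi => ?_
  have hHi : Integrable (radAmp n G) := integrable_radAmp hn0 hGi
  have hφ : Measurable fun s => ‖∫ ρ, phase ε s ρ * radAmp n G ρ‖ₑ :=
    (continuous_integral_phase hHi).enorm.measurable
  choose M hM hMs hMq using hblock (radAmp n G) hHi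
  refine ⟨M, fun t => ‖sphKer i₀ 0‖ₑ * dyadicMax (fun s => ‖∫ ρ, phase ε s ρ * radAmp n G ρ‖ₑ) t,
    hM, (measurable_dyadicMax hφ).const_mul _, fun t j => ?_, fun i j => ?_, ?_⟩
  · refine Filter.Eventually.of_forall fun x hx => ?_
    refine (enorm_waveInt_radKer_le hε i₀ hHi (radAmp_of_nonpos n G) j t _).trans ?_
    refine add_le_add_left (ENNReal.tsum_le_tsum fun i => hMs i j t _ ?_) _
    exact ⟨(mem_shell_iff.1 hx).1, (mem_shell_iff.1 hx).2.le⟩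
  · refine (hMq i j).trans_eq ?_
    simp
  · refine (eLpNorm_const_mul_le enorm_ne_top _).trans ?_
    rw [mul_assoc]
    refine mul_le_mul_right ?_ _
    rw [dataNorm, ← ENNReal.mul_rpow_of_nonneg _ _ (by norm_num),
      show (n : ℝ) / 2 - 1 / (2 : ℝ≥0∞).toReal = 0 + ((n : ℝ) - 1) / 2 by simp; ring,
      ← sq_rpow_half (eLpNorm _ 2 volume), eLpNorm_two_sq]
    refine ENNReal.rpow_le_rpow ?_ (by norm_num)
    rw [mul_assoc]
    refine (hmax _ hφ).trans (mul_le_mul_right ?_ _)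
    refine ((lintegral_phase_sq_le hε hHi).trans_eq
      (lintegral_sq_eq_tsum_blockMass (radAmp_of_nonpos n G))).trans (le_trans ?_ (hmass G hG))
    simp

end EndpointBound

section Assembly

variable {n : ℕ}

theorem toReal_admissible (hn : 2 ≤ n) {q r : ℝ≥0∞} (hq : 2 ≤ q) (hr : 2 ≤ r)
    (h : 1 / q + ((n : ℝ≥0∞) - 1) / r < ((n : ℝ≥0∞) - 1) / 2) :
    0 < ((n : ℝ) - 1) * (1 / 2 - 1 / r.toReal) - 1 / q.toReal := by
  have hq0 : q ≠ 0 := (two_pos.trans_le hq).ne'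
  have hr0 : r ≠ 0 := (two_pos.trans_le hr).ne'
  have e : (n : ℝ≥0∞) - 1 = ((n - 1 : ℕ) : ℝ≥0∞) := by push_cast; rfl
  have hfin : ((n - 1 : ℕ) : ℝ≥0∞) ≠ ∞ := ENNReal.natCast_ne_top _
  rw [e] at h
  have h1 : 1 / q ≠ ∞ := ENNReal.div_ne_top one_ne_top hq0
  have h2 : ((n - 1 : ℕ) : ℝ≥0∞) / r ≠ ∞ := ENNReal.div_ne_top hfin hr0
  have h3 := (ENNReal.toReal_lt_toReal (ENNReal.add_ne_top.2 ⟨h1, h2⟩)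
    (ENNReal.div_ne_top hfin two_ne_zero)).2 h
  rw [ENNReal.toReal_add h1 h2, ENNReal.toReal_div, ENNReal.toReal_div, ENNReal.toReal_div,
    ENNReal.toReal_natCast, ENNReal.toReal_one, ENNReal.toReal_ofNat,
    Nat.cast_sub (by omega), Nat.cast_one] at h3
  have e2 : ((n : ℝ) - 1) * (1 / 2 - 1 / r.toReal)
      = ((n : ℝ) - 1) / 2 - ((n : ℝ) - 1) / r.toReal := by ring
  rw [e2]
  linarith

/-- The radial estimate holds for every radially wave-admissible pair. -/
theorem radialBound_of_admissible (hn : 2 ≤ n) {ε : ℝ} (hε : ε = 1 ∨ ε = -1) (i₀ : Fin n)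
    {q r : ℝ≥0∞} (hadm : RadWaveAdmissible n q r) : RadialBound i₀ ε q r := by
  obtain ⟨hq, hr, ⟨hne, h⟩ | ⟨rfl, rfl⟩⟩ := hadm
  · have h' := toReal_admissible hn hq hr h
    by_cases hrt : r = ∞
    · have hqt : q ≠ ∞ := fun hqt => hne ⟨hqt, hrt⟩
      subst hrt
      simp only [toReal_top, _root_.div_zero, _root_.sub_zero] at h'
      rcases hq.eq_or_lt with rfl | hq2
      · refine radialBound_top_of_eq_two ?_ hε i₀
        rw [ENNReal.toReal_ofNat] at h'
        have : (2 : ℝ) < n := by linarith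
        exact_mod_cast this
      · exact radialBound_top_of_two_lt (by omega) hε i₀ hq2 hqt (by linarith)
    · exact radialBound_of_ne_top (by omega) hε i₀ hq hr hrt h'
  · exact radialBound_top_two i₀ ε

theorem fourier_eq_of_norm_eq {f : EuclideanSpace ℝ (Fin n) → ℂ}
    (hf : ∀ x y : EuclideanSpace ℝ (Fin n), ‖x‖ = ‖y‖ → f x = f y)
    {ξ η : EuclideanSpace ℝ (Fin n)} (h : ‖ξ‖ = ‖η‖) : 𝓕 f ξ = 𝓕 f η := by
  have h1 := Real.fourier_comp_linearIsometry (Submodule.reflection (ℝ ∙ (ξ - η))ᗮ) f ξ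
  rw [Submodule.reflection_sub h] at h1
  have h2 : f ∘ ⇑(Submodule.reflection (ℝ ∙ (ξ - η))ᗮ) = f := funext fun x => hf _ _ (by simp)
  rwa [h2] at h1

theorem timeNorm_le_eLpNorm {q : ℝ≥0∞} (hq : q ≠ 0) (F : ℝ → ℝ≥0∞) :
    timeNorm q F ≤ eLpNorm F q volume := by
  refine le_trans (le_of_eq ?_) (eLpNorm_restrict_le F q volume (Set.Ioi (0 : ℝ)))
  rw [timeNorm]
  split_ifs with h
  · rw [h, eLpNorm_exponent_top]
    rfl
  · rw [eLpNorm_ennreal_eq hq h]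

/-- The frequency profile of `|D|^σ f` along the ray spanned by a unit vector. -/
noncomputable def freqProfile (i₀ : Fin n) (σ : ℝ)
    (f : SchwartzMap (EuclideanSpace ℝ (Fin n)) ℂ) (ρ : ℝ) : ℂ :=
  ((ρ ^ σ : ℝ) : ℂ) * 𝓕 ⇑f (ρ • EuclideanSpace.single i₀ (1 : ℝ))

theorem continuous_fourier (f : SchwartzMap (EuclideanSpace ℝ (Fin n)) ℂ) :
    Continuous (𝓕 ⇑f) := by
  rw [← SchwartzMap.fourier_coe]
  exact (𝓕 f).continuous

theorem measurable_freqProfile (i₀ : Fin n) (σ : ℝ)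
    (f : SchwartzMap (EuclideanSpace ℝ (Fin n)) ℂ) : Measurable (freqProfile i₀ σ f) := by
  have h1 : Measurable fun ρ : ℝ => ((ρ ^ σ : ℝ) : ℂ) :=
    Complex.measurable_ofReal.comp (measurable_id.pow_const σ)
  refine h1.mul (Continuous.measurable ?_)
  exact (continuous_fourier f).comp (continuous_id.smul continuous_const)

theorem freqProfile_norm (i₀ : Fin n) (σ : ℝ) {f : SchwartzMap (EuclideanSpace ℝ (Fin n)) ℂ}
    (hf : ∀ x y : EuclideanSpace ℝ (Fin n), ‖x‖ = ‖y‖ → f x = f y)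
    (ξ : EuclideanSpace ℝ (Fin n)) :
    freqProfile i₀ σ f ‖ξ‖ = ((‖ξ‖ ^ σ : ℝ) : ℂ) * 𝓕 ⇑f ξ := by
  rw [freqProfile, fourier_eq_of_norm_eq hf (η := ξ)]
  simp [norm_smul]

theorem dataNorm_freqProfile (i₀ : Fin n) (α σ : ℝ)
    {f : SchwartzMap (EuclideanSpace ℝ (Fin n)) ℂ}
    (hf : ∀ x y : EuclideanSpace ℝ (Fin n), ‖x‖ = ‖y‖ → f x = f y) :
    dataNorm n α (freqProfile i₀ σ f) =
      eLpNorm (fun ξ : EuclideanSpace ℝ (Fin n) => (‖ξ‖ ^ (α + σ) : ℝ) • 𝓕 ⇑f ξ) 2 volume := by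
  have : Nonempty (Fin n) := ⟨i₀⟩
  rw [← sq_rpow_half (eLpNorm _ 2 volume), ← lintegral_enorm_sq_eq, dataNorm]
  congr 1
  refine lintegral_congr_ae ?_
  have h0 : ∀ᵐ ξ : EuclideanSpace ℝ (Fin n), ξ ≠ 0 := Measure.ae_ne volume 0
  filter_upwards [h0] with ξ hξ
  have hξ' : 0 < ‖ξ‖ := norm_pos_iff.2 hξ
  rw [freqProfile_norm i₀ σ hf, Real.rpow_add hξ', enorm_mul, enorm_smul, ← mul_assoc]
  congr 2
  rw [← ofReal_norm, ← ofReal_norm, Complex.norm_real, Real.norm_of_nonneg (by positivity),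
    Real.norm_of_nonneg (by positivity), ENNReal.ofReal_mul (by positivity)]

end Assembly

end RadialStrichartz

/-- **Homogeneous radial Strichartz estimate for the half-wave propagators.**
For `n ≥ 2`, `σ ∈ ℝ`, spherically symmetric Schwartz `f` on `ℝⁿ`, a radially wave-admissible
pair `(q, r)`, `s = n/2 - n/r - 1/q + σ`, and either sign `ε = ±1`, the half wave
`v_±(t) = |D|^σ e^{± i t |D|} f` satisfies
`‖v_±‖_{L^q_t((0,∞)) L^r_x} ≲ ‖f‖_{Ḣ^s}`, provided the right-hand side is finite and the
defining frequency integral converges absolutely. -/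
theorem stmt_7 (n : ℕ) (hn : 2 ≤ n) (σ : ℝ) (q r : ℝ≥0∞) (s : ℝ) (ε : ℝ)
    (hε : ε = 1 ∨ ε = -1)
    (hadm : RadWaveAdmissible n q r)
    (hscal : s = (n : ℝ) / 2 - (n : ℝ) / r.toReal - 1 / q.toReal + σ) :
    ∃ C : ℝ, 0 ≤ C ∧
      ∀ f : SchwartzMap (EuclideanSpace ℝ (Fin n)) ℂ,
        (∀ x y : EuclideanSpace ℝ (Fin n), ‖x‖ = ‖y‖ → f x = f y) →
        eLpNorm (fun ξ : EuclideanSpace ℝ (Fin n) => (‖ξ‖ ^ s : ℝ) • 𝓕 ⇑f ξ) 2 volume < ⊤ →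
        Integrable (fun ξ : EuclideanSpace ℝ (Fin n) => ‖ξ‖ ^ σ * ‖𝓕 ⇑f ξ‖) volume →
        timeNorm q (fun t =>
            eLpNorm (fun x : EuclideanSpace ℝ (Fin n) =>
              ∫ ξ : EuclideanSpace ℝ (Fin n),
                Complex.exp (2 * Real.pi * ⟪x, ξ⟫ * Complex.I) *
                  ((‖ξ‖ ^ σ : ℝ) : ℂ) *
                    Complex.exp (ε * (2 * Real.pi * t * ‖ξ‖) * Complex.I) *
                      𝓕 ⇑f ξ) r volume)
          ≤ ENNReal.ofReal C *
            eLpNorm (fun ξ : EuclideanSpace ℝ (Fin n) => (‖ξ‖ ^ s : ℝ) • 𝓕 ⇑f ξ) 2 volume := by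
  have hn0 : 0 < n := by omega
  obtain ⟨C, hC, hbound⟩ := RadialStrichartz.radialBound_of_admissible hn hε ⟨0, hn0⟩ hadm
  refine ⟨C.toReal, ENNReal.toReal_nonneg, fun f hf _ hint => ?_⟩
  have hG := RadialStrichartz.measurable_freqProfile (⟨0, hn0⟩ : Fin n) σ f
  have hGn := RadialStrichartz.freqProfile_norm (⟨0, hn0⟩ : Fin n) σ hf
  have hGi : Integrable fun ξ : EuclideanSpace ℝ (Fin n) =>
      RadialStrichartz.freqProfile (⟨0, hn0⟩ : Fin n) σ f ‖ξ‖ := by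
    refine hint.mono (hG.comp measurable_norm).aestronglyMeasurable
      (Filter.Eventually.of_forall fun ξ => ?_)
    rw [hGn, norm_mul, Complex.norm_real, norm_mul, norm_norm]
  have hq0 : q ≠ 0 := (two_pos.trans_le hadm.1).ne'
  rw [ENNReal.ofReal_toReal hC, hscal,
    ← RadialStrichartz.dataNorm_freqProfile (⟨0, hn0⟩ : Fin n) _ σ hf]
  refine (RadialStrichartz.timeNorm_le_eLpNorm hq0 _).trans
    (le_trans (le_of_eq ?_) (hbound _ hG hGi))
  congr 1
  funext t
  congr 1
  funext x
  refine Eq.trans ?_ (RadialStrichartz.integral_radial_wave (⟨0, hn0⟩ : Fin n) hG hGi ε t x)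
  refine integral_congr_ae (Filter.Eventually.of_forall fun ξ => ?_)
  beta_reduce
  rw [hGn, RadialStrichartz.phase]
  ring
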